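/- arXiv:2510.19727 — 3 statements merged into one kernel-verified Lean document; each statement's English description precedes it below -/
import Mathlib

section
/- If k > 1 is an odd positive integer, then there is no interlocking pair (m, n) of positive integers with m·n = P_k, where P_k denotes the product of the first k primes. -/
/-!
Between consecutive elements of the set of divisors `> 1` of `n` lies a divisor `> 1` of `m`, so
the first set has at most one element more than the second, and conversely. Hence the numbers of
divisors of `m` and `n` differ by at most `1`. As `primesProd k` is squarefree, `m` and `n` are
coprime, and `τ(m) τ(n) = τ(primesProd k) = 2 ^ k`; so `τ(m) = 2 ^ a`, `τ(n) = 2 ^ b` with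
`a + b = k`. Two powers of `2` at distance at most `1` are equal or are `{1, 2}`, so `k = 2 a` is
even or `k = 1`.
-/

/-- `(m, n)` is an interlocking pair: both are positive, and between any two
consecutive divisors (the smaller one exceeding 1) of either number there is a
divisor of the other. -/
def Interlocking (m n : ℕ) : Prop :=
  0 < m ∧ 0 < n ∧
  (∀ d d' : ℕ, d ∣ n → d' ∣ n → 1 < d → d < d' →
    (∀ e : ℕ, e ∣ n → ¬(d < e ∧ e < d')) →
    ∃ e : ℕ, e ∣ m ∧ d < e ∧ e < d') ∧
  (∀ d d' : ℕ, d ∣ m → d' ∣ m → 1 < d → d < d' →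
    (∀ e : ℕ, e ∣ m → ¬(d < e ∧ e < d')) →
    ∃ e : ℕ, e ∣ n ∧ d < e ∧ e < d')

/-- A positive integer `n` is separable if some `m` interlocks with it. -/
def Separable (n : ℕ) : Prop := ∃ m : ℕ, Interlocking m n

/-- `primesProd k` is the product of the first `k` primes. -/
noncomputable def primesProd (k : ℕ) : ℕ := ∏ i ∈ Finset.range k, Nat.nth Nat.Prime i

lemma coprime_primesProd_nth_prime (k : ℕ) :
    Nat.Coprime (primesProd k) (Nat.nth Nat.Prime k) := by
  refine Nat.Coprime.prod_left fun i hi => ?_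
  refine (Nat.coprime_primes (Nat.prime_nth_prime i) (Nat.prime_nth_prime k)).2 fun h => ?_
  have h' := Nat.nth_injective Nat.infinite_setOfPred_prime h
  exact (Finset.mem_range.1 hi).ne h'

lemma primesProd_succ (k : ℕ) : primesProd (k + 1) = primesProd k * Nat.nth Nat.Prime k :=
  Finset.prod_range_succ _ _

lemma squarefree_primesProd (k : ℕ) : Squarefree (primesProd k) := by
  induction k with
  | zero => simp [primesProd]
  | succ k ih =>
    rw [primesProd_succ, Nat.squarefree_mul (coprime_primesProd_nth_prime k)]
    exact ⟨ih, (Nat.prime_nth_prime k).prime.squarefree⟩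

lemma card_divisors_primesProd (k : ℕ) : (primesProd k).divisors.card = 2 ^ k := by
  induction k with
  | zero => simp [primesProd]
  | succ k ih =>
    have hp := Nat.prime_nth_prime k
    rw [primesProd_succ, (coprime_primesProd_nth_prime k).card_divisors_mul, ih, hp.divisors,
      Finset.card_pair hp.one_lt.ne, pow_succ]

/-- One half of the interlocking condition already bounds the number of divisors of `n`. -/
lemma card_divisors_le_of_separated {m n : ℕ} (hm : 0 < m) (hn : 0 < n)
    (h : ∀ d d' : ℕ, d ∣ n → d' ∣ n → 1 < d → d < d' →
      (∀ e : ℕ, e ∣ n → ¬(d < e ∧ e < d')) → ∃ e : ℕ, e ∣ m ∧ d < e ∧ e < d') :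
    n.divisors.card ≤ m.divisors.card + 1 := by
  have key : (n.divisors.erase 1).card ≤ (m.divisors.erase 1).card + 1 := by
    refine Finset.card_le_of_interleaved fun x hx y hy hxy hcons => ?_
    simp only [Finset.mem_erase, Nat.mem_divisors] at hx hy hcons ⊢
    have hx1 : 1 < x := by
      have := Nat.pos_of_dvd_of_pos hx.2.1 hn
      omega
    obtain ⟨e, he, hxe, hey⟩ := h x y hx.2.1 hy.2.1 hx1 hxy
      fun e he hb => hcons e ⟨by omega, he, hn.ne'⟩ hb
    exact ⟨e, ⟨by omega, he, hm.ne'⟩, hxe, hey⟩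
  rw [Finset.card_erase_of_mem (by simp [hn.ne']), Finset.card_erase_of_mem (by simp [hm.ne'])]
    at key
  have := Finset.card_pos.2 ⟨1, Nat.one_mem_divisors.2 hm.ne'⟩
  omega

/-- For `a < b` the gap `2 ^ b - 2 ^ a` is at least `2 ^ (b - 1)`, which exceeds `1` for
`b ≥ 2`. -/
lemma two_pow_add_one_lt {a b : ℕ} (hab : a < b) (hb : 2 ≤ b) : 2 ^ a + 1 < 2 ^ b := by
  obtain ⟨c, rfl⟩ : ∃ c, b = c + 2 := ⟨b - 2, by omega⟩
  have h1 : 2 ^ a ≤ 2 ^ (c + 1) := Nat.pow_le_pow_right (by norm_num) (by omega)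
  have h2 : 0 < 2 ^ c := by positivity
  rw [pow_succ] at h1 ⊢
  rw [pow_succ]
  omega

/-- If `k > 1` is odd, then no interlocking pair has product equal to the
product of the first `k` primes. -/
theorem no_interlocking_primesProd_odd (k : ℕ) (hk : 1 < k) (hodd : Odd k) :
    ¬ ∃ m n : ℕ, Interlocking m n ∧ m * n = primesProd k := by
  rintro ⟨m, n, ⟨hm, hn, h1, h2⟩, hmn⟩
  have hco : Nat.Coprime m n :=
    Nat.coprime_of_squarefree_mul (hmn ▸ squarefree_primesProd k)
  have hcard : m.divisors.card * n.divisors.card = 2 ^ k := by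
    rw [← hco.card_divisors_mul, hmn, card_divisors_primesProd]
  obtain ⟨a, -, ha⟩ := (Nat.dvd_prime_pow Nat.prime_two).1 (Dvd.intro _ hcard)
  obtain ⟨b, -, hb⟩ := (Nat.dvd_prime_pow Nat.prime_two).1 (Dvd.intro_left _ hcard)
  have hnm := card_divisors_le_of_separated hm hn h1
  have hmn' := card_divisors_le_of_separated hn hm h2
  rw [ha, hb] at hcard hnm hmn'
  have hab : a + b = k := by
    rw [← pow_add] at hcard
    exact Nat.pow_right_injective le_rfl hcard
  obtain ⟨r, hr⟩ := hodd
  rcases lt_trichotomy a b with h | h | h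
  · have := two_pow_add_one_lt h (by omega)
    omega
  · omega
  · have := two_pow_add_one_lt h (by omega)
    omega
end

section
/- For every integer k ≥ 6, there is no perfect square m such that (m, 2^k) is an interlocking pair. Equivalently, if (m, 2^k) is an interlocking pair with k ≥ 6, then τ(m) is even. -/
/-- Interlocking only speaks of consecutive divisors; passing to the successor of `d` among the
divisors of `m` extends it to arbitrary pairs. -/
lemma exists_two_pow_between {m k d d' : ℕ} (h : Interlocking m (2 ^ k)) (hd : d ∣ m)
    (hd' : d' ∣ m) (h1 : 1 < d) (hlt : d < d') : ∃ j, d < 2 ^ j ∧ 2 ^ j < d' := by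
  classical
  have hex : ∃ e, e ∣ m ∧ d < e := ⟨d', hd', hlt⟩
  obtain ⟨hm, hgt⟩ := Nat.find_spec hex
  obtain ⟨e, he, hde, hed⟩ := h.2.2.2 d (Nat.find hex) hd hm h1 hgt
    fun e he hh => Nat.find_min hex hh.2 ⟨he, hh.1⟩
  obtain ⟨j, -, rfl⟩ := (Nat.dvd_prime_pow Nat.prime_two).1 he
  exact ⟨j, hde, hed.trans_le (Nat.find_min' hex ⟨hd', hlt⟩)⟩

/-- A dyadic interval contains at most one divisor of `m`. -/
lemma not_two_in_dyadic {m k d d' : ℕ} (i : ℕ) (h : Interlocking m (2 ^ k)) (hd : d ∣ m)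
    (hd' : d' ∣ m) (h1 : 1 < d) (hlt : d < d') (hi : 2 ^ i ≤ d) (hi' : d' ≤ 2 ^ (i + 1)) :
    False := by
  obtain ⟨j, hj, hj'⟩ := exists_two_pow_between h hd hd' h1 hlt
  have a : i < j := (Nat.pow_lt_pow_iff_right (by norm_num)).1 (hi.trans_lt hj)
  have b : j < i + 1 := (Nat.pow_lt_pow_iff_right (by norm_num)).1 (hj'.trans_le hi')
  omega

lemma exists_dvd_in_dyadic {m k i : ℕ} (h : Interlocking m (2 ^ k)) (hi : 0 < i) (hik : i < k) :
    ∃ e, e ∣ m ∧ 2 ^ i < e ∧ e < 2 ^ (i + 1) := by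
  refine h.2.2.1 _ _ (pow_dvd_pow 2 hik.le) (pow_dvd_pow 2 hik)
    (Nat.one_lt_two_pow hi.ne') (Nat.pow_lt_pow_right (by norm_num) (Nat.lt_succ_self i)) ?_
  rintro e he ⟨h1, h2⟩
  obtain ⟨j, -, rfl⟩ := (Nat.dvd_prime_pow Nat.prime_two).1 he
  have a : i < j := (Nat.pow_lt_pow_iff_right (by norm_num)).1 h1
  have b : j < i + 1 := (Nat.pow_lt_pow_iff_right (by norm_num)).1 h2
  omega

lemma even_card_divisors_of_not_isSquare {m : ℕ} (hm : 0 < m) (hs : ¬ IsSquare m) :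
    Even m.divisors.card := by
  -- Summing `1 : ZMod 2` over the divisors turns parity into a sum cancelled by the involution.
  have key : ∑ _d ∈ m.divisors, (1 : ZMod 2) = 0 := by
    refine Finset.sum_involution (fun d _ => m / d) (fun _ _ => by decide) ?_ ?_ ?_
    · intro d hd _ heq
      have hdm := Nat.dvd_of_mem_divisors hd
      exact hs ⟨d, by conv_lhs => rw [← Nat.div_mul_cancel hdm, heq]⟩
    · intro d hd
      exact Nat.mem_divisors.2 ⟨Nat.div_dvd_of_dvd (Nat.dvd_of_mem_divisors hd), hm.ne'⟩
    · intro d hd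
      exact Nat.div_div_self (Nat.dvd_of_mem_divisors hd) hm.ne'
  rw [Finset.sum_const, nsmul_eq_mul, mul_one] at key
  exact (ZMod.natCast_eq_zero_iff_even).1 key

/-- For `k ≥ 6`, no perfect square `m` interlocks with `2^k`; equivalently, if
`(m, 2^k)` is an interlocking pair then `τ(m)` is even. -/
theorem interlocking_two_pow_not_square (k : ℕ) (hk : 6 ≤ k) (m : ℕ)
    (h : Interlocking m (2 ^ k)) :
    ¬ IsSquare m ∧ Even m.divisors.card := by
  have hs : ¬ IsSquare m := by
    rintro ⟨s, hms⟩
    have sq_dvd : ∀ p : ℕ, p.Prime → p ∣ m → p * p ∣ m := by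
      intro p hp hpm
      have : p ∣ s := by
        rw [hms] at hpm
        exact (hp.dvd_mul.1 hpm).elim id id
      rw [hms]
      exact mul_dvd_mul this this
    have h3 : 3 ∣ m := by
      obtain ⟨e, he, h1, h2⟩ := exists_dvd_in_dyadic (i := 1) h (by norm_num) (by omega)
      obtain rfl : e = 3 := by norm_num at h1 h2; omega
      exact he
    have h9 : 9 ∣ m := sq_dvd 3 Nat.prime_three h3
    have h2 : ¬ 2 ∣ m := fun h2 =>
      not_two_in_dyadic 1 h h2 h3 (by norm_num) (by norm_num) (by norm_num) (by norm_num)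
    obtain ⟨e, he, hl, hu⟩ := exists_dvd_in_dyadic (i := 2) h (by norm_num) (by omega)
    norm_num at hl hu
    interval_cases e
    · have h15 : 15 ∣ m := Nat.Coprime.mul_dvd_of_dvd_of_dvd (m := 3) (n := 5) (by norm_num) h3 he
      exact not_two_in_dyadic 3 h h9 h15 (by norm_num) (by norm_num) (by norm_num) (by norm_num)
    · exact h2 (dvd_trans (by norm_num) he)
    · have h49 : 49 ∣ m := sq_dvd 7 (by norm_num) he
      have h63 : 63 ∣ m := Nat.Coprime.mul_dvd_of_dvd_of_dvd (m := 7) (n := 9) (by norm_num) he h9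
      exact not_two_in_dyadic 5 h h49 h63 (by norm_num) (by norm_num) (by norm_num) (by norm_num)
  exact ⟨hs, even_card_divisors_of_not_isSquare h.1 hs⟩
end

section
/- For every integer i ≥ 4, there exists a prime number p with 2^(2^(i-1)) < p < 2^(2^(i-1)) · e^(1/4^i). -/
/-!
Put `N = 2 ^ (i - 1)` and `x = 2 ^ N`; a prime is needed in `(x, x e ^ δ)` with `δ = 1 / (4 N ^ 2)`.

For `i ≤ 16` explicit primes are given. Apart from `524291 * 2 ^ 13 + 1`, used for `N = 32`, they have the shape
`2 ^ N + j * 2 ^ (N / 2 + 1) + 1` and are certified by Proth's criterion (`prime_of_proth`), that is by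
the single congruence `a ^ ((p - 1) / 2) = -1` modulo `p`, which the kernel evaluates by repeated
squaring (`prothTest`).

For `i ≥ 17` the prime number theorem with an explicit classical error term is strong enough, because
`log x` is exponentially large compared with `log N`.

* Euler-Maclaurin summation gives upper bounds for `ζ` in the critical strip (`norm_zeta_le_left`), and
  comparison with `1 / ζ` gives lower bounds to the right of `1` (`le_norm_zeta`).
* For a function on a disc whose zeros lie in the left half, the first cosine coefficient of `log |f|`
  on the boundary bounds `Re f'/f` at the centre from below, and a zero on the negative real axis
  improves the bound (`logCos_le`, `logCos_add_le`). Together with the inequality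
  `5 + 8 cos θ + 4 cos 2θ + cos 3θ ≥ 0` this yields a zero-free region
  `Re s ≥ 1 - 1 / (23 log Y)` for `3 |Im s| + 2 ≤ Y` (`riemannZeta_ne_zero_region`), and then
  Borel-Carathéodory bounds the logarithmic derivative of `(s - 1) ζ(s)` in a smaller region
  (`norm_logDeriv_zeta1_le`).
* Integrating `-ζ'/ζ` against a Gaussian kernel, and moving the low part of the line of integration
  into the zero-free region, bounds from below the sum of `Λ(n) / n` weighted by a Gaussian in `log n`
  of width `τ` much smaller than `δ`, centred at `log x + δ / 2` (`vonMangoldt_gauss_sum_ge`).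
* If the interval contained no prime, that sum would only consist of the tails of the Gaussian and of
  proper prime powers (`vonMangoldt_gauss_sum_le`), which is too small
  (`exists_prime_of_sixteen_le`).
-/

/-! ### Bounds for the zeta function -/

section

open Complex

/-- The Euler-Maclaurin error on `[n, n + 1]`. With `f u = u ^ (1 - s) / (1 - s) - (u - n) u ^ (-s)`
the left side is `‖f (n + 1) - f n‖`, and `f' u = s (u - n) u ^ (-s - 1)`. -/
lemma em_term_norm_le {n : ℕ} (hn : 1 ≤ n) {s : ℂ} (hs : 0 < s.re) (hs1 : s ≠ 1) :
    ‖((n + 1 : ℂ) ^ (1 - s) - (n : ℂ) ^ (1 - s)) / (1 - s) - (n + 1 : ℂ) ^ (-s)‖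
      ≤ ‖s‖ / s.re * ((n : ℝ) ^ (-s.re) - (n + 1 : ℝ) ^ (-s.re)) := by
  have hn0 : (0 : ℝ) < n := by exact_mod_cast hn
  have h1s : (1 - s) ≠ 0 := sub_ne_zero.mpr hs1.symm
  set f : ℝ → ℂ := fun u => (u : ℂ) ^ (1 - s) / (1 - s) - (u - n) * (u : ℂ) ^ (-s) with hf
  have hpos : ∀ u ∈ Set.uIcc (n : ℝ) (n + 1), 0 < u := by
    intro u hu
    rw [Set.uIcc_of_le (by linarith)] at hu
    linarith [hu.1]
  have hs0 : s ≠ 0 := by rintro rfl; simp at hs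
  have hder : ∀ u ∈ Set.uIcc (n : ℝ) (n + 1),
      HasDerivAt f (s * (u - n) * (u : ℂ) ^ (-s - 1)) u := by
    intro u hu
    have hu0 := hpos u hu
    have hsl : (u : ℂ) ∈ Complex.slitPlane := by simp [hu0]
    have hc : HasDerivAt (fun z : ℂ => z ^ (1 - s) / (1 - s) - (z - n) * z ^ (-s))
        (s * (u - n) * (u : ℂ) ^ (-s - 1)) u := by
      have h1 := ((hasDerivAt_id (u : ℂ)).cpow_const (c := 1 - s) hsl).div_const (1 - s)
      have h2 := ((hasDerivAt_id (u : ℂ)).sub_const (n : ℂ)).mul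
        ((hasDerivAt_id (u : ℂ)).cpow_const (c := -s) hsl)
      refine (h1.sub h2).congr_deriv ?_
      have : (1 - s - 1) = -s := by ring
      simp only [id, this]
      field_simp
      ring
    exact hc.comp_ofReal
  have hcont : ContinuousOn (fun u : ℝ => s * (u - n) * (u : ℂ) ^ (-s - 1))
      (Set.uIcc (n : ℝ) (n + 1)) := by
    intro u hu
    have hsl : (u : ℂ) ∈ Complex.slitPlane := by simp [hpos u hu]
    refine ContinuousAt.continuousWithinAt ?_
    refine ContinuousAt.mul (by fun_prop) ?_
    exact (continuousAt_cpow_const hsl).comp (by fun_prop)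
  have hint := intervalIntegral.integral_eq_sub_of_hasDerivAt hder hcont.intervalIntegrable
  have heq : ((n + 1 : ℂ) ^ (1 - s) - (n : ℂ) ^ (1 - s)) / (1 - s) - (n + 1 : ℂ) ^ (-s)
      = ∫ u in (n : ℝ)..(n + 1), s * (u - n) * (u : ℂ) ^ (-s - 1) := by
    rw [hint, hf]
    push_cast
    simp
    ring
  rw [heq]
  have hbound : ∀ u ∈ Set.Ioc (n : ℝ) (n + 1),
      ‖s * (u - n) * (u : ℂ) ^ (-s - 1)‖ ≤ ‖s‖ * u ^ (-s.re - 1) := by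
    intro u hu
    have hu0 : 0 < u := by linarith [hu.1]
    rw [norm_mul, norm_mul, Complex.norm_cpow_eq_rpow_re_of_pos hu0]
    have : ‖(u : ℂ) - n‖ ≤ 1 := by
      rw [show (u : ℂ) - n = ((u - n : ℝ) : ℂ) by push_cast; ring, Complex.norm_real,
        Real.norm_eq_abs, abs_le]
      constructor <;> linarith [hu.1, hu.2]
    have h3 : (-s - 1).re = -s.re - 1 := by simp
    rw [h3]
    have : ‖s‖ * ‖(u : ℂ) - n‖ ≤ ‖s‖ * 1 := by gcongr
    have h4 : 0 ≤ u ^ (-s.re - 1) := by positivity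
    nlinarith
  have hintr : IntervalIntegrable (fun u : ℝ => ‖s‖ * u ^ (-s.re - 1)) MeasureTheory.volume n (n + 1) := by
    apply ContinuousOn.intervalIntegrable
    intro u hu
    refine ContinuousAt.continuousWithinAt ?_
    exact continuousAt_const.mul (Real.continuousAt_rpow_const _ _ (Or.inl (hpos u hu).ne'))
  refine (intervalIntegral.norm_integral_le_of_norm_le (by linarith)
    (Filter.Eventually.of_forall hbound) hintr).trans ?_
  rw [intervalIntegral.integral_const_mul, integral_rpow]
  · rw [show -s.re - 1 + 1 = -s.re by ring]
    apply le_of_eq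
    field_simp
    ring
  · right
    refine ⟨by linarith, fun h => ?_⟩
    exact lt_irrefl _ (hpos 0 h)

/-- `(s - 1)` times the Euler-Maclaurin error on `[n, n + 1]`; an entire function of `s`
for `1 ≤ n`. -/
noncomputable def emT (n : ℕ) (s : ℂ) : ℂ :=
  (n : ℂ) ^ (1 - s) - (n + 1 : ℂ) ^ (1 - s) - (s - 1) * (n + 1 : ℂ) ^ (-s)

lemma emT_norm_le {n : ℕ} (hn : 1 ≤ n) {s : ℂ} (hs : 0 < s.re) :
    ‖emT n s‖ ≤ ‖s - 1‖ * (‖s‖ / s.re * ((n : ℝ) ^ (-s.re) - (n + 1 : ℝ) ^ (-s.re))) := by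
  by_cases hs1 : s = 1
  · subst hs1; simp [emT]
  · have h1s : (1 - s) ≠ 0 := sub_ne_zero.mpr (Ne.symm hs1)
    have : emT n s = (s - 1) * (((n + 1 : ℂ) ^ (1 - s) - (n : ℂ) ^ (1 - s)) / (1 - s)
        - (n + 1 : ℂ) ^ (-s)) := by
      unfold emT; field_simp; ring
    rw [this, norm_mul]
    gcongr
    exact em_term_norm_le hn hs hs1

lemma rpow_sub_le {n : ℕ} (hn : 1 ≤ n) {a σ : ℝ} (ha : 0 < a) (haσ : a ≤ σ) :
    (1 / σ) * ((n : ℝ) ^ (-σ) - (n + 1 : ℝ) ^ (-σ)) ≤ (n : ℝ) ^ (-a - 1) := by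
  have hn0 : (0 : ℝ) < n := by exact_mod_cast hn
  have hσ : 0 < σ := by linarith
  have h1 : (n + 1 : ℝ) ^ (-σ) = (n : ℝ) ^ (-σ) * (1 + 1 / n) ^ (-σ) := by
    rw [← Real.mul_rpow (by positivity) (by positivity)]
    congr 1
    field_simp
  have h2 : 1 - σ * (1 / n) ≤ (1 + 1 / n : ℝ) ^ (-σ) := by
    rw [Real.rpow_def_of_pos (by positivity)]
    have h3 := Real.add_one_le_exp (Real.log (1 + 1 / (n : ℝ)) * -σ)
    have h4 := Real.log_le_sub_one_of_pos (show (0 : ℝ) < 1 + 1 / n by positivity)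
    nlinarith
  have h5 : (0 : ℝ) < (n : ℝ) ^ (-σ) := by positivity
  calc (1 / σ) * ((n : ℝ) ^ (-σ) - (n + 1 : ℝ) ^ (-σ))
      ≤ (1 / σ) * ((n : ℝ) ^ (-σ) * (σ * (1 / n))) := by
        gcongr
        rw [h1]
        nlinarith
    _ = (n : ℝ) ^ (-σ) * (n : ℝ) ^ (-1 : ℝ) := by
        rw [Real.rpow_neg_one]; field_simp
    _ = (n : ℝ) ^ (-σ - 1) := by rw [← Real.rpow_add hn0]; ring_nf
    _ ≤ (n : ℝ) ^ (-a - 1) := by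
        apply Real.rpow_le_rpow_of_exponent_le (by exact_mod_cast hn)
        linarith

lemma emT_norm_le' {n : ℕ} (hn : 1 ≤ n) {a : ℝ} {s : ℂ} (ha : 0 < a) (hs : a ≤ s.re) :
    ‖emT n s‖ ≤ ‖s - 1‖ * (‖s‖ * (n : ℝ) ^ (-a - 1)) := by
  refine (emT_norm_le hn (ha.trans_le hs)).trans ?_
  refine mul_le_mul_of_nonneg_left ?_ (norm_nonneg _)
  rw [div_eq_mul_one_div, mul_assoc]
  exact mul_le_mul_of_nonneg_left (rpow_sub_le hn ha hs) (norm_nonneg _)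

lemma summable_emT {Y : ℕ} (hY : 1 ≤ Y) {s : ℂ} (hs : 0 < s.re) :
    Summable (fun n => emT (Y + n) s) := by
  have hsum : Summable (fun n : ℕ => ‖s - 1‖ * (‖s‖ * ((Y + n : ℕ) : ℝ) ^ (-s.re - 1))) := by
    refine Summable.mul_left _ (Summable.mul_left _ ?_)
    have := (Real.summable_nat_rpow (p := -s.re - 1)).mpr (by linarith)
    simpa [add_comm] using (summable_nat_add_iff Y).mpr this
  exact Summable.of_norm_bounded hsum fun n => emT_norm_le' (by omega) hs le_rfl

lemma tendsto_rpow_neg_nat {Y : ℕ} {σ : ℝ} (hσ : 0 < σ) :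
    Filter.Tendsto (fun n : ℕ => ((Y + n : ℕ) : ℝ) ^ (-σ)) Filter.atTop (nhds 0) := by
  refine (tendsto_rpow_neg_atTop hσ).comp ?_
  refine tendsto_natCast_atTop_atTop.comp ?_
  exact Filter.tendsto_atTop_mono (fun n => Nat.le_add_left n Y) Filter.tendsto_id

lemma norm_tsum_emT_le {Y : ℕ} (hY : 1 ≤ Y) {s : ℂ} (hs : 0 < s.re) :
    ‖∑' n, emT (Y + n) s‖ ≤ ‖s - 1‖ * (‖s‖ / s.re * (Y : ℝ) ^ (-s.re)) := by
  have ht := (summable_emT hY hs).hasSum.tendsto_sum_nat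
  refine le_of_tendsto ht.norm (Filter.Eventually.of_forall fun N => ?_)
  refine (norm_sum_le _ _).trans ?_
  have h1 : ∀ n ∈ Finset.range N, ‖emT (Y + n) s‖ ≤ ‖s - 1‖ * (‖s‖ / s.re *
      (((Y + n : ℕ) : ℝ) ^ (-s.re) - ((Y + (n + 1) : ℕ) : ℝ) ^ (-s.re))) := by
    intro n _
    have := emT_norm_le (n := Y + n) (by omega) hs
    push_cast at this ⊢
    rw [← add_assoc]
    exact this
  refine (Finset.sum_le_sum h1).trans ?_
  rw [← Finset.mul_sum, ← Finset.mul_sum,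
    Finset.sum_range_sub' (fun n => ((Y + n : ℕ) : ℝ) ^ (-s.re))]
  gcongr
  have : (0 : ℝ) ≤ ((Y + N : ℕ) : ℝ) ^ (-s.re) := by positivity
  simp only [add_zero]
  linarith

/-- The Euler-Maclaurin formula in the half-plane of absolute convergence. -/
lemma zeta1_eq_of_one_lt {Y : ℕ} (hY : 1 ≤ Y) {s : ℂ} (hs : 1 < s.re) :
    riemannZeta₁ s = (s - 1) * ∑ n ∈ Finset.Icc 1 Y, (n : ℂ) ^ (-s) + (Y : ℂ) ^ (1 - s)
      - ∑' n, emT (Y + n) s := by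
  have ht := (summable_emT hY (by linarith : 0 < s.re)).hasSum.tendsto_sum_nat
  have hz : Filter.Tendsto (fun N => ∑ n ∈ Finset.Icc 1 (Y + N), (n : ℂ) ^ (-s)) Filter.atTop
      (nhds (riemannZeta s)) := by
    have h0 : s ≠ 0 := by rintro rfl; simp at hs; linarith
    have h1 : HasSum (fun n : ℕ => (n : ℂ) ^ (-s)) (riemannZeta s) := by
      rw [zeta_eq_tsum_one_div_nat_cpow hs]
      simp_rw [one_div, ← Complex.cpow_neg]
      exact (by simpa [Complex.cpow_neg] using Complex.summable_one_div_nat_cpow.mpr hs : 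
        Summable (fun n : ℕ => (n : ℂ) ^ (-s))).hasSum
    have h2 := h1.tendsto_sum_nat.comp
      (Filter.tendsto_atTop_mono (fun n => (by omega : n ≤ Y + n + 1)) Filter.tendsto_id)
    refine h2.congr fun N => ?_
    simp only [Function.comp]
    rw [Finset.range_eq_Ico, Finset.sum_eq_sum_Ico_succ_bot (by omega)]
    simp [Complex.zero_cpow (neg_ne_zero.mpr h0)]
    rfl
  have hy : Filter.Tendsto (fun N : ℕ => ((Y + N : ℕ) : ℂ) ^ (1 - s)) Filter.atTop (nhds 0) := by
    rw [tendsto_zero_iff_norm_tendsto_zero]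
    refine (tendsto_rpow_neg_nat (Y := Y) (σ := s.re - 1) (by linarith)).congr fun N => ?_
    rw [Complex.norm_natCast_cpow_of_pos (by omega)]
    simp
  have hpart : ∀ N, ∑ n ∈ Finset.range N, emT (Y + n) s = (Y : ℂ) ^ (1 - s)
      - ((Y + N : ℕ) : ℂ) ^ (1 - s) - (s - 1) * (∑ n ∈ Finset.Icc 1 (Y + N), (n : ℂ) ^ (-s)
        - ∑ n ∈ Finset.Icc 1 Y, (n : ℂ) ^ (-s)) := by
    intro N
    induction N with
    | zero => simp
    | succ N ih =>
      rw [Finset.sum_range_succ, ih, ← add_assoc, Finset.sum_Icc_succ_top (by omega), emT]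
      push_cast
      ring
  have h3 := ((tendsto_const_nhds (x := (Y : ℂ) ^ (1 - s))).sub hy).sub
    ((hz.sub (tendsto_const_nhds (x := ∑ n ∈ Finset.Icc 1 Y, (n : ℂ) ^ (-s)))).const_mul (s - 1))
  have h4 := tendsto_nhds_unique ht (h3.congr fun N => (hpart N).symm)
  have hs1 : s ≠ 1 := by rintro rfl; simp at hs
  have h5 : riemannZeta₁ s = (s - 1) * riemannZeta s := by
    rw [riemannZeta_eq_inv_sub_mul hs1]
    field_simp [sub_ne_zero.mpr hs1]
  rw [h4, h5]
  ring

lemma differentiableOn_tsum_emT {Y : ℕ} (hY : 1 ≤ Y) :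
    DifferentiableOn ℂ (fun s => ∑' n, emT (Y + n) s) {s : ℂ | 0 < s.re} := by
  intro s₀ hs₀
  have hs₀' : 0 < s₀.re := hs₀
  set U : Set ℂ := {s : ℂ | s₀.re / 2 < s.re} ∩ Metric.ball 0 (‖s₀‖ + 1)
  have hU : IsOpen U := (isOpen_lt continuous_const Complex.continuous_re).inter Metric.isOpen_ball
  have hmem : s₀ ∈ U := ⟨by simp; linarith, by simp⟩
  have hsum : Summable (fun n : ℕ => (‖s₀‖ + 2) * ((‖s₀‖ + 1) *
      ((Y + n : ℕ) : ℝ) ^ (-(s₀.re / 2) - 1))) := by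
    refine Summable.mul_left _ (Summable.mul_left _ ?_)
    have := (Real.summable_nat_rpow (p := -(s₀.re / 2) - 1)).mpr (by linarith)
    simpa [add_comm] using (summable_nat_add_iff Y).mpr this
  have := differentiableOn_tsum_of_summable_norm (F := fun n s => emT (Y + n) s) hsum
    (U := U) (fun n => ?_) hU (fun n s hs => ?_)
  · exact (this.differentiableAt (hU.mem_nhds hmem)).differentiableWithinAt
  · have h1 : ((Y + n : ℕ) : ℂ) ≠ 0 := Nat.cast_ne_zero.mpr (by omega)
    have h2 : ((Y + n : ℕ) : ℂ) + 1 ≠ 0 := Nat.cast_add_one_ne_zero _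
    unfold emT
    intro s _
    apply DifferentiableAt.differentiableWithinAt
    refine DifferentiableAt.sub (DifferentiableAt.sub ?_ ?_) (DifferentiableAt.mul (by fun_prop) ?_)
    · exact DifferentiableAt.const_cpow (by fun_prop) (Or.inl h1)
    · exact DifferentiableAt.const_cpow (by fun_prop) (Or.inl h2)
    · exact DifferentiableAt.const_cpow (by fun_prop) (Or.inl h2)
  · have hre : s₀.re / 2 < s.re := hs.1
    have hn : ‖s‖ < ‖s₀‖ + 1 := by simpa using hs.2
    refine (emT_norm_le' (by omega) (by linarith) hre.le).trans ?_
    have h3 : ‖s - 1‖ ≤ ‖s₀‖ + 2 := by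
      refine (norm_sub_le _ _).trans ?_
      simp; linarith
    gcongr

/-- The formula of `zeta1_eq_of_one_lt` in `0 < Re s`, by analytic continuation. -/
lemma zeta1_eq {Y : ℕ} (hY : 1 ≤ Y) {s : ℂ} (hs : 0 < s.re) :
    riemannZeta₁ s = (s - 1) * ∑ n ∈ Finset.Icc 1 Y, (n : ℂ) ^ (-s) + (Y : ℂ) ^ (1 - s)
      - ∑' n, emT (Y + n) s := by
  have hopen : IsOpen {s : ℂ | 0 < s.re} := isOpen_lt continuous_const Complex.continuous_re
  have hconv : IsPreconnected {s : ℂ | 0 < s.re} := (convex_halfSpace_re_gt 0).isPreconnected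
  have hd : DifferentiableOn ℂ (fun s : ℂ => (s - 1) * ∑ n ∈ Finset.Icc 1 Y, (n : ℂ) ^ (-s)
      + (Y : ℂ) ^ (1 - s) - ∑' n, emT (Y + n) s) {s : ℂ | 0 < s.re} := by
    refine DifferentiableOn.sub ?_ (differentiableOn_tsum_emT hY)
    intro z _
    apply DifferentiableAt.differentiableWithinAt
    refine DifferentiableAt.add (DifferentiableAt.mul (by fun_prop) ?_) ?_
    · refine DifferentiableAt.fun_sum fun n hn => ?_
      have : (n : ℂ) ≠ 0 := by
        have := (Finset.mem_Icc.mp hn).1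
        exact_mod_cast (by omega)
      exact DifferentiableAt.const_cpow (by fun_prop) (Or.inl this)
    · have : (Y : ℂ) ≠ 0 := by exact_mod_cast (by omega)
      exact DifferentiableAt.const_cpow (by fun_prop) (Or.inl this)
  have h2 : (2 : ℂ) ∈ {s : ℂ | 0 < s.re} := by simp
  refine ((differentiable_riemannZeta₁.differentiableOn.analyticOnNhd hopen).eqOn_of_preconnected_of_eventuallyEq
    (hd.analyticOnNhd hopen) hconv h2 ?_) hs
  have : {s : ℂ | 1 < s.re} ∈ nhds (2 : ℂ) :=
    (isOpen_lt continuous_const Complex.continuous_re).mem_nhds (by simp)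
  filter_upwards [this] with z hz
  exact zeta1_eq_of_one_lt hY hz

/-- Truncated Dirichlet series for `ζ` in the half-plane `0 < Re s`. -/
lemma zeta_em_bound {Y : ℕ} (hY : 1 ≤ Y) {s : ℂ} (hs : 0 < s.re) (hs1 : s ≠ 1) :
    ‖riemannZeta s - ∑ n ∈ Finset.Icc 1 Y, (n : ℂ) ^ (-s) - (Y : ℂ) ^ (1 - s) / (s - 1)‖
      ≤ ‖s‖ / s.re * (Y : ℝ) ^ (-s.re) := by
  have h1s : s - 1 ≠ 0 := sub_ne_zero.mpr hs1
  have := norm_tsum_emT_le hY hs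
  rw [riemannZeta_eq_inv_sub_mul hs1, zeta1_eq hY hs]
  have e : (s - 1)⁻¹ * ((s - 1) * ∑ n ∈ Finset.Icc 1 Y, (n : ℂ) ^ (-s) + (Y : ℂ) ^ (1 - s)
      - ∑' n, emT (Y + n) s) - ∑ n ∈ Finset.Icc 1 Y, (n : ℂ) ^ (-s) - (Y : ℂ) ^ (1 - s) / (s - 1)
      = -(s - 1)⁻¹ * ∑' n, emT (Y + n) s := by
    field_simp; ring
  rw [e, norm_mul, norm_neg, norm_inv, inv_mul_le_iff₀ (norm_pos_iff.mpr h1s)]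
  exact this

lemma norm_zeta_sub_le {s : ℂ} (hs : 0 < s.re) (hs1 : s ≠ 1) :
    ‖riemannZeta s - 1 - (s - 1)⁻¹‖ ≤ ‖s‖ / s.re := by
  simpa using zeta_em_bound le_rfl hs hs1

lemma norm_zeta0_le {s : ℂ} (hs : 0 < s.re) (hs1 : s ≠ 1) :
    ‖riemannZeta₀ s‖ ≤ 1 + ‖s‖ / s.re := by
  have h := norm_zeta_sub_le hs hs1
  rw [riemannZeta_eq_inv_sub_add hs1] at h
  have e : (s - 1)⁻¹ + riemannZeta₀ s - 1 - (s - 1)⁻¹ = riemannZeta₀ s - 1 := by ring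
  rw [e] at h
  have := norm_add_le (riemannZeta₀ s - 1) 1
  simp at this
  linarith

lemma zeta0_re_nonneg {σ : ℝ} (hσ : 1 < σ) : 0 ≤ (riemannZeta₀ σ).re := by
  have hs1 : (σ : ℂ) ≠ 1 := by exact_mod_cast hσ.ne'
  have h := norm_zeta_sub_le (s := σ) (by simp; linarith) hs1
  rw [riemannZeta_eq_inv_sub_add hs1] at h
  have e : ((σ : ℂ) - 1)⁻¹ + riemannZeta₀ σ - 1 - ((σ : ℂ) - 1)⁻¹ = riemannZeta₀ σ - 1 := by ring
  rw [e, Complex.norm_real, ofReal_re, Real.norm_of_nonneg (by linarith), div_self (by linarith)] at h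
  have h2 := (abs_le.mp ((Complex.abs_re_le_norm _).trans h)).1
  simp at h2
  linarith

lemma norm_zeta1_le {s : ℂ} (hs : 0 < s.re) :
    ‖riemannZeta₁ s‖ ≤ 1 + ‖s - 1‖ * (1 + ‖s‖ / s.re) := by
  unfold riemannZeta₁
  refine (norm_add_le _ _).trans ?_
  rw [norm_one, norm_mul]
  by_cases h : s = 1
  · subst h; simp
  · gcongr
    exact norm_zeta0_le hs h

/-- A zero of `ζ` in `0 < Re s` keeps distance at least `Re s` from the pole. -/
lemma re_le_norm_sub_one_of_zero {s : ℂ} (hs : 0 < s.re) (hs1 : s ≠ 1) (h0 : riemannZeta s = 0) :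
    s.re ≤ ‖s - 1‖ := by
  have h := norm_zeta_sub_le hs hs1
  have h1s : s - 1 ≠ 0 := sub_ne_zero.mpr hs1
  have e : (0 : ℂ) - 1 - (s - 1)⁻¹ = - (s / (s - 1)) := by field_simp; ring
  rw [h0, e, norm_neg, norm_div] at h
  have hn : 0 < ‖s‖ := norm_pos_iff.mpr (by rintro rfl; simp at hs)
  rw [div_le_div_iff₀ (norm_pos_iff.mpr h1s) hs] at h
  exact le_of_mul_le_mul_left h hn

lemma tsum_rpow_le {σ : ℝ} (hσ : 1 < σ) :
    ∑' n : ℕ, 1 / (n + 1 : ℝ) ^ σ ≤ 1 + 1 / (σ - 1) := by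
  have h := ZetaAsymptotics.zeta_limit_aux1 hσ
  have h2 : 0 ≤ ZetaAsymptotics.termTSum σ :=
    tsum_nonneg fun n => ZetaAsymptotics.term_nonneg _ _
  nlinarith

/-- `|ζ(s)| ≥ 1 / ζ(σ) ≥ (σ - 1) / σ`, by comparing the Dirichlet series of `1 / ζ` with `ζ(σ)`. -/
lemma le_norm_zeta {s : ℂ} (hs : 1 < s.re) : (s.re - 1) / s.re ≤ ‖riemannZeta s‖ := by
  have h1 := ArithmeticFunction.LSeries_zeta_mul_Lseries_moebius hs
  rw [ArithmeticFunction.LSeries_zeta_eq_riemannZeta hs] at h1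
  have hM : ‖LSeries (fun n => ((ArithmeticFunction.moebius n : ℤ) : ℂ)) s‖ ≤ s.re / (s.re - 1) := by
    have hsr : Summable (fun n : ℕ => 1 / (n + 1 : ℝ) ^ s.re) := by
      have := (summable_nat_add_iff 1).mpr (Real.summable_one_div_nat_rpow.mpr hs)
      simpa using this
    have hb : ∀ n : ℕ, ‖LSeries.term (fun n => ((ArithmeticFunction.moebius n : ℤ) : ℂ)) s n‖
        ≤ 1 / (n : ℝ) ^ s.re := by
      intro n
      rcases Nat.eq_zero_or_pos n with rfl | hn
      · simp; positivity
      · rw [LSeries.norm_term_eq, if_neg hn.ne']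
        gcongr
        rw [Complex.norm_intCast]
        exact_mod_cast ArithmeticFunction.abs_moebius_le_one
    have h2 : Summable (fun n : ℕ => 1 / (n : ℝ) ^ s.re) := Real.summable_one_div_nat_rpow.mpr hs
    have h3 := tsum_of_norm_bounded h2.hasSum hb
    unfold LSeries
    refine h3.trans ?_
    rw [h2.tsum_eq_zero_add]
    have h4 := tsum_rpow_le hs
    push_cast
    have h5 : s.re / (s.re - 1) = 1 + 1 / (s.re - 1) := by
      have : s.re - 1 ≠ 0 := by linarith
      field_simp; ring
    rw [h5, Real.zero_rpow (by linarith)]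
    simpa using h4
  have h6 : ‖riemannZeta s‖ * ‖LSeries (fun n => ((ArithmeticFunction.moebius n : ℤ) : ℂ)) s‖ = 1 := by
    rw [← norm_mul, h1, norm_one]
  have hp : 0 < s.re - 1 := by linarith
  have h7 : 1 ≤ ‖riemannZeta s‖ * (s.re / (s.re - 1)) := by
    calc (1 : ℝ) = _ := h6.symm
      _ ≤ _ := by gcongr
  rw [div_le_iff₀ (by linarith)]
  rw [← mul_div_assoc, le_div_iff₀ hp] at h7
  linarith

lemma sum_rpow_le (Y : ℕ) {v : ℝ} (hv : 0 < v) (hv1 : v ≤ 1) :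
    ∑ n ∈ Finset.Icc 1 Y, (n : ℝ) ^ (v - 1) ≤ (Y : ℝ) ^ v / v := by
  induction Y with
  | zero => simp; positivity
  | succ Y ih =>
    rw [Finset.sum_Icc_succ_top (by omega)]
    have hY : (0 : ℝ) < (Y + 1 : ℕ) := by positivity
    have h1 := _root_.rpow_one_add_le_one_add_mul_self (s := -1 / ((Y + 1 : ℕ) : ℝ))
      (by rw [le_div_iff₀ hY]; push_cast; linarith [(Nat.cast_nonneg Y : (0 : ℝ) ≤ Y)]) hv.le hv1
    have h2 : (Y : ℝ) = ((Y + 1 : ℕ) : ℝ) * (1 + -1 / ((Y + 1 : ℕ) : ℝ)) := by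
      field_simp; push_cast; ring
    have h3 : (Y : ℝ) ^ v ≤ ((Y + 1 : ℕ) : ℝ) ^ v * (1 + v * (-1 / ((Y + 1 : ℕ) : ℝ))) := by
      rw [h2, Real.mul_rpow hY.le ?_]
      · gcongr
      · have : 0 ≤ ((Y + 1 : ℕ) : ℝ) * (1 + -1 / ((Y + 1 : ℕ) : ℝ)) := by rw [← h2]; positivity
        exact nonneg_of_mul_nonneg_right this hY
    have h4 : ((Y + 1 : ℕ) : ℝ) ^ (v - 1) = ((Y + 1 : ℕ) : ℝ) ^ v / ((Y + 1 : ℕ) : ℝ) :=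
      Real.rpow_sub_one hY.ne' v
    rw [h4]
    calc _ ≤ (Y : ℝ) ^ v / v + ((Y + 1 : ℕ) : ℝ) ^ v / ((Y + 1 : ℕ) : ℝ) := by gcongr
      _ ≤ (((Y + 1 : ℕ) : ℝ) ^ v * (1 + v * (-1 / ((Y + 1 : ℕ) : ℝ)))) / v
          + ((Y + 1 : ℕ) : ℝ) ^ v / ((Y + 1 : ℕ) : ℝ) := by gcongr
      _ = _ := by field_simp; ring

/-- Upper bound for `ζ` to the left of the line `Re s = 1`. -/
lemma norm_zeta_le_left {Y : ℕ} (hY : 1 ≤ Y) {s : ℂ} {v : ℝ} (hv : 0 < v) (hv1 : v < 1)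
    (hs : 1 - v ≤ s.re) (hsv : v ≤ ‖s - 1‖) (hsY : ‖s‖ ≤ Y) :
    ‖riemannZeta s‖ ≤ (Y : ℝ) ^ v * (2 / v + 1 / (1 - v)) := by
  have hY1 : (1 : ℝ) ≤ Y := by exact_mod_cast hY
  have hs1 : s ≠ 1 := by rintro rfl; simp at hsv; linarith
  have hre : 0 < s.re := by linarith
  have h := zeta_em_bound hY hre hs1
  have hA : ‖∑ n ∈ Finset.Icc 1 Y, (n : ℂ) ^ (-s)‖ ≤ (Y : ℝ) ^ v / v := by
    refine (norm_sum_le _ _).trans (le_trans ?_ (sum_rpow_le Y hv hv1.le))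
    refine Finset.sum_le_sum fun n hn => ?_
    have hn1 := (Finset.mem_Icc.mp hn).1
    rw [Complex.norm_natCast_cpow_of_pos (by omega)]
    apply Real.rpow_le_rpow_of_exponent_le (by exact_mod_cast hn1)
    simp; linarith
  have hB : ‖(Y : ℂ) ^ (1 - s) / (s - 1)‖ ≤ (Y : ℝ) ^ v / v := by
    rw [norm_div, Complex.norm_natCast_cpow_of_pos (by omega)]
    gcongr
    simp; linarith
  have hC : ‖s‖ / s.re * (Y : ℝ) ^ (-s.re) ≤ (Y : ℝ) ^ v * (1 / (1 - v)) := by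
    have h1 : (Y : ℝ) * (Y : ℝ) ^ (-s.re) ≤ (Y : ℝ) ^ v := by
      calc (Y : ℝ) * (Y : ℝ) ^ (-s.re) = (Y : ℝ) ^ (1 : ℝ) * (Y : ℝ) ^ (-s.re) := by
            rw [Real.rpow_one]
        _ = (Y : ℝ) ^ (1 + -s.re) := (Real.rpow_add (by linarith) _ _).symm
        _ ≤ _ := Real.rpow_le_rpow_of_exponent_le hY1 (by linarith)
    calc ‖s‖ / s.re * (Y : ℝ) ^ (-s.re) = (‖s‖ * (Y : ℝ) ^ (-s.re)) * (1 / s.re) := by ring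
      _ ≤ ((Y : ℝ) * (Y : ℝ) ^ (-s.re)) * (1 / (1 - v)) := by
        have : 0 < 1 - v := by linarith
        gcongr
      _ ≤ _ := by
        have : 0 < 1 - v := by linarith
        gcongr
  have e : riemannZeta s = (riemannZeta s - ∑ n ∈ Finset.Icc 1 Y, (n : ℂ) ^ (-s)
      - (Y : ℂ) ^ (1 - s) / (s - 1)) + ∑ n ∈ Finset.Icc 1 Y, (n : ℂ) ^ (-s)
      + (Y : ℂ) ^ (1 - s) / (s - 1) := by ring
  rw [e]
  refine (norm_add_le _ _).trans ?_
  have := norm_add_le (riemannZeta s - ∑ n ∈ Finset.Icc 1 Y, (n : ℂ) ^ (-s)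
      - (Y : ℂ) ^ (1 - s) / (s - 1)) (∑ n ∈ Finset.Icc 1 Y, (n : ℂ) ^ (-s))
  have e2 : (Y : ℝ) ^ v * (2 / v + 1 / (1 - v)) =
    (Y : ℝ) ^ v * (1 / (1 - v)) + (Y : ℝ) ^ v / v + (Y : ℝ) ^ v / v := by ring
  linarith

lemma zeta1_re_ge {σ : ℝ} (hσ : 1 < σ) : 1 ≤ (riemannZeta₁ σ).re := by
  have h := zeta0_re_nonneg hσ
  unfold riemannZeta₁
  have e : ((σ : ℂ) - 1) = ((σ - 1 : ℝ) : ℂ) := by push_cast; ring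
  rw [e, add_re, re_ofReal_mul]
  simp only [one_re]
  nlinarith


lemma zeta1_im_eq_zero {σ : ℝ} (hσ : 1 < σ) : (riemannZeta₁ σ).im = 0 := by
  have hs1 : (σ : ℂ) ≠ 1 := by exact_mod_cast hσ.ne'
  have h5 : riemannZeta₁ σ = ((σ - 1 : ℝ) : ℂ) * riemannZeta σ := by
    rw [riemannZeta_eq_inv_sub_mul hs1]
    push_cast
    field_simp [sub_ne_zero.mpr hs1]
  have h6 : (starRingEnd ℂ) (riemannZeta σ) = riemannZeta σ := by
    rw [← riemannZeta_conj]; simp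
  rw [h5, im_ofReal_mul, Complex.conj_eq_iff_im.mp h6, mul_zero]

/-- `-ζ'/ζ(σ) - 1/(σ-1)` is at most of size `σ - 1` to the right of the pole. -/
lemma neg_logDeriv_zeta1_le {σ : ℝ} (hσ : 1 < σ) (hσ' : σ ≤ 1.1) :
    (-(deriv riemannZeta₁ σ / riemannZeta₁ σ)).re ≤ 8.4 * (σ - 1) := by
  have hder : deriv riemannZeta₁ σ = riemannZeta₀ σ + ((σ - 1 : ℝ) : ℂ) * deriv riemannZeta₀ σ := by
    have h := ((hasDerivAt_id (σ : ℂ)).sub_const 1).mul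
      (differentiable_riemannZeta₀ (σ : ℂ)).hasDerivAt
    have h2 : HasDerivAt riemannZeta₁ _ (σ : ℂ) := h.const_add 1
    rw [h2.deriv]
    simp
  have hd0 : ‖deriv riemannZeta₀ σ‖ ≤ 4.2 / (1 / 2) := by
    refine Complex.norm_deriv_le_of_forall_mem_sphere_norm_le (by norm_num)
      differentiable_riemannZeta₀.diffContOnCl fun z hz => ?_
    rw [mem_sphere_iff_norm] at hz
    have hre : |z.re - σ| ≤ 1 / 2 := by
      have := Complex.abs_re_le_norm (z - σ)
      rw [hz] at this; simpa using this
    have hre' := abs_le.mp hre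
    have hnz : ‖z‖ ≤ σ + 1 / 2 := by
      have := norm_add_le (z - σ) σ
      rw [hz, Complex.norm_real, Real.norm_of_nonneg (by linarith)] at this
      simp at this; linarith
    have hz1 : z ≠ 1 := by
      rintro rfl
      rw [show (1 : ℂ) - σ = ((1 - σ : ℝ) : ℂ) by push_cast; ring, Complex.norm_real,
        Real.norm_eq_abs, abs_of_neg (by linarith)] at hz
      linarith
    refine (norm_zeta0_le (by linarith) hz1).trans ?_
    have : ‖z‖ / z.re ≤ 3.2 := by
      rw [div_le_iff₀ (by linarith)]
      linarith
    linarith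
  have hz1 := zeta1_re_ge hσ
  have hreal : riemannZeta₁ σ = ((riemannZeta₁ σ).re : ℂ) := by
    apply Complex.ext <;> simp [zeta1_im_eq_zero hσ]
  rw [hreal, hder, ← neg_div, Complex.div_ofReal_re, div_le_iff₀ (by linarith), neg_re, add_re,
    re_ofReal_mul]
  have h0 := zeta0_re_nonneg hσ
  have h1 := (abs_le.mp (Complex.abs_re_le_norm (deriv riemannZeta₀ σ))).1
  have h2 : -8.4 ≤ (deriv riemannZeta₀ σ).re := by linarith
  have h3 : 0 ≤ σ - 1 := by linarith
  nlinarith [mul_nonneg h3 (sub_nonneg.mpr hz1)]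

end

/-! ### Zeros in a disc and the logarithmic derivative at its centre -/

section

open Complex Metric

lemma exists_log_on_ball {f : ℂ → ℂ} {R : ℝ} (hR : 0 < R) (hf : DifferentiableOn ℂ f (ball 0 R))
    (h0 : ∀ z ∈ ball (0 : ℂ) R, f z ≠ 0) :
    ∃ h : ℂ → ℂ, DifferentiableOn ℂ h (ball 0 R) ∧ ∀ z ∈ ball (0 : ℂ) R, f z = exp (h z) := by
  have hd : DifferentiableOn ℂ (fun z => deriv f z / f z) (ball 0 R) :=
    (hf.deriv isOpen_ball).div hf h0
  obtain ⟨g, hg⟩ := hd.isExactOn_ball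
  have h0m : (0 : ℂ) ∈ ball (0 : ℂ) R := mem_ball_self hR
  set k : ℂ → ℂ := fun z => f z * exp (-g z) with hk
  have hkd : ∀ z ∈ ball (0 : ℂ) R, HasDerivAt k 0 z := by
    intro z hz
    have h1 := (hf.differentiableAt (isOpen_ball.mem_nhds hz)).hasDerivAt.mul (hg z hz).neg.cexp
    refine h1.congr_deriv ?_
    have := h0 z hz
    field_simp
    simp
  have hkc : ∀ z ∈ ball (0 : ℂ) R, k z = k 0 := by
    intro z hz
    refine (convex_ball (0 : ℂ) R).is_const_of_fderivWithin_eq_zero (𝕜 := ℂ)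
      (fun w hw => (hkd w hw).differentiableAt.differentiableWithinAt) (fun w hw => ?_) hz h0m
    rw [fderivWithin_of_isOpen isOpen_ball hw]
    ext
    simp [(hkd w hw).deriv]
  have hk0 : k 0 ≠ 0 := mul_ne_zero (h0 0 h0m) (exp_ne_zero _)
  refine ⟨fun z => g z + log (k 0), ?_, ?_⟩
  · intro z hz
    exact ((hg z hz).differentiableAt.add_const _).differentiableWithinAt
  · intro z hz
    rw [exp_add, exp_log hk0, ← hkc z hz, hk]
    simp only
    rw [mul_comm (f z), ← mul_assoc, ← exp_add]
    simp

/-- The first cosine Fourier coefficient of `log ‖f‖` on the circle of radius `r` around `0`, without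
the normalising factor `1 / π`. -/
noncomputable def logCos (f : ℂ → ℂ) (r : ℝ) : ℝ :=
  ∫ θ in (0 : ℝ)..2 * Real.pi, Real.log ‖f (circleMap 0 r θ)‖ * Real.cos θ

lemma integral_mul_cos {h : ℂ → ℂ} {r R : ℝ} (hr : 0 < r) (hrR : r < R)
    (hh : DifferentiableOn ℂ h (ball 0 R)) :
    ∫ θ in (0 : ℝ)..2 * Real.pi, h (circleMap 0 r θ) * Complex.cos θ
      = Real.pi * r * deriv h 0 := by
  have hsub : closedBall (0 : ℂ) r ⊆ ball 0 R := closedBall_subset_ball hrR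
  have hcl : DiffContOnCl ℂ h (ball 0 r) := (hh.mono hsub).diffContOnCl_ball le_rfl
  have h1 : (∮ z in C(0, r), h z) = 0 := by
    exact circleIntegral_eq_zero_of_differentiable_on_off_countable hr.le Set.countable_empty
      (hh.continuousOn.mono hsub)
      (fun z hz => hh.differentiableAt (isOpen_ball.mem_nhds (hsub (ball_subset_closedBall hz.1))))
  have h2 := hcl.deriv_eq_smul_circleIntegral hr
  have hcont : Continuous (fun θ : ℝ => h (circleMap 0 r θ)) :=
    (hh.continuousOn.mono hsub).comp_continuous (continuous_circleMap 0 r)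
      (fun θ => circleMap_mem_closedBall 0 hr.le θ)
  rw [circleIntegral] at h1
  have h1' : ∫ θ in (0 : ℝ)..2 * Real.pi, h (circleMap 0 r θ) * Complex.exp (θ * I) = 0 := by
    have e : ∀ θ : ℝ, deriv (circleMap 0 r) θ • h (circleMap 0 r θ)
        = (r * I) * (h (circleMap 0 r θ) * Complex.exp (θ * I)) := by
      intro θ; simp [circleMap]; ring
    simp_rw [e] at h1
    rw [intervalIntegral.integral_const_mul] at h1
    have : (r : ℂ) * I ≠ 0 := by simp [hr.ne']
    simpa [this] using h1
  have h2' : ∫ θ in (0 : ℝ)..2 * Real.pi, h (circleMap 0 r θ) * Complex.exp (-(θ * I))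
      = 2 * Real.pi * r * deriv h 0 := by
    rw [circleIntegral] at h2
    have hr0 : (r : ℂ) ≠ 0 := by exact_mod_cast hr.ne'
    have e : ∀ θ : ℝ, deriv (circleMap 0 r) θ • (1 / (circleMap 0 r θ - 0) ^ 2) • h (circleMap 0 r θ)
        = (I / r) * (h (circleMap 0 r θ) * Complex.exp (-(θ * I))) := by
      intro θ
      have : Complex.exp (θ * I) ≠ 0 := exp_ne_zero _
      rw [Complex.exp_neg]
      simp only [circleMap, deriv_circleMap, smul_eq_mul, zero_add, sub_zero]
      field_simp
    simp_rw [e] at h2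
    rw [intervalIntegral.integral_const_mul, smul_eq_mul] at h2
    generalize (∫ θ in (0 : ℝ)..2 * Real.pi, h (circleMap 0 r θ) * Complex.exp (-(θ * I))) = A
      at h2 ⊢
    have hI := I_ne_zero
    have h3 : I * A = I * (2 * Real.pi * r * deriv h 0) := by
      field_simp at h2
      linear_combination I * h2
    exact mul_left_cancel₀ hI h3
  have hi1 : IntervalIntegrable (fun θ : ℝ => h (circleMap 0 r θ) * Complex.exp (θ * I))
    MeasureTheory.volume 0 (2 * Real.pi) := (hcont.mul (by fun_prop)).intervalIntegrable _ _
  have hi2 : IntervalIntegrable (fun θ : ℝ => h (circleMap 0 r θ) * Complex.exp (-(θ * I)))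
    MeasureTheory.volume 0 (2 * Real.pi) := (hcont.mul (by fun_prop)).intervalIntegrable _ _
  have e : ∀ θ : ℝ, h (circleMap 0 r θ) * Complex.cos θ = (1 / 2) * (h (circleMap 0 r θ) * Complex.exp (θ * I)
      + h (circleMap 0 r θ) * Complex.exp (-(θ * I))) := by
    intro θ; rw [Complex.cos]; ring_nf
  simp_rw [e]
  rw [intervalIntegral.integral_const_mul, intervalIntegral.integral_add hi1 hi2, h1', h2']
  ring

/-- For a zero-free `f` the coefficient is the one of `Re log f`, which Cauchy's formula evaluates. -/
lemma logCos_eq_of_ne_zero {f : ℂ → ℂ} {r R : ℝ} (hr : 0 < r) (hrR : r < R)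
    (hf : DifferentiableOn ℂ f (ball 0 R)) (h0 : ∀ z ∈ closedBall (0 : ℂ) r, f z ≠ 0) :
    logCos f r = Real.pi * r * (deriv f 0 / f 0).re := by
  -- by compactness `f` has no zero on a slightly larger ball
  obtain ⟨R', hrR', hR'R, hne⟩ : ∃ R', r < R' ∧ R' ≤ R ∧ ∀ z ∈ ball (0 : ℂ) R', f z ≠ 0 := by
    have hopen : IsOpen (ball (0 : ℂ) R ∩ f ⁻¹' {0}ᶜ) :=
      hf.continuousOn.isOpen_inter_preimage isOpen_ball isOpen_compl_singleton
    have hsub : closedBall (0 : ℂ) r ⊆ ball (0 : ℂ) R ∩ f ⁻¹' {0}ᶜ :=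
      fun z hz => ⟨closedBall_subset_ball hrR hz, h0 z hz⟩
    obtain ⟨δ, hδ, hth⟩ := (isCompact_closedBall (0 : ℂ) r).exists_thickening_subset_open hopen hsub
    rw [thickening_closedBall hδ hr.le] at hth
    refine ⟨min (δ + r) R, lt_min (by linarith) hrR, min_le_right _ _, fun z hz => ?_⟩
    exact (hth (ball_subset_ball (by rw [add_comm]; exact min_le_left _ _) hz)).2
  obtain ⟨h, hh, hexp⟩ := exists_log_on_ball (hr.trans hrR') (hf.mono (ball_subset_ball hR'R)) hne
  have hint := integral_mul_cos hr hrR' hh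
  have h0m : (0 : ℂ) ∈ ball (0 : ℂ) R' := mem_ball_self (hr.trans hrR')
  have hder : deriv f 0 / f 0 = deriv h 0 := by
    have h1 : f =ᶠ[nhds 0] fun z => exp (h z) :=
      Filter.eventually_of_mem (isOpen_ball.mem_nhds h0m) hexp
    have h2 := (hh.differentiableAt (isOpen_ball.mem_nhds h0m)).hasDerivAt.cexp
    rw [h1.deriv_eq, h2.deriv, hexp 0 h0m]
    field_simp [exp_ne_zero]
  have hcont : Continuous (fun θ : ℝ => h (circleMap 0 r θ)) :=
    (hh.continuousOn.mono (closedBall_subset_ball hrR')).comp_continuous (continuous_circleMap 0 r)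
      (fun θ => circleMap_mem_closedBall 0 hr.le θ)
  rw [hder, logCos]
  have e1 : (Real.pi * r * deriv h 0 : ℂ).re = Real.pi * r * (deriv h 0).re := by
    rw [← ofReal_mul, re_ofReal_mul]
  have hii : IntervalIntegrable (fun θ : ℝ => h (circleMap 0 r θ) * Complex.cos θ)
    MeasureTheory.volume 0 (2 * Real.pi) := (hcont.mul (by fun_prop)).intervalIntegrable _ _
  rw [← e1, ← hint, ← reCLM_apply, ← ContinuousLinearMap.intervalIntegral_comp_comm _ hii]
  congr 1
  funext θ
  have hm : circleMap 0 r θ ∈ ball (0 : ℂ) R' :=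
    closedBall_subset_ball hrR' (circleMap_mem_closedBall 0 hr.le θ)
  rw [hexp _ hm, norm_exp, Real.log_exp, reCLM_apply, ← ofReal_cos, re_mul_ofReal]

/-- A zero of finite order can be divided out globally. -/
lemma exists_eq_pow_mul {f : ℂ → ℂ} {R : ℝ} (hf : DifferentiableOn ℂ f (ball 0 R)) (hR : 0 < R)
    (hf0 : f 0 ≠ 0) {u : ℂ} (hu : u ∈ ball (0 : ℂ) R) :
    ∃ (n : ℕ) (g : ℂ → ℂ), DifferentiableOn ℂ g (ball 0 R) ∧ g u ≠ 0 ∧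
      ∀ z ∈ ball (0 : ℂ) R, f z = (z - u) ^ n * g z := by
  have han : AnalyticOnNhd ℂ f (ball 0 R) := hf.analyticOnNhd isOpen_ball
  have hnz : ¬ ∀ᶠ z in nhds u, f z = 0 := by
    intro h
    exact hf0 (han.eqOn_zero_of_preconnected_of_eventuallyEq_zero
      (convex_ball (0 : ℂ) R).isPreconnected hu h (mem_ball_self hR))
  obtain ⟨n, g, hg, hgu, hfg⟩ := (han u hu).exists_eventuallyEq_pow_smul_nonzero_iff.mpr hnz
  classical
  refine ⟨n, fun z => if z = u then g u else f z / (z - u) ^ n, ?_, by simpa using hgu, ?_⟩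
  · intro z hz
    by_cases hzu : z = u
    · subst hzu
      apply DifferentiableAt.differentiableWithinAt
      refine hg.differentiableAt.congr_of_eventuallyEq ?_
      filter_upwards [hfg] with w hw
      by_cases hwz : w = z
      · simp [hwz]
      · have : w - z ≠ 0 := sub_ne_zero.mpr hwz
        rw [if_neg hwz, hw, smul_eq_mul]
        field_simp
    · apply DifferentiableAt.differentiableWithinAt
      have hd := hf.differentiableAt (isOpen_ball.mem_nhds hz)
      have h1 : DifferentiableAt ℂ (fun z => f z / (z - u) ^ n) z :=
        hd.div (by fun_prop) (pow_ne_zero _ (sub_ne_zero.mpr hzu))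
      refine h1.congr_of_eventuallyEq ?_
      filter_upwards [isOpen_ne.mem_nhds hzu] with w hw
      rw [if_neg hw]
  · intro z hz
    by_cases hzu : z = u
    · subst hzu
      have := hfg.self_of_nhds
      simpa using this
    · have : z - u ≠ 0 := sub_ne_zero.mpr hzu
      simp only [if_neg hzu]
      field_simp

/-- Replacing the zero `u` by the corresponding Blaschke factor does not change `‖f‖` on the circle,
and changes the logarithmic derivative at the centre by an explicit amount. -/
lemma blaschke_step {f : ℂ → ℂ} {r R : ℝ} (hr : 0 < r) (hrR : r < R)
    (hf : DifferentiableOn ℂ f (ball 0 R)) (hf0 : f 0 ≠ 0) {u : ℂ} (hu : u ∈ ball (0 : ℂ) r) :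
    ∃ (n : ℕ) (f₁ : ℂ → ℂ), DifferentiableOn ℂ f₁ (ball 0 R) ∧ f₁ 0 ≠ 0 ∧ f₁ u ≠ 0 ∧
      (f u = 0 → 1 ≤ n) ∧ (∀ z ∈ closedBall (0 : ℂ) r, f₁ z = 0 → f z = 0) ∧
      logCos f₁ r = logCos f r ∧
      (deriv f 0 / f 0).re = (deriv f₁ 0 / f₁ 0).re + n * (u.re / r ^ 2 - u.re / ‖u‖ ^ 2) := by
  have hR : 0 < R := hr.trans hrR
  have hu' : ‖u‖ < r := by simpa using hu
  have hsub : closedBall (0 : ℂ) r ⊆ ball 0 R := closedBall_subset_ball hrR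
  have huR : u ∈ ball (0 : ℂ) R := hsub (ball_subset_closedBall hu)
  obtain ⟨n, g, hg, hgu, hfg⟩ := exists_eq_pow_mul hf hR hf0 huR
  have hr0 : (r : ℂ) ≠ 0 := by exact_mod_cast hr.ne'
  set b : ℂ → ℂ := fun z => (r ^ 2 - (starRingEnd ℂ) u * z) / r with hb
  have hbne : ∀ z ∈ closedBall (0 : ℂ) r, b z ≠ 0 := by
    intro z hz h
    have hz' : ‖z‖ ≤ r := by simpa using hz
    rw [hb] at h
    simp only [div_eq_zero_iff, hr0, or_false, sub_eq_zero] at h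
    have := congrArg norm h
    rw [norm_mul, norm_pow, Complex.norm_real, Real.norm_of_nonneg hr.le, RCLike.norm_conj] at this
    nlinarith [norm_nonneg u, norm_nonneg z]
  have h0m : (0 : ℂ) ∈ ball (0 : ℂ) R := mem_ball_self hR
  have h0c : (0 : ℂ) ∈ closedBall (0 : ℂ) r := mem_closedBall_self hr.le
  have hg0 : g 0 ≠ 0 := by
    intro h; apply hf0; rw [hfg 0 h0m, h, mul_zero]
  refine ⟨n, fun z => b z ^ n * g z, ?_, mul_ne_zero (pow_ne_zero _ (hbne 0 h0c)) hg0,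
    mul_ne_zero (pow_ne_zero _ (hbne u (ball_subset_closedBall hu))) hgu, ?_, ?_, ?_, ?_⟩
  · exact DifferentiableOn.mul (by fun_prop) hg
  · intro h
    by_contra hn
    have hn0 : n = 0 := by omega
    subst hn0
    rw [hfg u huR] at h
    simp [hgu] at h
  · intro z hz h
    have : g z = 0 := by simpa [pow_ne_zero _ (hbne z hz)] using h
    rw [hfg z (hsub hz), this, mul_zero]
  · unfold logCos
    congr 1
    funext θ
    have hm : circleMap 0 r θ ∈ sphere (0 : ℂ) r := circleMap_mem_sphere 0 hr.le θ
    set z := circleMap 0 r θ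
    have hz : ‖z‖ = r := by simpa using hm
    rw [hfg z (hsub (sphere_subset_closedBall hm)), norm_mul, norm_mul, norm_pow, norm_pow]
    have : ‖b z‖ = ‖z - u‖ := by
      have h1 := norm_canonicalFactor_eval_circle_eq_one hu hm
      rw [canonicalFactor_apply, norm_div, norm_mul, Complex.norm_real, Real.norm_of_nonneg hr.le] at h1
      have h2 : 0 < ‖z - u‖ := norm_pos_iff.mpr (sub_ne_zero.mpr (by rintro h; rw [h] at hz; linarith))
      rw [div_eq_iff (by positivity), one_mul] at h1
      rw [hb]
      simp only
      rw [norm_div, h1, Complex.norm_real, Real.norm_of_nonneg hr.le]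
      field_simp
    rw [this]
  · have hgd := (hg.differentiableAt (isOpen_ball.mem_nhds h0m)).hasDerivAt
    rcases Nat.eq_zero_or_pos n with rfl | hn
    · have e1 : f =ᶠ[nhds 0] g := Filter.eventually_of_mem (isOpen_ball.mem_nhds h0m)
        (fun z hz => by simpa using hfg z hz)
      simp [e1.deriv_eq, e1.eq_of_nhds]
    · have hu0 : u ≠ 0 := by
        rintro rfl
        apply hf0
        rw [hfg 0 h0m]
        simp [hn.ne']
      have e1 : f =ᶠ[nhds 0] fun z => (z - u) ^ n * g z :=
        Filter.eventually_of_mem (isOpen_ball.mem_nhds h0m) hfg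
      have d1 := (((hasDerivAt_id (0 : ℂ)).sub_const u).fun_pow n).mul hgd
      have d2 : HasDerivAt b (-(starRingEnd ℂ) u / r) 0 := by
        have := (((hasDerivAt_id (0 : ℂ)).const_mul ((starRingEnd ℂ) u)).const_sub ((r : ℂ) ^ 2)).div_const (r : ℂ)
        simpa using this
      have d3 := (d2.fun_pow n).mul hgd
      have hf' : deriv f 0 = _ := e1.deriv_eq.trans d1.deriv
      have hf1' : deriv (fun z => b z ^ n * g z) 0 = _ := d3.deriv
      have hb0 : b 0 = r := by rw [hb]; field_simp; ring
      obtain ⟨m, rfl⟩ : ∃ m, n = m + 1 := ⟨n - 1, by omega⟩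
      have key : deriv f 0 / f 0 = deriv (fun z => b z ^ (m + 1) * g z) 0 / (b 0 ^ (m + 1) * g 0)
          + ((m + 1 : ℕ) : ℂ) * ((starRingEnd ℂ) u / r ^ 2 - u⁻¹) := by
        rw [hf', hf1', hfg 0 h0m, hb0]
        simp only [id, zero_sub, Nat.add_sub_cancel]
        have hmu : (-u) ≠ 0 := neg_ne_zero.mpr hu0
        field_simp
        ring
      rw [key, add_re]
      congr 1
      rw [← ofReal_natCast, re_ofReal_mul, sub_re, inv_re, ← ofReal_pow, Complex.div_ofReal_re, conj_re,
        Complex.normSq_eq_norm_sq]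

/-- Zeros in the left half of the disc only increase the right side: they are removed one at a time
by `blaschke_step`. -/
lemma logCos_le_of_finset {r R : ℝ} (hr : 0 < r) (hrR : r < R) (S : Finset ℂ)
    (hS : ∀ u ∈ S, u ∈ ball (0 : ℂ) r ∧ u.re ≤ 0) (f : ℂ → ℂ)
    (hf : DifferentiableOn ℂ f (ball 0 R)) (hf0 : f 0 ≠ 0)
    (hz : ∀ z ∈ closedBall (0 : ℂ) r, f z = 0 → z ∈ S) :
    logCos f r ≤ Real.pi * r * (deriv f 0 / f 0).re := by
  classical
  induction S using Finset.induction_on generalizing f with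
  | empty =>
    refine (logCos_eq_of_ne_zero hr hrR hf fun z hzm h => ?_).le
    simpa using hz z hzm h
  | insert u S _ ih =>
    have hu := hS u (Finset.mem_insert_self _ _)
    obtain ⟨n, f₁, h1, h2, h3, -, h5, h6, h7⟩ := blaschke_step hr hrR hf hf0 hu.1
    have := ih (fun v hv => hS v (Finset.mem_insert_of_mem hv)) f₁ h1 h2 (fun z hzm hz0 => by
      rcases Finset.mem_insert.mp (hz z hzm (h5 z hzm hz0)) with rfl | h
      · exact absurd hz0 h3
      · exact h)
    rw [← h6, h7]
    have hu' : ‖u‖ < r := by simpa using hu.1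
    have hnn : 0 ≤ (n : ℝ) * (u.re / r ^ 2 - u.re / ‖u‖ ^ 2) := by
      refine mul_nonneg (Nat.cast_nonneg _) ?_
      rcases eq_or_ne u 0 with rfl | hu0
      · simp
      · have hun : 0 < ‖u‖ := norm_pos_iff.mpr hu0
        have : (-u.re) / r ^ 2 ≤ (-u.re) / ‖u‖ ^ 2 := by
          gcongr
          linarith [hu.2]
        rw [neg_div, neg_div] at this
        linarith
    have : 0 ≤ Real.pi * r * ((n : ℝ) * (u.re / r ^ 2 - u.re / ‖u‖ ^ 2)) := by positivity
    nlinarith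

lemma finite_zeros {f : ℂ → ℂ} {r R : ℝ} (hr : 0 < r) (hrR : r < R)
    (hf : DifferentiableOn ℂ f (ball 0 R)) (hf0 : f 0 ≠ 0) :
    {z | z ∈ closedBall (0 : ℂ) r ∧ f z = 0}.Finite := by
  by_contra hinf
  obtain ⟨u, hu, hacc⟩ := Set.Infinite.exists_accPt_of_subset_isCompact hinf
    (isCompact_closedBall (0 : ℂ) r) (fun z hz => hz.1)
  have han : AnalyticOnNhd ℂ f (ball 0 R) := hf.analyticOnNhd isOpen_ball
  have := accPt_iff_frequently_nhdsNE.mp hacc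
  exact hf0 (han.eqOn_zero_of_preconnected_of_frequently_eq_zero
    (convex_ball (0 : ℂ) R).isPreconnected (closedBall_subset_ball hrR hu)
    (this.mono fun z hz => hz.2) (mem_ball_self (hr.trans hrR)))

/-- A radius whose circle avoids the zeros of `f`. -/
lemma exists_radius {f : ℂ → ℂ} {a b R : ℝ} (ha : 0 < a) (hab : a < b) (hbR : b < R)
    (hf : DifferentiableOn ℂ f (ball 0 R)) (hf0 : f 0 ≠ 0) :
    ∃ r ∈ Set.Ioo a b, ∀ z, ‖z‖ = r → f z ≠ 0 := by
  have hfin := (finite_zeros (ha.trans hab) hbR hf hf0).image norm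
  obtain ⟨r, hr, hr'⟩ := (Set.Ioo_infinite hab).exists_notMem_finite hfin
  refine ⟨r, hr, fun z hz h => hr' ⟨z, ⟨?_, h⟩, hz⟩⟩
  simp [hz, hr.2.le]

/-- Lower bound for the real part of the logarithmic derivative at the centre of a disc all of
whose zeros lie in the left half. -/
lemma logCos_le {f : ℂ → ℂ} {r R : ℝ} (hr : 0 < r) (hrR : r < R)
    (hf : DifferentiableOn ℂ f (ball 0 R)) (hf0 : f 0 ≠ 0)
    (hz : ∀ z ∈ closedBall (0 : ℂ) r, f z = 0 → ‖z‖ < r ∧ z.re ≤ 0) :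
    logCos f r ≤ Real.pi * r * (deriv f 0 / f 0).re := by
  have hfin := finite_zeros hr hrR hf hf0
  refine logCos_le_of_finset hr hrR hfin.toFinset (fun u hu => ?_) f hf hf0 (fun z h1 h2 => ?_)
  · have hu' : u ∈ closedBall (0 : ℂ) r ∧ f u = 0 := by simpa using hu
    have := hz u hu'.1 hu'.2
    exact ⟨by simpa using this.1, this.2⟩
  · simpa using ⟨by simpa using h1, h2⟩

/-- The same bound, keeping the contribution of a zero at `-d`. -/
lemma logCos_add_le {f : ℂ → ℂ} {r R : ℝ} (hr : 0 < r) (hrR : r < R)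
    (hf : DifferentiableOn ℂ f (ball 0 R)) (hf0 : f 0 ≠ 0)
    (hz : ∀ z ∈ closedBall (0 : ℂ) r, f z = 0 → ‖z‖ < r ∧ z.re ≤ 0)
    {d : ℝ} (hd : 0 < d) (hdr : d < r) (hfd : f (-d) = 0) :
    logCos f r + Real.pi * r * (1 / d - d / r ^ 2) ≤ Real.pi * r * (deriv f 0 / f 0).re := by
  have hu : (-d : ℂ) ∈ ball (0 : ℂ) r := by
    simp [abs_of_pos hd, hdr]
  obtain ⟨n, f₁, h1, h2, h3, h4, h5, h6, h7⟩ := blaschke_step hr hrR hf hf0 hu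
  have := logCos_le hr hrR h1 h2 (fun z hzm h => hz z hzm (h5 z hzm h))
  rw [← h6, h7]
  have hn : (1 : ℝ) ≤ n := by exact_mod_cast h4 hfd
  have e : ((-d : ℂ).re / r ^ 2 - (-d : ℂ).re / ‖(-d : ℂ)‖ ^ 2) = 1 / d - d / r ^ 2 := by
    simp only [neg_re, ofReal_re, norm_neg, Complex.norm_real, Real.norm_of_nonneg hd.le]
    field_simp
    ring
  rw [e]
  have hnn : 0 ≤ 1 / d - d / r ^ 2 := by
    rw [sub_nonneg, div_le_div_iff₀ (by positivity) hd]
    nlinarith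
  have : 1 / d - d / r ^ 2 ≤ n * (1 / d - d / r ^ 2) := le_mul_of_one_le_left hnn hn
  have h8 : Real.pi * r * (1 / d - d / r ^ 2) ≤ Real.pi * r * (n * (1 / d - d / r ^ 2)) := by
    gcongr
  nlinarith

end

/-! ### The zero-free region -/

section

open Complex Metric

/-- Positivity of `5 + 8 cos θ + 4 cos 2θ + cos 3θ = (1 + cos θ)(1 + 2 cos θ)²`. -/
lemma trig_nonneg {w : ℂ} (hw : ‖w‖ = 1) : 0 ≤ (5 + 8 * w + 4 * w ^ 2 + w ^ 3).re := by
  have h1 : w.re ^ 2 + w.im ^ 2 = 1 := by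
    have := Complex.sq_norm w
    rw [hw, Complex.normSq_apply] at this
    nlinarith
  have e : (5 + 8 * w + 4 * w ^ 2 + w ^ 3).re = (1 + w.re) * (1 + 2 * w.re) ^ 2 := by
    have h2 : w.im ^ 2 = 1 - w.re ^ 2 := by linarith
    simp only [pow_succ, pow_zero, one_mul, add_re, mul_re, mul_im, re_ofNat, im_ofNat]
    ring_nf
    rw [h2]
    ring
  rw [e]
  have : -1 ≤ w.re := by
    have := (abs_le.mp (Complex.abs_re_le_norm w)).1
    rwa [hw] at this
  have h3 : 0 ≤ 1 + w.re := by linarith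
  positivity

/-- The weights of `trig_nonneg` applied to the Dirichlet series of `-ζ'/ζ` on the line `Re s = σ`. -/
lemma zeta_combination_nonneg {σ : ℝ} (hσ : 1 < σ) (γ : ℝ) :
    0 ≤ 5 * (-deriv riemannZeta (σ : ℂ) / riemannZeta σ).re
      + 8 * (-deriv riemannZeta (σ + γ * I : ℂ) / riemannZeta (σ + γ * I)).re
      + 4 * (-deriv riemannZeta (σ + (2 * γ : ℝ) * I : ℂ) / riemannZeta (σ + (2 * γ : ℝ) * I)).re
      + (-deriv riemannZeta (σ + (3 * γ : ℝ) * I : ℂ) / riemannZeta (σ + (3 * γ : ℝ) * I)).re := by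
  have hre : ∀ t : ℝ, 1 < ((σ : ℂ) + t * I).re := by intro t; simpa using hσ
  have hs : ∀ t : ℝ, Summable (fun n => LSeries.term
      (fun m : ℕ => ((ArithmeticFunction.vonMangoldt m : ℝ) : ℂ)) (σ + t * I) n) := fun t =>
    ArithmeticFunction.LSeriesSummable_vonMangoldt (hre t)
  have hF : ∀ t : ℝ, (-deriv riemannZeta (σ + t * I : ℂ) / riemannZeta (σ + t * I)).re
      = ∑' n, (LSeries.term
      (fun m : ℕ => ((ArithmeticFunction.vonMangoldt m : ℝ) : ℂ)) (σ + t * I) n).re := by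
    intro t
    rw [← ArithmeticFunction.LSeries_vonMangoldt_eq_deriv_riemannZeta_div (hre t), LSeries,
      Complex.re_tsum (hs t)]
  have hsr : ∀ t : ℝ, Summable (fun n => (LSeries.term
      (fun m : ℕ => ((ArithmeticFunction.vonMangoldt m : ℝ) : ℂ)) (σ + t * I) n).re) := fun t =>
    (Complex.hasSum_re (hs t).hasSum).summable
  have h0 := hF 0
  simp only [ofReal_zero, zero_mul, add_zero] at h0
  rw [h0, hF γ, hF (2 * γ), hF (3 * γ), ← tsum_mul_left, ← tsum_mul_left, ← tsum_mul_left]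
  have hs0 := hsr 0
  simp only [ofReal_zero, zero_mul, add_zero] at hs0
  rw [← (hs0.mul_left 5).tsum_add ((hsr γ).mul_left 8),
    ← ((hs0.mul_left 5).add ((hsr γ).mul_left 8)).tsum_add ((hsr (2 * γ)).mul_left 4),
    ← (((hs0.mul_left 5).add ((hsr γ).mul_left 8)).add ((hsr (2 * γ)).mul_left 4)).tsum_add
      (hsr (3 * γ))]
  refine tsum_nonneg fun n => ?_
  rcases Nat.eq_zero_or_pos n with rfl | hn
  · simp
  have hn0 : (n : ℂ) ≠ 0 := by exact_mod_cast hn.ne'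
  set w : ℂ := (n : ℂ) ^ (-(γ * I)) with hw
  have hwn : ‖w‖ = 1 := by
    rw [hw, Complex.norm_natCast_cpow_of_pos hn]; simp
  set a : ℝ := ArithmeticFunction.vonMangoldt n * (n : ℝ) ^ (-σ) with ha
  have ha0 : 0 ≤ a := mul_nonneg ArithmeticFunction.vonMangoldt_nonneg (by positivity)
  have key : ∀ j : ℕ, LSeries.term
      (fun m : ℕ => ((ArithmeticFunction.vonMangoldt m : ℝ) : ℂ)) (σ + ((j * γ : ℝ) : ℂ) * I) n = a * w ^ j := by
    intro j
    rw [LSeries.term_of_ne_zero hn.ne', div_eq_mul_inv, ← Complex.cpow_neg, ha, hw,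
      ← Complex.cpow_nat_mul]
    have h1 : (((n : ℝ) ^ (-σ) : ℝ) : ℂ) = (n : ℂ) ^ (-(σ : ℂ)) := by
      rw [Complex.ofReal_cpow (by positivity)]
      push_cast
      rfl
    rw [Complex.ofReal_mul (ArithmeticFunction.vonMangoldt n), h1, mul_assoc (Complex.ofReal _), ← Complex.cpow_add _ _ hn0]
    congr 2
    push_cast
    ring
  have k0 := key 0
  have k1 := key 1
  have k2 := key 2
  have k3 := key 3
  simp only [Nat.cast_zero, zero_mul, ofReal_zero, add_zero, Nat.cast_one, one_mul, pow_zero, mul_one,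
    pow_one, Nat.cast_ofNat] at k0 k1 k2 k3
  rw [k0, k1, k2, k3]
  have := mul_nonneg ha0 (trig_nonneg hwn)
  rw [← re_ofReal_mul] at this
  convert this using 1
  have e : (a : ℂ) * (5 + 8 * w + 4 * w ^ 2 + w ^ 3)
    = (5 : ℝ) * (a : ℂ) + (8 : ℝ) * (a * w) + (4 : ℝ) * (a * w ^ 2) + a * w ^ 3 := by
    push_cast; ring
  rw [e]
  simp only [add_re, re_ofReal_mul, ofReal_re]

lemma mul_log_inv_le {v : ℝ} (hv : 0 < v) : v * Real.log (1 / v) ≤ 0.5 - 0.3068 * v := by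
  have h := Real.log_le_sub_one_of_pos (show 0 < 1 / (2 * v) by positivity)
  have e : Real.log (1 / v) = Real.log 2 + Real.log (1 / (2 * v)) := by
    rw [← Real.log_mul (by norm_num) (by positivity)]
    congr 1; field_simp
  have h2 := Real.log_two_lt_d9
  have h3 : v * (1 / (2 * v)) = 1 / 2 := by field_simp
  rw [e]
  nlinarith

lemma log_six_le : Real.log 6 ≤ 1.8056 := by
  have h2 := Real.log_two_lt_d9
  have h3 := Real.log_le_sub_one_of_pos (show (0 : ℝ) < 0.9086 by norm_num)
  have e : Real.log 6 ≤ 3 * Real.log 2 + 3 * Real.log 0.9086 := by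
    rw [show (3 : ℝ) * Real.log 2 = Real.log (2 ^ 3) by rw [Real.log_pow]; norm_num,
      show (3 : ℝ) * Real.log 0.9086 = Real.log (0.9086 ^ 3) by rw [Real.log_pow]; norm_num,
      ← Real.log_mul (by norm_num) (by norm_num)]
    exact Real.log_le_log (by norm_num) (by norm_num)
  linarith

lemma log_nine_fifths_le : Real.log 1.8 ≤ 0.5932 := by
  have h2 := Real.log_two_lt_d9
  have h3 := Real.log_le_sub_one_of_pos (show (0 : ℝ) < 0.9 by norm_num)
  have e : Real.log 1.8 = Real.log 2 + Real.log 0.9 := by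
    rw [← Real.log_mul (by norm_num) (by norm_num)]; norm_num
  linarith

/-- The lower bound `v / (1 + v)` for `|ζ|` at distance `v` to the right of the line `Re s = 1`, made
linear in `v`. -/
lemma right_bound {v m : ℝ} (hv : 0 < v) (hv1 : v ≤ 0.8) (hm : v / (1 + v) ≤ m) :
    -(0.5 + 0.287 * v) ≤ v * Real.log m := by
  have h1 : Real.log (v / (1 + v)) ≤ Real.log m := Real.log_le_log (by positivity) hm
  have e : Real.log (v / (1 + v)) = -Real.log (1 / v) - Real.log (1 + v) := by
    rw [Real.log_div hv.ne' (by positivity), one_div, Real.log_inv]; ring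
  have h2 : Real.log (1 + v) ≤ 0.5932 :=
    (Real.log_le_log (by positivity) (by linarith)).trans log_nine_fifths_le
  have h3 := mul_log_inv_le hv
  nlinarith

/-- The upper bound of `norm_zeta_le_left` at distance `v` to the left of the line `Re s = 1`, made
polynomial in `v`. -/
lemma left_bound {v m Y : ℝ} (hv : 0 < v) (hv1 : v ≤ 0.8) (hY : 0 < Y) (hm0 : 0 < m)
    (hm : m ≤ Y ^ v * (2 / v + 1 / (1 - v))) :
    v * Real.log m ≤ v ^ 2 * Real.log Y + 0.5 + 1.499 * v := by
  have h1v : 0 < 1 - v := by linarith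
  have h1 := Real.log_le_log hm0 hm
  have e : Real.log (Y ^ v * (2 / v + 1 / (1 - v)))
      = v * Real.log Y + Real.log (1 / v) + Real.log ((2 - v) / (1 - v)) := by
    rw [Real.log_mul (by positivity) (by positivity), Real.log_rpow hY, add_assoc,
      ← Real.log_mul (by positivity) (by have : 0 < 2 - v := by linarith
                                         positivity)]
    congr 2
    field_simp
    ring
  have h2 : Real.log ((2 - v) / (1 - v)) ≤ 1.8056 := by
    refine (Real.log_le_log (div_pos (by linarith) h1v) ?_).trans log_six_le
    rw [div_le_iff₀ h1v]; linarith
  have h3 := mul_log_inv_le hv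
  nlinarith

/-- Lower bound for the first cosine coefficient of `log |ζ|` on a circle of radius `r ≈ 0.8`
centred slightly to the right of the line `Re s = 1`. -/
lemma logCos_zeta_ge {σ t r : ℝ} {Y : ℕ} (hσ : 1 < σ) (hσ' : σ ≤ 1.01) (hr : 0.79 < r)
    (hr' : r < 0.8) (ht : 0.99 ≤ t) (htY : t + 2 ≤ Y)
    (hne : ∀ z : ℂ, ‖z‖ = r → riemannZeta (σ + t * I + z) ≠ 0) :
    -(r * Real.log Y * (Real.pi / 2) + Real.pi / r + 3.572)
      ≤ logCos (fun z => riemannZeta (σ + t * I + z)) r := by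
  have hr0 : 0 < r := by linarith
  have hY1 : 1 ≤ Y := by
    have : (1 : ℝ) ≤ Y := by linarith
    exact_mod_cast this
  have hY0 : (0 : ℝ) < Y := by exact_mod_cast hY1
  set s : ℝ → ℂ := fun θ => σ + t * I + circleMap 0 r θ with hs
  have hre : ∀ θ, (s θ).re = σ + r * Real.cos θ := by
    intro θ; simp [hs, circleMap, Complex.exp_re]
  have him : ∀ θ, (s θ).im = t + r * Real.sin θ := by
    intro θ; simp [hs, circleMap, Complex.exp_im]
  have hne' : ∀ θ, riemannZeta (s θ) ≠ 0 := fun θ => hne _ (by simp [abs_of_pos hr0])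
  have him' : ∀ θ, 0.19 ≤ (s θ).im := by
    intro θ; rw [him]; nlinarith [Real.neg_one_le_sin θ]
  have hs1 : ∀ θ, s θ ≠ 1 := by
    intro θ h
    have := him' θ
    rw [h] at this
    norm_num at this
  set g : ℝ → ℝ := fun θ => Real.log ‖riemannZeta (s θ)‖ * Real.cos θ with hg
  have hscont : Continuous s := by
    simp only [hs]
    exact continuous_const.add (continuous_circleMap 0 r)
  have hcont : Continuous g := by
    have h1 : Continuous fun θ => riemannZeta (s θ) := by
      rw [continuous_iff_continuousAt]
      intro θ
      exact ContinuousAt.comp (f := s) (differentiableAt_riemannZeta (hs1 θ)).continuousAt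
        hscont.continuousAt
    exact (h1.norm.log fun θ => norm_ne_zero_iff.mpr (hne' θ)).mul Real.continuous_cos
  have hper : Function.Periodic g (2 * Real.pi) := by
    intro θ
    simp only [hg, hs, periodic_circleMap 0 r θ, Real.cos_periodic θ]
  have hsplit : logCos (fun z => riemannZeta (σ + t * I + z)) r
      = (∫ θ in (-(Real.pi / 2))..(Real.pi / 2), g θ)
        + ∫ θ in (Real.pi / 2)..(Real.pi / 2 + Real.pi), g θ := by
    rw [intervalIntegral.integral_add_adjacent_intervals (hcont.intervalIntegrable _ _)
      (hcont.intervalIntegrable _ _)]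
    have := hper.intervalIntegral_add_eq 0 (-(Real.pi / 2))
    rw [zero_add, show -(Real.pi / 2) + 2 * Real.pi = Real.pi / 2 + Real.pi by ring] at this
    rw [← this]
    rfl
  have hpi := Real.pi_pos
  have hR : -(0.5 / r * Real.pi + 0.574) ≤ ∫ θ in (-(Real.pi / 2))..(Real.pi / 2), g θ := by
    have e : ∫ θ in (-(Real.pi / 2))..(Real.pi / 2), (-(0.5 / r) - 0.287 * Real.cos θ)
        = -(0.5 / r * Real.pi + 0.574) := by
      rw [intervalIntegral.integral_sub (by simp)
        ((Real.continuous_cos.const_mul _).intervalIntegrable _ _)]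
      simp
      ring
    rw [← e]
    refine intervalIntegral.integral_mono_on (by linarith)
      (Continuous.intervalIntegrable (by fun_prop) _ _) (hcont.intervalIntegrable _ _) ?_
    intro θ hθ
    have hc : 0 ≤ Real.cos θ := Real.cos_nonneg_of_mem_Icc hθ
    rcases hc.eq_or_lt with hc | hc
    · simp only [hg, ← hc]
      have : 0 < 0.5 / r := by positivity
      linarith
    have hv : 0 < r * Real.cos θ := by positivity
    have hb := right_bound (m := ‖riemannZeta (s θ)‖) hv (by nlinarith [Real.cos_le_one θ]) (by
      refine le_trans ?_ (le_norm_zeta (by rw [hre]; linarith))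
      rw [hre, div_le_div_iff₀ (by linarith) (by linarith)]
      nlinarith)
    have e1 : g θ = (r * Real.cos θ * Real.log ‖riemannZeta (s θ)‖) / r := by
      simp only [hg]; field_simp
    have e2 : -(0.5 / r) - 0.287 * Real.cos θ = -(0.5 + 0.287 * (r * Real.cos θ)) / r := by
      field_simp; ring
    rw [e1, e2]
    exact div_le_div_of_nonneg_right hb hr0.le
  have hL : -(r * Real.log Y * (Real.pi / 2) + 0.5 / r * Real.pi + 2.998)
      ≤ ∫ θ in (Real.pi / 2)..(Real.pi / 2 + Real.pi), g θ := by
    have e : ∫ θ in (Real.pi / 2)..(Real.pi / 2 + Real.pi),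
        (-(r * Real.log Y) * Real.cos θ ^ 2 + (-(0.5 / r) + 1.499 * Real.cos θ))
        = -(r * Real.log Y * (Real.pi / 2) + 0.5 / r * Real.pi + 2.998) := by
      rw [intervalIntegral.integral_add (Continuous.intervalIntegrable (by fun_prop) _ _)
        (Continuous.intervalIntegrable (by fun_prop) _ _),
        intervalIntegral.integral_add (by simp)
        ((Real.continuous_cos.const_mul _).intervalIntegrable _ _),
        intervalIntegral.integral_const_mul, integral_cos_sq]
      simp [Real.sin_add, Real.cos_add]
      ring
    rw [← e]
    refine intervalIntegral.integral_mono_on (by linarith)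
      (Continuous.intervalIntegrable (by fun_prop) _ _) (hcont.intervalIntegrable _ _) ?_
    intro θ hθ
    have hc : Real.cos θ ≤ 0 := Real.cos_nonpos_of_pi_div_two_le_of_le hθ.1 (by linarith [hθ.2])
    rcases hc.eq_or_lt with hc | hc
    · simp only [hg, hc]
      have : 0 < 0.5 / r := by positivity
      nlinarith
    set v : ℝ := -(r * Real.cos θ) with hvdef
    have hv : 0 < v := by simp only [hvdef]; nlinarith
    have hv8 : v ≤ 0.8 := by simp only [hvdef]; nlinarith [Real.neg_one_le_cos θ]
    have hb := left_bound (m := ‖riemannZeta (s θ)‖) hv hv8 hY0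
      (norm_pos_iff.mpr (hne' θ)) (norm_zeta_le_left hY1 hv (by linarith)
        (by rw [hre]; simp only [hvdef]; linarith) (by
          have h1 : v ^ 2 ≤ ‖s θ - 1‖ ^ 2 := by
            rw [Complex.sq_norm, Complex.normSq_apply]
            have h2 : (s θ - 1).re = (σ - 1) - v := by
              simp only [sub_re, hre, one_re, hvdef]; ring
            have h3 : (s θ - 1).im = (s θ).im := by simp
            rw [h2, h3]
            nlinarith [him' θ]
          exact (pow_le_pow_iff_left₀ hv.le (norm_nonneg _) two_ne_zero).mp h1) (by
          refine (norm_add_le _ _).trans ?_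
          have h1 : ‖(σ + t * I : ℂ)‖ ≤ σ + t := by
            refine (norm_add_le _ _).trans ?_
            simp [abs_of_pos (by linarith : 0 < σ), abs_of_pos (by linarith : 0 < t)]
          have h2 : ‖circleMap 0 r θ‖ = r := by simp [abs_of_pos hr0]
          linarith))
    have e1 : g θ = -(v * Real.log ‖riemannZeta (s θ)‖) / r := by
      simp only [hg, hvdef]; field_simp
    have e2 : -(r * Real.log Y) * Real.cos θ ^ 2 + (-(0.5 / r) + 1.499 * Real.cos θ)
        = -(v ^ 2 * Real.log Y + 0.5 + 1.499 * v) / r := by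
      simp only [hvdef]; field_simp; ring
    rw [e1, e2]
    exact div_le_div_of_nonneg_right (by linarith) hr0.le
  rw [hsplit]
  have : Real.pi / r = 2 * (0.5 / r * Real.pi) := by ring
  linarith

/-- Lower bounds for `Re ζ'/ζ` slightly to the right of the line `Re s = 1`; a zero at horizontal
distance `d` to the left contributes the additional `1 / d - 1.62 d`. -/
lemma re_logDeriv_zeta_ge {σ t : ℝ} {Y : ℕ} (hσ : 1 < σ) (hσ' : σ ≤ 1.01) (ht : 0.99 ≤ t)
    (htY : t + 2 ≤ Y) :
    -(Real.log Y / 2 + 3.05) ≤ (deriv riemannZeta (σ + t * I) / riemannZeta (σ + t * I)).re ∧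
    ∀ d : ℝ, 0 < d → d < 0.79 → riemannZeta (σ + t * I + (-d : ℂ)) = 0 →
      -(Real.log Y / 2 + 3.05) + (1 / d - 1.62 * d)
        ≤ (deriv riemannZeta (σ + t * I) / riemannZeta (σ + t * I)).re := by
  set c : ℂ := σ + t * I with hc
  set f : ℂ → ℂ := fun z => riemannZeta (c + z) with hfdef
  have hcre : c.re = σ := by simp [hc]
  have hcim : c.im = t := by simp [hc]
  have hne1 : ∀ z ∈ ball (0 : ℂ) 0.85, c + z ≠ 1 := by
    intro z hz h
    have h1 : (c + z).im = 0 := by rw [h]; simp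
    rw [add_im, hcim] at h1
    have h2 := (abs_le.mp (Complex.abs_im_le_norm z)).1
    rw [mem_ball_zero_iff] at hz
    linarith
  have hf : DifferentiableOn ℂ f (ball 0 0.85) := by
    intro z hz
    have h1 : DifferentiableAt ℂ riemannZeta (c + z) := differentiableAt_riemannZeta (hne1 z hz)
    exact (h1.comp z ((differentiableAt_id).const_add c)).differentiableWithinAt
  have hf0 : f 0 ≠ 0 := by
    simp only [hfdef, add_zero]
    exact riemannZeta_ne_zero_of_one_le_re (by rw [hcre]; exact hσ.le)
  have hder : deriv f 0 = deriv riemannZeta c := by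
    simp only [hfdef]
    rw [deriv_comp_const_add, add_zero]
  obtain ⟨r, ⟨hr1, hr2⟩, hr⟩ := exists_radius (a := 0.79) (b := 0.8) (by norm_num) (by norm_num)
    (by norm_num) hf hf0
  have hr0 : 0 < r := by linarith
  have hz : ∀ z ∈ closedBall (0 : ℂ) r, f z = 0 → ‖z‖ < r ∧ z.re ≤ 0 := by
    intro z hz h0
    rw [mem_closedBall_zero_iff] at hz
    refine ⟨lt_of_le_of_ne hz fun h => hr z h h0, ?_⟩
    by_contra hcon
    push Not at hcon
    refine riemannZeta_ne_zero_of_one_le_re ?_ h0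
    rw [add_re, hcre]; linarith
  have hlow := logCos_zeta_ge hσ hσ' hr1 hr2 ht htY hr
  have hpi := Real.pi_gt_d2
  have hnum : Real.pi * r * (-(Real.log Y / 2 + 3.05))
      ≤ -(r * Real.log Y * (Real.pi / 2) + Real.pi / r + 3.572) := by
    have h1 : Real.pi / r ≤ Real.pi * r * 1.6024 := by
      rw [div_le_iff₀ hr0]
      have h3 : 0.6241 ≤ r * r := by nlinarith
      nlinarith [Real.pi_pos]
    have h2 : 3.572 ≤ Real.pi * r * 1.447 := by nlinarith
    nlinarith
  have hpr : 0 < Real.pi * r := by positivity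
  have hf0' : f 0 = riemannZeta c := by simp [hfdef]
  constructor
  · have := logCos_le hr0 (by linarith) hf hf0 hz
    rw [hder, hf0'] at this
    exact le_of_mul_le_mul_left (hnum.trans (hlow.trans this)) hpr
  · intro d hd hd' h0
    have := logCos_add_le hr0 (by linarith) hf hf0 hz hd (by linarith) h0
    rw [hder, hf0'] at this
    refine le_of_mul_le_mul_left (le_trans ?_ this) hpr
    rw [mul_add]
    refine add_le_add (hnum.trans hlow) ?_
    gcongr
    have h3 : 0.6241 ≤ r ^ 2 := by nlinarith
    rw [div_le_iff₀ (by positivity)]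
    nlinarith

lemma zeta1_eq_mul {s : ℂ} (hs : s ≠ 1) : riemannZeta₁ s = (s - 1) * riemannZeta s := by
  have : s - 1 ≠ 0 := sub_ne_zero.mpr hs
  rw [riemannZeta_eq_inv_sub_mul hs]
  field_simp

lemma neg_logDeriv_zeta_eq {s : ℂ} (h1 : s ≠ 1) (hz : riemannZeta s ≠ 0) :
    -deriv riemannZeta s / riemannZeta s
      = -(deriv riemannZeta₁ s / riemannZeta₁ s) + 1 / (s - 1) := by
  have hs : s - 1 ≠ 0 := sub_ne_zero.mpr h1
  have hd : deriv riemannZeta₁ s = riemannZeta s + (s - 1) * deriv riemannZeta s := by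
    have h2 : riemannZeta₁ =ᶠ[nhds s] fun s => (s - 1) * riemannZeta s := by
      filter_upwards [isOpen_ne.mem_nhds h1] with s hs using zeta1_eq_mul hs
    have := (((hasDerivAt_id s).sub_const 1).mul
      (differentiableAt_riemannZeta h1).hasDerivAt).congr_of_eventuallyEq h2
    rw [this.deriv]
    simp
  rw [hd, zeta1_eq_mul h1]
  field_simp
  ring

lemma neg_logDeriv_zeta_le {σ : ℝ} (hσ : 1 < σ) (hσ' : σ ≤ 1.1) :
    (-deriv riemannZeta (σ : ℂ) / riemannZeta σ).re ≤ 1 / (σ - 1) + 8.4 * (σ - 1) := by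
  have h := neg_logDeriv_zeta1_le hσ hσ'
  have h1 : (σ : ℂ) ≠ 1 := by exact_mod_cast hσ.ne'
  have hz : riemannZeta (σ : ℂ) ≠ 0 := riemannZeta_ne_zero_of_one_le_re (by simpa using hσ.le)
  have e : 1 / ((σ : ℂ) - 1) = ((1 / (σ - 1) : ℝ) : ℂ) := by push_cast; rfl
  rw [neg_logDeriv_zeta_eq h1 hz, e, add_re, ofReal_re]
  linarith

/-- An explicit classical zero-free region. -/
theorem riemannZeta_ne_zero_region {Y : ℕ} (hY : 29.8 ≤ Real.log Y) {s : ℂ} (hs1 : s ≠ 1)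
    (hs : 1 - 1 / (23 * Real.log Y) ≤ s.re) (hsY : 3 * |s.im| + 2 ≤ Y) :
    riemannZeta s ≠ 0 := by
  wlog hpos : 0 ≤ s.im generalizing s
  · intro h0
    refine this (s := (starRingEnd ℂ) s) ?_ (by simpa using hs) (by simpa using hsY)
      (by simp; linarith) ?_
    · intro h; apply hs1
      have := congrArg (starRingEnd ℂ) h
      simpa using this
    · rw [riemannZeta_conj, h0, map_zero]
  intro h0
  set ℓ := Real.log Y with hℓ
  set β := s.re with hβ
  set γ := s.im with hγ
  have hℓ0 : 0 < ℓ := by linarith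
  have hβ1 : β < 1 := by
    by_contra h
    exact riemannZeta_ne_zero_of_one_le_re (not_lt.mp h) h0
  have hw : 1 / (23 * ℓ) ≤ 0.0015 := by
    rw [div_le_iff₀ (by positivity)]; linarith
  have hγ1 : 0.99 ≤ γ := by
    have h1 := re_le_norm_sub_one_of_zero (by linarith) hs1 h0
    have h2 : β ^ 2 ≤ ‖s - 1‖ ^ 2 := pow_le_pow_left₀ (by linarith) h1 2
    rw [Complex.sq_norm, Complex.normSq_apply] at h2
    simp only [sub_re, one_re, sub_im, one_im, sub_zero, ← hβ, ← hγ] at h2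
    nlinarith
  rw [abs_of_nonneg hpos] at hsY
  set ε : ℝ := 1 / (6 * ℓ) with hε
  have hε0 : 0 < ε := by positivity
  have hε1 : ε ≤ 0.0056 := by
    rw [hε, div_le_iff₀ (by positivity)]; linarith
  have hεℓ : 1 / ε = 6 * ℓ := by rw [hε, one_div_one_div]
  set σ : ℝ := 1 + ε with hσ
  have c1 := (re_logDeriv_zeta_ge (σ := σ) (t := γ) (Y := Y) (by linarith) (by linarith)
    hγ1 (by linarith)).2 (σ - β) (by linarith) (by linarith) (by
      convert h0 using 2
      apply Complex.ext <;> simp [hβ, hγ])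
  have c2 := (re_logDeriv_zeta_ge (σ := σ) (t := 2 * γ) (Y := Y) (by linarith) (by linarith)
    (by linarith) (by linarith)).1
  have c3 := (re_logDeriv_zeta_ge (σ := σ) (t := 3 * γ) (Y := Y) (by linarith) (by linarith)
    (by linarith) (by linarith)).1
  have c0 := neg_logDeriv_zeta_le (σ := σ) (by linarith) (by linarith)
  have h := zeta_combination_nonneg (σ := σ) (by linarith) γ
  simp only [neg_div, neg_re] at h c0
  rw [← hℓ] at c1 c2 c3
  have e1 : σ - 1 = ε := by rw [hσ]; ring
  rw [e1, hεℓ] at c0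
  set d := σ - β with hd
  have hd0 : 0 < d := by linarith
  have hd2 : d ≤ ε + 1 / (23 * ℓ) := by linarith
  have hd1 : d ≤ 0.0071 := by linarith
  have hdd : 1 / d ≤ 37.85 / 8 * ℓ := by
    linarith
  have hd3 : (ε + 1 / (23 * ℓ)) * ℓ = 1 / 6 + 1 / 23 := by
    rw [hε]; field_simp
  rw [div_le_iff₀ hd0] at hdd
  nlinarith

end

/-! ### The logarithmic derivative in the zero-free region -/

section

open Complex Metric

/-- Bound for the logarithmic derivative of a non-vanishing function on a disc
(Borel–Carathéodory followed by Cauchy's estimate). -/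
lemma norm_logDeriv_le {f : ℂ → ℂ} {R A ρ : ℝ} (hA : 0 < A) (hρ : 0 ≤ ρ) (hρR : ρ < R)
    (hf : DifferentiableOn ℂ f (ball 0 R)) (h0 : ∀ z ∈ ball (0 : ℂ) R, f z ≠ 0)
    (hb : ∀ z ∈ ball (0 : ℂ) R, ‖f z‖ ≤ Real.exp A * ‖f 0‖) {z : ℂ} (hz : ‖z‖ ≤ ρ) :
    ‖deriv f z / f z‖ ≤ 4 * A * (R + ρ) / (R - ρ) ^ 2 := by
  have hR : 0 < R := by linarith
  obtain ⟨h, hd, he⟩ := exists_log_on_ball hR hf h0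
  have h0m : (0 : ℂ) ∈ ball (0 : ℂ) R := mem_ball_self hR
  set g : ℂ → ℂ := fun w => h w - h 0 with hg
  have hgd : DifferentiableOn ℂ g (ball 0 R) := hd.sub_const _
  have hgre : Set.MapsTo g (ball 0 R) {z | z.re ≤ A} := by
    intro w hw
    have h1 := hb w hw
    rw [he w hw, he 0 h0m, Complex.norm_exp, Complex.norm_exp, ← Real.exp_add,
      Real.exp_le_exp] at h1
    simp only [hg, Set.mem_ofPred_eq, sub_re]
    linarith
  have hzR : z ∈ ball (0 : ℂ) R := by rw [mem_ball_zero_iff]; linarith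
  have hlog : deriv f z / f z = deriv g z := by
    have h1 : f =ᶠ[nhds z] fun w => exp (h w) := by
      filter_upwards [isOpen_ball.mem_nhds hzR] with w hw using he w hw
    have h2 := (hd.differentiableAt (isOpen_ball.mem_nhds hzR)).hasDerivAt
    rw [h1.deriv_eq, h2.cexp.deriv, he z hzR, (h2.sub_const (h 0)).deriv]
    field_simp [exp_ne_zero]
  rw [hlog]
  have hδ : 0 < (R - ρ) / 2 := by linarith
  have hsub : ∀ w ∈ closedBall z ((R - ρ) / 2), ‖w‖ ≤ (R + ρ) / 2 := by
    intro w hw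
    rw [mem_closedBall_iff_norm] at hw
    have := norm_add_le (w - z) z
    rw [sub_add_cancel] at this
    linarith
  have hmain := Complex.norm_deriv_le_of_forall_mem_sphere_norm_le (c := z) (f := g)
    (C := 2 * A * (R + ρ) / (R - ρ)) hδ
    (by
      refine DifferentiableOn.diffContOnCl ?_
      rw [closure_ball _ hδ.ne']
      refine hgd.mono fun w hw => ?_
      rw [mem_ball_zero_iff]
      have := hsub w hw
      linarith)
    (by
      intro w hw
      have h1 := hsub w (sphere_subset_closedBall hw)
      have h2 := Complex.borelCaratheodory_zero (z := w) hA hgd hgre hR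
        (by rw [mem_ball_zero_iff]; linarith) (by simp [hg])
      refine h2.trans ?_
      rw [div_le_div_iff₀ (by linarith) (by linarith)]
      have h3 : ‖w‖ * (R - ρ) ≤ (R + ρ) * (R - ‖w‖) := by nlinarith
      nlinarith)
  refine hmain.trans (le_of_eq ?_)
  have : R - ρ ≠ 0 := by linarith
  field_simp
  ring

/-- The zero-free region for `(s - 1) ζ(s)`, where the pole needs no exception. -/
lemma zeta1_ne_zero_region {Y : ℕ} (hY : 29.8 ≤ Real.log Y) {s : ℂ}
    (hs : 1 - 1 / (23 * Real.log Y) ≤ s.re) (hsY : 3 * |s.im| + 2 ≤ Y) :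
    riemannZeta₁ s ≠ 0 := by
  by_cases h1 : s = 1
  · rw [h1, riemannZeta₁_one]; exact one_ne_zero
  · rw [zeta1_eq_mul h1]
    exact mul_ne_zero (sub_ne_zero.mpr h1) (riemannZeta_ne_zero_region hY h1 hs hsY)

/-- Bound for `ζ'/ζ + 1/(s-1)` inside the zero-free region. -/
theorem norm_logDeriv_zeta1_le {Y : ℕ} (hY : 29.8 ≤ Real.log Y) {s : ℂ}
    (hs : 1 - 1 / (35 * Real.log Y) ≤ s.re) (hs' : s.re ≤ 1 + 1 / (23 * Real.log Y))
    (hsY : 3 * |s.im| + 3 ≤ Y) :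
    ‖deriv riemannZeta₁ s / riemannZeta₁ s‖ ≤ 4580 * Real.log Y ^ 2 := by
  have hYpos : (0 : ℝ) < Y := by have := abs_nonneg s.im; linarith
  have hYexp : Real.exp (Real.log Y) = Y := Real.exp_log hYpos
  set ℓ := Real.log Y with hℓ
  have hℓ0 : 0 < ℓ := by linarith
  set a : ℝ := 1 / (23 * ℓ) with ha
  have ha0 : 0 < a := by positivity
  have ha1 : a ≤ 0.0015 := by rw [ha, div_le_iff₀ (by positivity)]; linarith
  set c : ℂ := 1 + a + s.im * I with hc
  have hcre : c.re = 1 + a := by simp [hc]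
  have hcim : c.im = s.im := by simp [hc]
  set f : ℂ → ℂ := fun z => riemannZeta₁ (c + z) with hf
  have hball : ∀ z ∈ ball (0 : ℂ) (2 * a), 1 - a ≤ (c + z).re ∧ |(c + z).im| ≤ |s.im| + 2 * a := by
    intro z hz
    rw [mem_ball_zero_iff] at hz
    have h1 := (abs_le.mp (Complex.abs_re_le_norm z)).1
    have h2 := Complex.abs_im_le_norm z
    rw [add_re, add_im, hcre, hcim]
    refine ⟨by linarith, (abs_add_le _ _).trans (by linarith)⟩
  have hc1 : a ≤ ‖c - 1‖ := by
    have := (le_abs_self _).trans (Complex.abs_re_le_norm (c - 1))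
    simpa [hcre] using this
  have hcne : c ≠ 1 := by rintro h; rw [h] at hc1; simp at hc1; linarith
  have hfc : ‖c - 1‖ * (a / (1 + a)) ≤ ‖f 0‖ := by
    simp only [hf, add_zero]
    rw [zeta1_eq_mul hcne, norm_mul]
    gcongr
    have := le_norm_zeta (s := c) (by rw [hcre]; linarith)
    rwa [hcre, add_sub_cancel_left] at this
  have hEY : 23 * ℓ + 3.2 ≤ 0.01 * Y := by
    have h1 := Real.pow_div_factorial_le_exp ℓ hℓ0.le 5
    rw [hYexp] at h1
    norm_num [Nat.factorial] at h1
    have h2 : (29.8 : ℝ) ^ 4 ≤ ℓ ^ 4 := pow_le_pow_left₀ (by norm_num) hY 4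
    nlinarith
  have hE6 : 24 * ℓ ≤ Real.exp (0.6 * ℓ) := by
    have h1 := Real.pow_div_factorial_le_exp (0.6 * ℓ) (show 0 ≤ 0.6 * ℓ by positivity) 3
    refine le_trans ?_ h1
    norm_num [Nat.factorial]
    have h2 : (29.8 : ℝ) ^ 2 ≤ ℓ ^ 2 := pow_le_pow_left₀ (by norm_num) hY 2
    nlinarith
  have hbd : ∀ z ∈ ball (0 : ℂ) (2 * a), ‖f z‖ ≤ Real.exp (1.6 * ℓ) * ‖f 0‖ := by
    intro z hz
    obtain ⟨h1, h2⟩ := hball z hz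
    rw [mem_ball_zero_iff] at hz
    have h3 : ‖f z‖ ≤ 1 + ‖c + z - 1‖ * (1 + ‖c + z‖ / (c + z).re) :=
      norm_zeta1_le (by linarith)
    have h4 : ‖c + z - 1‖ ≤ 3 * ‖c - 1‖ := by
      have := norm_add_le (c - 1) z
      rw [show c - 1 + z = c + z - 1 by ring] at this
      linarith
    have h5 : ‖c + z‖ ≤ Y / 3 + 0.01 := by
      have e1 := norm_add_le c z
      have e2 : ‖c‖ ≤ |c.re| + |c.im| := Complex.norm_le_abs_re_add_abs_im c
      rw [hcre, hcim, abs_of_pos (by linarith)] at e2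
      linarith
    have h6 : 1 + ‖c + z‖ / (c + z).re ≤ 1.1 + 1.003 * Y / 3 := by
      have : ‖c + z‖ / (c + z).re ≤ (Y / 3 + 0.01) / 0.9985 :=
        div_le_div₀ (by positivity) h5 (by norm_num) (by linarith)
      have e : (Y / 3 + 0.01) / 0.9985 ≤ 0.1 + 1.003 * (Y:ℝ) / 3 := by
        rw [div_le_iff₀ (by norm_num)]; linarith
      linarith
    have h7 : ‖f z‖ ≤ 1 + 3 * ‖c - 1‖ * (1.1 + 1.003 * Y / 3) :=
      by
      have hre0 : 0 < (c + z).re := by linarith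
      exact h3.trans (by gcongr)
    have h8 : (1 : ℝ) ≤ ‖c - 1‖ * (23 * ℓ) := by
      have : a * (23 * ℓ) = 1 := by rw [ha]; field_simp
      nlinarith
    have h9 : ‖f z‖ ≤ ‖c - 1‖ * (1.02 * Y) := by
      have : 0 < ‖c - 1‖ := by linarith
      nlinarith
    refine h9.trans ?_
    have h10 : 1.02 * (Y : ℝ) ≤ Real.exp (1.6 * ℓ) * (a / (1 + a)) := by
      have e1 : Real.exp (1.6 * ℓ) = Y * Real.exp (0.6 * ℓ) := by
        rw [← hYexp, ← Real.exp_add]; congr 1; ring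
      have e2 : a / (1 + a) = 1 / (23 * ℓ + 1) := by
        rw [ha]; field_simp
      rw [e1, e2, mul_one_div, le_div_iff₀ (by positivity)]
      have e3 : 1.02 * (23 * ℓ + 1) ≤ Real.exp (0.6 * ℓ) := by linarith
      nlinarith
    calc ‖c - 1‖ * (1.02 * Y) ≤ ‖c - 1‖ * (Real.exp (1.6 * ℓ) * (a / (1 + a))) := by gcongr
      _ = Real.exp (1.6 * ℓ) * (‖c - 1‖ * (a / (1 + a))) := by ring
      _ ≤ _ := by gcongr
  set η : ℝ := 1 / (35 * ℓ) with hη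
  have hηa : η < a := by
    rw [hη, ha]; apply one_div_lt_one_div_of_lt <;> linarith
  have hη0 : 0 < η := by positivity
  have hmain := norm_logDeriv_le (f := f) (R := 2 * a) (A := 1.6 * ℓ) (ρ := a + η) (z := s - c)
    (by positivity) (by positivity) (by linarith)
    (by
      intro z _
      exact ((differentiable_riemannZeta₁ (c + z)).comp z
        (differentiableAt_id.const_add c)).differentiableWithinAt)
    (fun z hz => zeta1_ne_zero_region hY (hball z hz).1 (by linarith [(hball z hz).2]))
    hbd (by
      have e : s - c = ((s.re - 1 - a : ℝ) : ℂ) := by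
        apply Complex.ext <;> simp [hcre, hcim]
        ring
      rw [e, Complex.norm_real, Real.norm_eq_abs, abs_le]
      constructor <;> linarith)
  have e1 : deriv f (s - c) = deriv riemannZeta₁ s := by
    simp only [hf]
    rw [deriv_comp_const_add, add_sub_cancel]
  have e2 : f (s - c) = riemannZeta₁ s := by simp [hf]
  rw [e1, e2] at hmain
  refine hmain.trans ?_
  have e3 : 4 * (1.6 * ℓ) * (2 * a + (a + η)) / (2 * a - (a + η)) ^ 2
      = 6.4 * (128 * 805 / 144) * ℓ ^ 2 := by
    have e4 : 2 * a - (a + η) = 12 / (805 * ℓ) := by rw [ha, hη]; field_simp; norm_num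
    have e5 : 2 * a + (a + η) = 128 / (805 * ℓ) := by rw [ha, hη]; field_simp; norm_num
    rw [e4, e5]; field_simp; norm_num
  rw [e3]
  nlinarith [sq_nonneg ℓ]

end

/-! ### The Gaussian kernel and the shift of contour -/

section

open Complex Metric MeasureTheory

/-- The kernel `exp (τ² w² / 2 + u w)`; on vertical lines it is a Gaussian of width `1 / τ`, and
its inverse Laplace transform is a Gaussian of width `τ` centred at `u`. -/
noncomputable def gk (τ u : ℝ) (w : ℂ) : ℂ := exp (τ ^ 2 * w ^ 2 / 2 + w * u)

/-- The unnormalised Gaussian of width `τ`. -/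
noncomputable def gauss (τ x : ℝ) : ℝ := Real.exp (-(x ^ 2 / (2 * τ ^ 2)))

lemma differentiable_gk (τ u : ℝ) : Differentiable ℂ (gk τ u) := by
  unfold gk; fun_prop

lemma gk_eq (τ u ε y : ℝ) : gk τ u (ε + y * I)
    = exp (-(τ ^ 2 / 2 : ℂ) * y ^ 2 + (τ ^ 2 * ε + u) * I * y + (τ ^ 2 * ε ^ 2 / 2 + ε * u)) := by
  unfold gk
  congr 1
  linear_combination (τ ^ 2 * y ^ 2 / 2 : ℂ) * I_sq

lemma norm_gk (τ u ε y : ℝ) : ‖gk τ u (ε + y * I)‖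
    = Real.exp (τ ^ 2 * ε ^ 2 / 2 + ε * u) * Real.exp (-(τ ^ 2 / 2) * y ^ 2) := by
  rw [gk_eq, Complex.norm_exp, ← Real.exp_add]
  congr 1
  have e : (-(τ ^ 2 / 2 : ℂ) * y ^ 2 + (τ ^ 2 * ε + u) * I * y + (τ ^ 2 * ε ^ 2 / 2 + ε * u))
      = ((-(τ ^ 2 / 2) * y ^ 2 + (τ ^ 2 * ε ^ 2 / 2 + ε * u) : ℝ) : ℂ)
        + (((τ ^ 2 * ε + u) * y : ℝ) : ℂ) * I := by
    push_cast; ring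
  rw [e, add_re, ofReal_re, re_ofReal_mul, I_re]
  ring

lemma integrable_gk {τ : ℝ} (hτ : 0 < τ) (u ε : ℝ) :
    Integrable fun y : ℝ => gk τ u (ε + y * I) := by
  simp_rw [gk_eq]
  refine integrable_cexp_quadratic ?_ _ _
  have : (τ ^ 2 / 2 : ℂ) = ((τ ^ 2 / 2 : ℝ) : ℂ) := by push_cast; rfl
  rw [this, ofReal_re]; positivity

lemma integral_gk {τ : ℝ} (hτ : 0 < τ) (u ε : ℝ) :
    ∫ y : ℝ, gk τ u (ε + y * I) = ((√(Real.pi / (τ ^ 2 / 2)) * gauss τ u : ℝ) : ℂ) := by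
  have hτ' : (τ : ℂ) ≠ 0 := by exact_mod_cast hτ.ne'
  have e0 : (-(τ ^ 2 / 2 : ℂ)) = ((-(τ ^ 2 / 2) : ℝ) : ℂ) := by push_cast; rfl
  simp_rw [gk_eq]
  rw [integral_cexp_quadratic (by rw [e0, ofReal_re]; simp; positivity)]
  rw [ofReal_mul, gauss, Real.sqrt_eq_rpow, ofReal_cpow (by positivity), ofReal_exp]
  congr 2
  · push_cast; ring
  · push_cast; ring
  · push_cast
    field_simp
    linear_combination ((τ ^ 2 * ε + u : ℂ) ^ 2 * 4) * I_sq

lemma gk_mul_exp (τ u v : ℝ) (w : ℂ) : gk τ u w * exp (-w * v) = gk τ (u - v) w := by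
  unfold gk
  rw [← exp_add]
  congr 1
  push_cast; ring

lemma integral_norm_gk (τ u ε : ℝ) :
    ∫ y : ℝ, ‖gk τ u (ε + y * I)‖
      = Real.exp (τ ^ 2 * ε ^ 2 / 2 + ε * u) * √(Real.pi / (τ ^ 2 / 2)) := by
  simp_rw [norm_gk]
  rw [integral_const_mul, integral_gaussian]

/-- The contribution of the pole of `ζ'/ζ` at `1`. -/
lemma integral_gk_div {τ ε : ℝ} (hτ : 0 < τ) (hε : 0 < ε) (u : ℝ) :
    ∫ y : ℝ, gk τ u (ε + y * I) * (1 / (ε + y * I))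
      = ((√(Real.pi / (τ ^ 2 / 2)) * ∫ v in Set.Ioi (0 : ℝ), gauss τ (u - v) : ℝ) : ℂ) := by
  have h1 : ∀ y : ℝ, gk τ u (ε + y * I) * (1 / (ε + y * I))
      = ∫ v in Set.Ioi (0 : ℝ), gk τ u (ε + y * I) * exp (-(ε + y * I : ℂ) * v) := by
    intro y
    rw [integral_const_mul, integral_exp_mul_complex_Ioi (by simpa using hε), ofReal_zero, mul_zero, exp_zero,
      neg_div_neg_eq]
  simp_rw [h1]
  rw [integral_integral_swap]
  · simp_rw [gk_mul_exp, integral_gk hτ]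
    rw [← integral_const_mul]
    exact integral_ofReal
  · have hg := ((integrable_gk hτ u ε).norm).mul_prod (exp_neg_integrableOn_Ioi 0 hε)
    refine hg.mono' (Continuous.aestronglyMeasurable ?_) (Filter.Eventually.of_forall ?_)
    · unfold gk Function.uncurry
      fun_prop
    · rintro ⟨y, v⟩
      simp only [Function.uncurry, norm_mul, Complex.norm_exp]
      apply le_of_eq
      congr 2
      simp

/-- The contribution of the Dirichlet series of `-ζ'/ζ`. -/
lemma hasSum_integral_gk {τ ε : ℝ} (hτ : 0 < τ) (hε : 0 < ε) (u : ℝ) :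
    HasSum (fun n : ℕ => √(Real.pi / (τ ^ 2 / 2)) *
        (ArithmeticFunction.vonMangoldt n / n * gauss τ (u - Real.log n)))
      (∫ y : ℝ, gk τ u (ε + y * I) *
        (-deriv riemannZeta (1 + (ε + y * I)) / riemannZeta (1 + (ε + y * I)))).re := by
  have hre : ∀ y : ℝ, 1 < (1 + (ε + y * I) : ℂ).re := by intro y; simp; linarith
  set F : ℕ → ℝ → ℂ := fun n y => gk τ u (ε + y * I) *
    LSeries.term (fun m => ((ArithmeticFunction.vonMangoldt m : ℝ) : ℂ)) (1 + (ε + y * I)) n with hF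
  have hFe : ∀ n y, F n y = (ArithmeticFunction.vonMangoldt n / n : ℝ) *
      gk τ (u - Real.log n) (ε + y * I) := by
    intro n y
    rcases Nat.eq_zero_or_pos n with rfl | hn
    · simp [hF]
    have hn0 : (n : ℂ) ≠ 0 := by exact_mod_cast hn.ne'
    simp only [hF]
    rw [LSeries.term_of_ne_zero hn.ne', Complex.cpow_add _ _ hn0, cpow_one, ← gk_mul_exp,
      Complex.cpow_def_of_ne_zero hn0, neg_mul, exp_neg, natCast_log, mul_comm (Complex.log n)]
    push_cast
    field_simp
  have hFi : ∀ n, Integrable (F n) := by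
    intro n
    have : F n = fun y : ℝ => ((ArithmeticFunction.vonMangoldt n / n : ℝ) : ℂ) *
      gk τ (u - Real.log n) (ε + y * I) := funext fun y => hFe n y
    rw [this]
    exact (integrable_gk hτ _ ε).const_mul _
  have hFn : ∀ n, ∫ y, ‖F n y‖
      = (Real.exp (τ ^ 2 * ε ^ 2 / 2 + ε * u) * √(Real.pi / (τ ^ 2 / 2))) *
        ‖LSeries.term (fun m => ((ArithmeticFunction.vonMangoldt m : ℝ) : ℂ)) (1 + ε) n‖ := by
    intro n
    rw [← integral_norm_gk, ← integral_mul_const]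
    congr 1
    ext y
    simp only [hF, norm_mul]
    congr 1
    rw [LSeries.norm_term_eq, LSeries.norm_term_eq]
    simp
  have hsum : Summable fun n => ∫ y, ‖F n y‖ := by
    simp_rw [hFn]
    refine Summable.mul_left _ ?_
    exact (ArithmeticFunction.LSeriesSummable_vonMangoldt (s := 1 + ε) (by simpa using hε)).norm
  have h := hasSum_integral_of_summable_integral_norm hFi hsum
  have e1 : ∀ y : ℝ, ∑' n, F n y = gk τ u (ε + y * I) *
        (-deriv riemannZeta (1 + (ε + y * I)) / riemannZeta (1 + (ε + y * I))) := by
    intro y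
    rw [← ArithmeticFunction.LSeries_vonMangoldt_eq_deriv_riemannZeta_div (hre y), LSeries,
      tsum_mul_left]
  simp_rw [e1] at h
  convert Complex.hasSum_re h using 2 with n
  simp_rw [hFe]
  rw [integral_const_mul, integral_gk hτ, ← ofReal_mul, ofReal_re]
  ring

lemma gauss_tail_le {b T y : ℝ} (hb : 0 ≤ b) (hT : 0 ≤ T) (hy : T ≤ y) :
    Real.exp (-b * y ^ 2) ≤ Real.exp (-b * T ^ 2) * Real.exp (-b * (y - T) ^ 2) := by
  rw [← Real.exp_add, Real.exp_le_exp]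
  nlinarith [mul_nonneg hb (mul_nonneg hT (sub_nonneg.mpr hy))]

lemma integral_gauss_tail_le {b T : ℝ} (hb : 0 < b) (hT : 0 ≤ T) :
    ∫ y in Set.Ioi T, Real.exp (-b * y ^ 2) ≤ Real.exp (-b * T ^ 2) * √(Real.pi / b) := by
  have hi : Integrable fun y : ℝ => Real.exp (-b * T ^ 2) * Real.exp (-b * (y - T) ^ 2) :=
    ((integrable_exp_neg_mul_sq hb).comp_sub_right T).const_mul _
  calc ∫ y in Set.Ioi T, Real.exp (-b * y ^ 2)
      ≤ ∫ y in Set.Ioi T, Real.exp (-b * T ^ 2) * Real.exp (-b * (y - T) ^ 2) :=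
        setIntegral_mono_on (integrable_exp_neg_mul_sq hb).integrableOn hi.integrableOn
          measurableSet_Ioi fun y hy => gauss_tail_le hb.le hT (le_of_lt hy)
    _ ≤ ∫ y, Real.exp (-b * T ^ 2) * Real.exp (-b * (y - T) ^ 2) :=
        setIntegral_le_integral hi (Filter.Eventually.of_forall fun y => by positivity)
    _ = _ := by
        rw [integral_const_mul, integral_sub_right_eq_self (fun y => Real.exp (-b * y ^ 2)),
          integral_gaussian]

/-- Moving the part `|Im w| ≤ T` of a vertical line from `Re w = ε` to `Re w = -η`. -/
lemma norm_integral_gk_mul_le {Q : ℂ → ℂ} {τ u ε η T K M : ℝ} (hτ : 0 < τ) (hu : 0 ≤ u)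
    (hε : 0 < ε) (hη : 0 < η) (hT : 0 < T) (hK0 : 0 ≤ K) (hM0 : 0 ≤ M)
    (hQ : DifferentiableOn ℂ Q (Set.uIcc (-η) ε ×ℂ Set.uIcc (-T) T))
    (hQc : Continuous fun y : ℝ => Q (ε + y * I))
    (hM : ∀ w : ℂ, -η ≤ w.re → w.re ≤ ε → |w.im| ≤ T → ‖Q w‖ ≤ M)
    (hK : ∀ y : ℝ, ‖Q (ε + y * I)‖ ≤ K) :
    ‖∫ y : ℝ, gk τ u (ε + y * I) * Q (ε + y * I)‖ ≤
      2 * K * (Real.exp (τ ^ 2 * (ε + η) ^ 2 / 2 + ε * u) * Real.exp (-(τ ^ 2 / 2) * T ^ 2)) *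
        √(Real.pi / (τ ^ 2 / 2))
      + M * Real.exp (τ ^ 2 * η ^ 2 / 2 - η * u) * √(Real.pi / (τ ^ 2 / 2))
      + 2 * (ε + η) * M *
        (Real.exp (τ ^ 2 * (ε + η) ^ 2 / 2 + ε * u) * Real.exp (-(τ ^ 2 / 2) * T ^ 2)) := by
  set b : ℝ := τ ^ 2 / 2 with hb
  have hb0 : 0 < b := by positivity
  set E : ℝ := Real.exp (τ ^ 2 * (ε + η) ^ 2 / 2 + ε * u) with hE
  set E' : ℝ := Real.exp (τ ^ 2 * η ^ 2 / 2 - η * u) with hE'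
  set f : ℂ → ℂ := fun w => gk τ u w * Q w with hf
  have hgauss : Integrable fun y : ℝ => Real.exp (-b * y ^ 2) := integrable_exp_neg_mul_sq hb0
  have hbound : ∀ y : ℝ, ‖f (ε + y * I)‖ ≤ K * E * Real.exp (-b * y ^ 2) := by
    intro y
    simp only [hf]
    rw [norm_mul, norm_gk]
    have : Real.exp (τ ^ 2 * ε ^ 2 / 2 + ε * u) ≤ E := by
      rw [hE, Real.exp_le_exp]
      have : ε ^ 2 ≤ (ε + η) ^ 2 := pow_le_pow_left₀ hε.le (by linarith) 2
      gcongr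
    calc _ ≤ E * Real.exp (-(τ ^ 2 / 2) * y ^ 2) * K := by gcongr; exact hK y
      _ = _ := by rw [hb]; ring
  have hcont : Continuous fun y : ℝ => f (ε + y * I) :=
    ((differentiable_gk τ u).continuous.comp (by fun_prop)).mul hQc
  have hint : Integrable fun y : ℝ => f (ε + y * I) :=
    (hgauss.const_mul (K * E)).mono' hcont.aestronglyMeasurable (Filter.Eventually.of_forall hbound)
  have hsplit : ∫ y : ℝ, f (ε + y * I) = (∫ y in Set.Iic (-T), f (ε + y * I))
      + (∫ y in (-T)..T, f (ε + y * I)) + ∫ y in Set.Ioi T, f (ε + y * I) := by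
    rw [← intervalIntegral.integral_Iic_sub_Iic hint.integrableOn hint.integrableOn,
      add_sub_cancel, intervalIntegral.integral_Iic_add_Ioi hint.integrableOn hint.integrableOn]
  have hright : ‖∫ y in Set.Ioi T, f (ε + y * I)‖ ≤ K * E * (Real.exp (-b * T ^ 2) * √(Real.pi / b)) := by
    refine (norm_integral_le_of_norm_le (hgauss.const_mul (K * E)).integrableOn
      (Filter.Eventually.of_forall hbound)).trans ?_
    rw [integral_const_mul]
    exact mul_le_mul_of_nonneg_left (integral_gauss_tail_le hb0 hT.le) (by positivity)
  have hleft : ‖∫ y in Set.Iic (-T), f (ε + y * I)‖ ≤ K * E * (Real.exp (-b * T ^ 2) * √(Real.pi / b)) := by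
    refine (norm_integral_le_of_norm_le (hgauss.const_mul (K * E)).integrableOn
      (Filter.Eventually.of_forall hbound)).trans ?_
    rw [integral_const_mul]
    refine mul_le_mul_of_nonneg_left ?_ (by positivity)
    have := integral_comp_neg_Ioi T (fun y => Real.exp (-b * y ^ 2))
    simp only [neg_sq] at this
    rw [← this]
    exact integral_gauss_tail_le hb0 hT.le
  have hfd : DifferentiableOn ℂ f (Set.uIcc (-η) ε ×ℂ Set.uIcc (-T) T) :=
    (differentiable_gk τ u).differentiableOn.mul hQ
  have hrect := Complex.integral_boundary_rect_eq_zero_of_differentiableOn f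
    (⟨-η, -T⟩ : ℂ) (⟨ε, T⟩ : ℂ) hfd
  simp only at hrect
  have hhor : ∀ t : ℝ, |t| = T → ‖∫ x in (-η)..ε, f (x + t * I)‖
      ≤ M * (E * Real.exp (-b * T ^ 2)) * (ε + η) := by
    intro t ht
    have := intervalIntegral.norm_integral_le_of_norm_le_const (a := -η) (b := ε)
      (C := M * (E * Real.exp (-b * T ^ 2))) (f := fun x : ℝ => f (x + t * I)) (by
        intro x hx
        rw [Set.uIoc_of_le (by linarith)] at hx
        simp only [hf]
        rw [norm_mul, norm_gk, mul_comm]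
        have h1 : ‖Q (x + t * I)‖ ≤ M := hM _ (by simpa using hx.1.le) (by simpa using hx.2)
          (by simp [ht])
        have h2 : t ^ 2 = T ^ 2 := by rw [← sq_abs, ht]
        have h3 : Real.exp (τ ^ 2 * x ^ 2 / 2 + x * u) ≤ E := by
          rw [hE, Real.exp_le_exp]
          have h4 : x ^ 2 ≤ (ε + η) ^ 2 := sq_le_sq' (by linarith [hx.1]) (by linarith [hx.2])
          have h5 := hx.2
          gcongr
        rw [h2]
        gcongr)
    rwa [sub_neg_eq_add, abs_of_pos (by linarith)] at this
  have hvert : ‖∫ y in (-T)..T, f ((-η : ℝ) + y * I)‖ ≤ M * E' * √(Real.pi / b) := by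
    have hb2 : ∀ y ∈ Set.uIoc (-T) T, ‖f ((-η : ℝ) + y * I)‖ ≤ M * E' * Real.exp (-b * y ^ 2) := by
      intro y hy
      rw [Set.uIoc_of_le (by linarith)] at hy
      simp only [hf]
      rw [norm_mul, norm_gk, mul_comm]
      have h1 : ‖Q ((-η : ℝ) + y * I)‖ ≤ M := hM _ (by simp) (by simp; linarith)
          (by simpa using abs_le.mpr ⟨hy.1.le, hy.2⟩)
      have h2 : τ ^ 2 * (-η) ^ 2 / 2 + -η * u = τ ^ 2 * η ^ 2 / 2 - η * u := by ring
      rw [h2, ← hE', mul_assoc M]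
      gcongr
    have hii : Integrable fun y : ℝ => M * E' * Real.exp (-b * y ^ 2) := hgauss.const_mul _
    calc _ ≤ ∫ y in (-T)..T, M * E' * Real.exp (-b * y ^ 2) :=
          intervalIntegral.norm_integral_le_of_norm_le (by linarith)
            (by
              refine Filter.Eventually.of_forall fun y hy => hb2 y ?_
              rwa [Set.uIoc_of_le (by linarith)]) hii.intervalIntegrable
      _ ≤ ∫ y, M * E' * Real.exp (-b * y ^ 2) := by
          rw [intervalIntegral.integral_of_le (by linarith)]
          exact setIntegral_le_integral hii (Filter.Eventually.of_forall fun y => by positivity)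
      _ = _ := by rw [integral_const_mul, integral_gaussian]
  have hmid : ‖∫ y in (-T)..T, f (ε + y * I)‖
      ≤ M * E' * √(Real.pi / b) + 2 * (M * (E * Real.exp (-b * T ^ 2)) * (ε + η)) := by
    have e : I • ∫ y in (-T)..T, f (ε + y * I) = I • (∫ y in (-T)..T, f ((-η : ℝ) + y * I))
        + (∫ x in (-η)..ε, f (x + T * I)) - ∫ x in (-η)..ε, f (x + (-T : ℝ) * I) := by
      linear_combination hrect
    have e2 : ‖∫ y in (-T)..T, f (ε + y * I)‖ = ‖I • ∫ y in (-T)..T, f (ε + y * I)‖ := by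
      simp
    have e3 : ‖I • ∫ y in (-T)..T, f ((-η : ℝ) + y * I)‖ ≤ M * E' * √(Real.pi / b) := by
      rw [norm_smul, norm_I, one_mul]; exact hvert
    rw [e2, e]
    refine (norm_sub_le _ _).trans ?_
    have := norm_add_le (I • ∫ y in (-T)..T, f ((-η : ℝ) + y * I)) (∫ x in (-η)..ε, f (x + T * I))
    have h1 := hhor T (abs_of_pos hT)
    have h2 := hhor (-T) (by rw [abs_neg, abs_of_pos hT])
    linarith
  change ‖∫ y : ℝ, f (ε + y * I)‖ ≤ _
  rw [hsplit]
  refine (norm_add_le _ _).trans ((add_le_add (norm_add_le _ _) le_rfl).trans ?_)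
  nlinarith

end

/-! ### The Gaussian-weighted sum of the von Mangoldt function -/

section

open Complex Metric MeasureTheory

/-- The Dirichlet series `∑ Λ(n) n^(-1-ε)` is dominated by `1 / ε + O(ε)`. -/
lemma tsum_vonMangoldt_le {ε : ℝ} (hε : 0 < ε) (hε' : ε ≤ 0.1) :
    Summable (fun n : ℕ => ArithmeticFunction.vonMangoldt n * (n : ℝ) ^ (-(1 + ε))) ∧
    ∑' n : ℕ, ArithmeticFunction.vonMangoldt n * (n : ℝ) ^ (-(1 + ε)) ≤ 1 / ε + 8.4 * ε := by
  have hre : 1 < (((1 + ε : ℝ)) : ℂ).re := by rw [ofReal_re]; linarith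
  have hs := ArithmeticFunction.LSeriesSummable_vonMangoldt hre
  have hF := ArithmeticFunction.LSeries_vonMangoldt_eq_deriv_riemannZeta_div hre
  have hterm : ∀ n : ℕ, LSeries.term (fun m => ((ArithmeticFunction.vonMangoldt m : ℝ) : ℂ))
      ((1 + ε : ℝ) : ℂ) n
      = ((ArithmeticFunction.vonMangoldt n * (n : ℝ) ^ (-(1 + ε)) : ℝ) : ℂ) := by
    intro n
    rcases Nat.eq_zero_or_pos n with rfl | hn
    · simp
    rw [LSeries.term_of_ne_zero hn.ne', Real.rpow_neg (by positivity), ofReal_mul, ofReal_inv,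
      ofReal_cpow (by positivity), div_eq_mul_inv]
    simp
  have hs' : HasSum (fun n : ℕ => ArithmeticFunction.vonMangoldt n * (n : ℝ) ^ (-(1 + ε)))
      (-deriv riemannZeta ((1 + ε : ℝ) : ℂ) / riemannZeta ((1 + ε : ℝ) : ℂ)).re := by
    have := Complex.hasSum_re hs.hasSum
    rw [← LSeries, hF] at this
    simpa only [hterm, ofReal_re] using this
  refine ⟨hs'.summable, ?_⟩
  rw [hs'.tsum_eq]
  have := neg_logDeriv_zeta_le (σ := 1 + ε) (by linarith) (by linarith)
  rwa [add_sub_cancel_left] at this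

lemma norm_neg_logDeriv_zeta_le {ε : ℝ} (hε : 0 < ε) (hε' : ε ≤ 0.1) (y : ℝ) :
    ‖-deriv riemannZeta (1 + (ε + y * I)) / riemannZeta (1 + (ε + y * I))‖
      ≤ 1 / ε + 8.4 * ε := by
  have hre : 1 < (1 + (ε + y * I) : ℂ).re := by simp; linarith
  obtain ⟨h1, h2⟩ := tsum_vonMangoldt_le hε hε'
  rw [← ArithmeticFunction.LSeries_vonMangoldt_eq_deriv_riemannZeta_div hre, LSeries]
  refine le_trans (tsum_of_norm_bounded h1.hasSum fun n => ?_) h2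
  rcases Nat.eq_zero_or_pos n with rfl | hn
  · simp
  rw [LSeries.norm_term_eq, if_neg hn.ne', Real.rpow_neg (by positivity), div_eq_mul_inv]
  simp [abs_of_nonneg ArithmeticFunction.vonMangoldt_nonneg]

/-- Smoothed explicit estimate: the Gaussian-weighted sum of `Λ(n) / n` is at least the
corresponding integral up to error terms controlled by a zero-free rectangle. -/
theorem vonMangoldt_gauss_sum_ge {τ u ε η T M : ℝ} (hτ : 0 < τ) (hu : 0 ≤ u)
    (hε : 0 < ε) (hε' : ε ≤ 0.1) (hη : 0 < η) (hT : 0 < T)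
    (hZ : ∀ w : ℂ, -η ≤ w.re → w.re ≤ ε → |w.im| ≤ T → riemannZeta₁ (1 + w) ≠ 0)
    (hM : ∀ w : ℂ, -η ≤ w.re → w.re ≤ ε → |w.im| ≤ T →
      ‖deriv riemannZeta₁ (1 + w) / riemannZeta₁ (1 + w)‖ ≤ M) :
    Summable (fun n : ℕ => ArithmeticFunction.vonMangoldt n / n * gauss τ (u - Real.log n)) ∧
    √(Real.pi / (τ ^ 2 / 2)) * (∫ v in Set.Ioi (0 : ℝ), gauss τ (u - v)) -
      (2 * (2 / ε + 8.4 * ε) *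
        (Real.exp (τ ^ 2 * (ε + η) ^ 2 / 2 + ε * u) * Real.exp (-(τ ^ 2 / 2) * T ^ 2)) *
        √(Real.pi / (τ ^ 2 / 2))
      + M * Real.exp (τ ^ 2 * η ^ 2 / 2 - η * u) * √(Real.pi / (τ ^ 2 / 2))
      + 2 * (ε + η) * M *
        (Real.exp (τ ^ 2 * (ε + η) ^ 2 / 2 + ε * u) * Real.exp (-(τ ^ 2 / 2) * T ^ 2)))
    ≤ √(Real.pi / (τ ^ 2 / 2)) *
      ∑' n : ℕ, ArithmeticFunction.vonMangoldt n / n * gauss τ (u - Real.log n) := by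
  have hJ : 0 < √(Real.pi / (τ ^ 2 / 2)) := by positivity
  set Q : ℂ → ℂ := fun w => deriv riemannZeta₁ (1 + w) / riemannZeta₁ (1 + w) with hQ
  have hre : ∀ y : ℝ, 1 < (1 + (ε + y * I) : ℂ).re := by intro y; simp; linarith
  have hne1 : ∀ y : ℝ, (1 + (ε + y * I) : ℂ) ≠ 1 := by
    intro y h
    have := hre y
    rw [h] at this
    simp at this
  have hzne : ∀ y : ℝ, riemannZeta (1 + (ε + y * I)) ≠ 0 := fun y =>
    riemannZeta_ne_zero_of_one_le_re (hre y).le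
  have hz1ne : ∀ y : ℝ, riemannZeta₁ (1 + (ε + y * I)) ≠ 0 := by
    intro y
    rw [zeta1_eq_mul (hne1 y)]
    exact mul_ne_zero (sub_ne_zero.mpr (hne1 y)) (hzne y)
  have hdZ : Differentiable ℂ (deriv riemannZeta₁) := by
    rw [← differentiableOn_univ]
    exact differentiable_riemannZeta₁.differentiableOn.deriv isOpen_univ
  have hQline : ∀ y : ℝ, Q (ε + y * I) = 1 / (ε + y * I)
      - (-deriv riemannZeta (1 + (ε + y * I)) / riemannZeta (1 + (ε + y * I))) := by
    intro y
    rw [neg_logDeriv_zeta_eq (hne1 y) (hzne y)]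
    simp only [hQ]
    rw [add_sub_cancel_left]
    ring
  have hinv : ∀ y : ℝ, ‖1 / (ε + y * I : ℂ)‖ ≤ 1 / ε := by
    intro y
    rw [norm_div, norm_one]
    refine one_div_le_one_div_of_le hε ?_
    have := (le_abs_self _).trans (Complex.abs_re_le_norm (ε + y * I : ℂ))
    simpa using this
  have hK : ∀ y : ℝ, ‖Q (ε + y * I)‖ ≤ 2 / ε + 8.4 * ε := by
    intro y
    rw [hQline]
    refine (norm_sub_le _ _).trans ?_
    have h1 := hinv y
    have h2 := norm_neg_logDeriv_zeta_le hε hε' y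
    have h3 : 2 / ε = 1 / ε + 1 / ε := by ring
    linarith
  have hQc : Continuous fun y : ℝ => Q (ε + y * I) := by
    simp only [hQ]
    exact (hdZ.continuous.comp (by fun_prop)).div
      (differentiable_riemannZeta₁.continuous.comp (by fun_prop)) hz1ne
  have hM0 : 0 ≤ M := (norm_nonneg _).trans (hM 0 (by simpa using hη.le) (by simpa using hε.le)
    (by simpa using hT.le))
  have hQd : DifferentiableOn ℂ Q (Set.uIcc (-η) ε ×ℂ Set.uIcc (-T) T) := by
    intro w hw
    rw [Complex.mem_reProdIm, Set.uIcc_of_le (by linarith), Set.uIcc_of_le (by linarith)] at hw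
    have h0 := hZ w hw.1.1 hw.1.2 (abs_le.mpr ⟨hw.2.1, hw.2.2⟩)
    have e1 : DifferentiableAt ℂ (fun w => deriv riemannZeta₁ (1 + w)) w :=
      (hdZ (1 + w)).comp w (differentiableAt_id.const_add 1)
    have e2 : DifferentiableAt ℂ (fun w => riemannZeta₁ (1 + w)) w :=
      (differentiable_riemannZeta₁ (1 + w)).comp w (differentiableAt_id.const_add 1)
    exact (e1.div e2 h0).differentiableWithinAt
  have hmain := norm_integral_gk_mul_le (K := 2 / ε + 8.4 * ε) hτ hu hε hη hT (by positivity) hM0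
    hQd hQc hM hK
  have hsum := hasSum_integral_gk hτ hε u
  have hgint := integrable_gk hτ u ε
  have hi1 : Integrable fun y : ℝ => gk τ u (ε + y * I) * Q (ε + y * I) :=
    hgint.mul_bdd (c := 2 / ε + 8.4 * ε) hQc.aestronglyMeasurable (Filter.Eventually.of_forall hK)
  have hi2 : Integrable fun y : ℝ => gk τ u (ε + y * I) * (1 / (ε + y * I)) := by
    refine hgint.mul_bdd (c := 1 / ε) (Continuous.aestronglyMeasurable ?_)
      (Filter.Eventually.of_forall hinv)
    refine continuous_const.div (by fun_prop) fun y h => ?_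
    have := congrArg Complex.re h
    simp at this
    exact hε.ne' this
  have e : ∫ y : ℝ, gk τ u (ε + y * I) *
        (-deriv riemannZeta (1 + (ε + y * I)) / riemannZeta (1 + (ε + y * I)))
      = ((√(Real.pi / (τ ^ 2 / 2)) * ∫ v in Set.Ioi (0 : ℝ), gauss τ (u - v) : ℝ) : ℂ)
        - ∫ y : ℝ, gk τ u (ε + y * I) * Q (ε + y * I) := by
    rw [← integral_gk_div hτ hε, ← integral_sub hi2 hi1]
    congr 1
    ext y
    rw [hQline]; ring
  rw [e, sub_re, ofReal_re] at hsum
  have hsum' := hsum.mul_left (√(Real.pi / (τ ^ 2 / 2)))⁻¹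
  simp_rw [← mul_assoc, inv_mul_cancel₀ hJ.ne', one_mul] at hsum'
  refine ⟨hsum'.summable, ?_⟩
  rw [← tsum_mul_left, hsum.tsum_eq]
  have := (le_abs_self _).trans (Complex.abs_re_le_norm
    (∫ y : ℝ, gk τ u (ε + y * I) * Q (ε + y * I)))
  linarith

/-- The half-line contains the half `v ≥ u` of the Gaussian centred at `u`, of mass `τ √(π / 2)`. -/
lemma integral_gauss_ge {τ u : ℝ} (hτ : 0 < τ) (hu : 0 ≤ u) :
    τ ≤ ∫ v in Set.Ioi (0 : ℝ), gauss τ (u - v) := by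
  have hb : 0 < 1 / (2 * τ ^ 2) := by positivity
  have hg : ∀ v, gauss τ (u - v) = Real.exp (-(1 / (2 * τ ^ 2)) * (v - u) ^ 2) := by
    intro v; unfold gauss; congr 1; field_simp; ring
  have hi : Integrable fun v : ℝ => Real.exp (-(1 / (2 * τ ^ 2)) * (v - u) ^ 2) :=
    (integrable_exp_neg_mul_sq hb).comp_sub_right u
  simp_rw [hg]
  have h1 : ∫ v in Set.Ioi u, Real.exp (-(1 / (2 * τ ^ 2)) * (v - u) ^ 2)
      ≤ ∫ v in Set.Ioi (0 : ℝ), Real.exp (-(1 / (2 * τ ^ 2)) * (v - u) ^ 2) :=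
    setIntegral_mono_set hi.integrableOn (Filter.Eventually.of_forall fun v => by positivity)
      (Filter.Eventually.of_forall fun v hv => lt_of_le_of_lt hu hv)
  refine le_trans ?_ h1
  have h2 := (measurePreserving_add_right volume u).setIntegral_preimage_emb
    (measurableEmbedding_addRight u)
    (fun v => Real.exp (-(1 / (2 * τ ^ 2)) * (v - u) ^ 2)) (Set.Ioi u)
  simp only [add_sub_cancel_right, Set.preimage_add_const_Ioi, sub_self] at h2
  rw [← h2, integral_gaussian_Ioi]
  have h3 : 2 * τ ≤ √(Real.pi / (1 / (2 * τ ^ 2))) := by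
    apply Real.le_sqrt_of_sq_le
    rw [div_div_eq_mul_div, div_one]
    nlinarith [Real.pi_gt_three, sq_nonneg τ]
  linarith

lemma gauss_le_one (τ x : ℝ) : gauss τ x ≤ 1 := by
  unfold gauss
  rw [Real.exp_le_one_iff]
  have : 0 ≤ x ^ 2 / (2 * τ ^ 2) := by positivity
  linarith

/-- Outside the window `|v| < h` the Gaussian is dominated by an exponential. -/
lemma gauss_le_of_le_abs {τ h v ε : ℝ} (hτ : 0 < τ) (hε : 0 ≤ ε) (hh : 0 ≤ h)
    (hετ : ε ≤ h / τ ^ 2) (hv : h ≤ |v|) :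
    gauss τ (-v) ≤ Real.exp (-(h ^ 2 / (2 * τ ^ 2))) * Real.exp (-(ε * (v - h))) := by
  unfold gauss
  rw [← Real.exp_add, Real.exp_le_exp]
  rw [le_div_iff₀ (by positivity)] at hετ
  have key : ε * (v - h) * (2 * τ ^ 2) ≤ v ^ 2 - h ^ 2 := by
    rcases le_abs.mp hv with h1 | h1
    · nlinarith [mul_le_mul_of_nonneg_right hετ (sub_nonneg.mpr h1)]
    · have h2 : ε * (v - h) * (2 * τ ^ 2) ≤ 0 := by
        have : v - h ≤ 0 := by linarith
        have h3 : 0 ≤ ε * (2 * τ ^ 2) := by positivity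
        nlinarith
      nlinarith
  have e : ε * (v - h) ≤ (v ^ 2 - h ^ 2) / (2 * τ ^ 2) := by
    rw [le_div_iff₀ (by positivity)]; exact key
  rw [sub_div] at e
  rw [neg_sq]
  linarith

/-- Upper bound for the smoothed sum when there is no prime in `(x, x e^δ)`. -/
theorem vonMangoldt_gauss_sum_le {x δ τ ε : ℝ} (hx : 1 ≤ x) (hδ : 0 < δ) (hτ : 0 < τ)
    (hε : 0 < ε) (hε' : ε ≤ 0.1) (hετ : ε ≤ (δ / 2) / τ ^ 2)
    (hno : ∀ p : ℕ, p.Prime → x < p → (p : ℝ) < x * Real.exp δ → False)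
    (hs : Summable (fun n : ℕ => ArithmeticFunction.vonMangoldt n / n *
      gauss τ (Real.log x + δ / 2 - Real.log n))) :
    ∑' n : ℕ, ArithmeticFunction.vonMangoldt n / n * gauss τ (Real.log x + δ / 2 - Real.log n)
      ≤ Real.exp (-((δ / 2) ^ 2 / (2 * τ ^ 2))) * Real.exp (ε * (Real.log x + δ))
          * (1 / ε + 8.4 * ε)
        + 2 * √(x * Real.exp δ) * (Real.log x + δ) / x := by
  have hx0 : 0 < x := by linarith
  set X : ℝ := x * Real.exp δ with hX
  have hX0 : 0 < X := by positivity
  have hX1 : 1 ≤ X := by nlinarith [Real.one_le_exp hδ.le]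
  have hlogX : Real.log X = Real.log x + δ := by
    rw [hX, Real.log_mul hx0.ne' (Real.exp_pos _).ne', Real.log_exp]
  set C : ℝ := Real.exp (-((δ / 2) ^ 2 / (2 * τ ^ 2))) * Real.exp (ε * (Real.log x + δ)) with hC
  have hC0 : 0 < C := by positivity
  obtain ⟨h1, h2⟩ := tsum_vonMangoldt_le hε hε'
  set g₂ : ℕ → ℝ := fun n => if n ∈ Finset.Ioc 0 ⌊X⌋₊ then
    (ArithmeticFunction.vonMangoldt n - if n.Prime then Real.log n else 0) / x else 0 with hg₂
  have hg₂0 : ∀ n, 0 ≤ g₂ n := by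
    intro n
    simp only [hg₂]
    split_ifs with ha hp
    · rw [ArithmeticFunction.vonMangoldt_apply_prime hp]; simp
    · have := ArithmeticFunction.vonMangoldt_nonneg (n := n)
      simp only [sub_zero]; positivity
    · exact le_rfl
  have hg₂s : HasSum g₂ ((Chebyshev.psi X - Chebyshev.theta X) / x) := by
    have this : HasSum g₂ (∑ n ∈ Finset.Ioc 0 ⌊X⌋₊, g₂ n) := hasSum_sum_of_ne_finset_zero
      (fun n hn => by simp only [hg₂, if_neg hn])
    convert this using 1
    rw [Chebyshev.psi, Chebyshev.theta, Finset.sum_filter, ← Finset.sum_sub_distrib,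
      Finset.sum_div]
    exact Finset.sum_congr rfl fun n hn => by simp only [hg₂, if_pos hn]
  have hle : ∀ n : ℕ, ArithmeticFunction.vonMangoldt n / n *
      gauss τ (Real.log x + δ / 2 - Real.log n)
      ≤ C * (ArithmeticFunction.vonMangoldt n * (n : ℝ) ^ (-(1 + ε))) + g₂ n := by
    intro n
    have hΛ := ArithmeticFunction.vonMangoldt_nonneg (n := n)
    rcases Nat.eq_zero_or_pos n with rfl | hn
    · simpa using hg₂0 0
    have hn0 : (0 : ℝ) < n := by exact_mod_cast hn
    by_cases hin : x < n ∧ (n : ℝ) < X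
    · have hmem : n ∈ Finset.Ioc 0 ⌊X⌋₊ := by
        rw [Finset.mem_Ioc]; exact ⟨hn, Nat.le_floor hin.2.le⟩
      have hnp : ¬ n.Prime := fun hp => hno n hp hin.1 hin.2
      have e : g₂ n = ArithmeticFunction.vonMangoldt n / x := by
        simp only [hg₂, if_pos hmem, if_neg hnp, sub_zero]
      rw [e]
      have h3 : ArithmeticFunction.vonMangoldt n / n *
          gauss τ (Real.log x + δ / 2 - Real.log n) ≤ ArithmeticFunction.vonMangoldt n / x := by
        calc _ ≤ ArithmeticFunction.vonMangoldt n / n * 1 := by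
              gcongr; exact gauss_le_one _ _
          _ ≤ _ := by rw [mul_one]; gcongr; exact hin.1.le
      have h4 : 0 ≤ C * (ArithmeticFunction.vonMangoldt n * (n : ℝ) ^ (-(1 + ε))) := by positivity
      linarith
    · have hv : δ / 2 ≤ |Real.log n - (Real.log x + δ / 2)| := by
        by_cases h5 : x < n
        · have h6 : X ≤ n := by
            by_contra h7
            exact hin ⟨h5, not_le.mp h7⟩
          have := Real.log_le_log hX0 h6
          exact le_trans (by linarith) (le_abs_self _)
        · have := Real.log_le_log hn0 (not_lt.mp h5)
          exact le_trans (by linarith) (neg_le_abs _)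
      have h6 := gauss_le_of_le_abs hτ hε.le (by positivity) hετ hv
      rw [neg_sub] at h6
      have e : Real.exp (-((δ / 2) ^ 2 / (2 * τ ^ 2))) *
          Real.exp (-(ε * (Real.log n - (Real.log x + δ / 2) - δ / 2)))
          = C * (n : ℝ) ^ (-ε) := by
        rw [hC, Real.rpow_def_of_pos hn0, mul_assoc, ← Real.exp_add (ε * _)]
        congr 2
        ring
      rw [e] at h6
      have e2 : (n : ℝ) ^ (-(1 + ε)) = (n : ℝ) ^ (-ε) / n := by
        rw [neg_add, add_comm, Real.rpow_add hn0, Real.rpow_neg_one, div_eq_mul_inv]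
      rw [e2]
      have := hg₂0 n
      calc _ ≤ ArithmeticFunction.vonMangoldt n / n * (C * (n : ℝ) ^ (-ε)) := by gcongr
        _ = C * (ArithmeticFunction.vonMangoldt n * ((n : ℝ) ^ (-ε) / n)) := by ring
        _ ≤ _ := by linarith
  have htot := hs.tsum_le_tsum hle ((h1.mul_left C).add hg₂s.summable)
  refine htot.trans ?_
  rw [(h1.mul_left C).tsum_add hg₂s.summable, tsum_mul_left, hg₂s.tsum_eq]
  have h8 := (le_abs_self _).trans (Chebyshev.abs_psi_sub_theta_le_sqrt_mul_log hX1)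
  rw [hlogX] at h8
  gcongr

end

/-! ### Large exponents -/

section

open Complex Metric MeasureTheory

lemma sq_le_two_pow {k : ℕ} (hk : 16 ≤ k) : 256 * k ^ 2 ≤ 2 ^ k := by
  induction k, hk using Nat.le_induction with
  | base => norm_num
  | succ n hn ih =>
    have h : 2 ^ (n + 1) = 2 ^ n * 2 := pow_succ 2 n
    nlinarith

lemma log_height_ge {k : ℕ} (hk : 16 ≤ k) : 29.8 ≤ Real.log ((144 * k * 4 ^ k + 3 : ℕ) : ℝ) := by
  have h1 : (9 * 2 ^ 40 : ℝ) ≤ ((144 * k * 4 ^ k + 3 : ℕ) : ℝ) := by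
    have h4 : 4 ^ 16 ≤ 4 ^ k := Nat.pow_le_pow_right (by norm_num) hk
    have : 9 * 2 ^ 40 ≤ 144 * k * 4 ^ k + 3 := by nlinarith
    exact_mod_cast this
  refine le_trans ?_ (Real.log_le_log (by norm_num) h1)
  have h8 : (2 : ℝ) ^ 3 ≤ 9 := by norm_num
  have h3 : Real.log ((2 : ℝ) ^ 3) ≤ Real.log 9 := Real.log_le_log (by norm_num) h8
  rw [Real.log_pow] at h3
  rw [Real.log_mul (by norm_num) (by norm_num), Real.log_pow]
  have := Real.log_two_gt_d9
  push_cast at *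
  linarith

/-- With `3T + 3 = 144 k 4 ^ k + 3` the logarithm of the height is at most `1.871 k`; the tangent of
`log` at `2304 = 144 * 16` is sharp in the worst case `k = 16`. -/
lemma log_height_le {k : ℕ} (hk : 16 ≤ k) :
    Real.log ((144 * k * 4 ^ k + 3 : ℕ) : ℝ) ≤ 1.871 * k := by
  have hk' : (16 : ℝ) ≤ k := by exact_mod_cast hk
  have h4 : (4 : ℝ) ^ 16 ≤ 4 ^ k := pow_le_pow_right₀ (by norm_num) hk
  have h1 : ((144 * k * 4 ^ k + 3 : ℕ) : ℝ) ≤ (144.001 * k) * 4 ^ k := by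
    push_cast; nlinarith
  have h2 := Real.log_le_log (by positivity) h1
  rw [Real.log_mul (by positivity) (by positivity), Real.log_pow] at h2
  have e4 : Real.log 4 = 2 * Real.log 2 := by
    rw [show (4 : ℝ) = 2 ^ 2 by norm_num, Real.log_pow]; norm_num
  have e1 : (144.001 * k : ℝ) = 2 ^ 12 * (0.5626 * ((144.001 * k) / (2 ^ 12 * 0.5626))) := by
    field_simp
  have h5 : Real.log (144.001 * k / (2 ^ 12 * 0.5626)) ≤ 144.001 * k / (2 ^ 12 * 0.5626) - 1 :=
    Real.log_le_sub_one_of_pos (by positivity)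
  have h6 : Real.log 0.5626 ≤ -0.5751 := by
    rw [Real.log_le_iff_le_exp (by norm_num)]
    have := Real.exp_bound' (x := 0.5751) (by norm_num) (by norm_num) (n := 8) (by norm_num)
    rw [Real.exp_neg, ← inv_inv (0.5626 : ℝ)]
    apply inv_anti₀ (Real.exp_pos _)
    refine this.trans ?_
    norm_num [Finset.sum_range_succ, Nat.factorial]
  rw [e1, Real.log_mul (by norm_num) (by positivity), Real.log_mul (by norm_num) (by positivity),
    Real.log_pow, e4] at h2
  have := Real.log_two_lt_d9
  push_cast at h2 ⊢
  nlinarith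

lemma sqrt_six_mul_le {k : ℝ} (hk : 0 ≤ k) : √(6 * k) ≤ 0.3062 * (k + 16) := by
  apply Real.sqrt_le_iff.mpr
  constructor
  · positivity
  · nlinarith [sq_nonneg (k - 16)]

/-- The contribution of the shifted line, relative to the main term. -/
lemma shifted_term_le {k : ℕ} (hk : 16 ≤ k) :
    8 * √(6 * k) * (2 ^ k) ^ 2 * (4580 * (1.871 * k) ^ 2) *
      Real.exp (-(Real.log 2 * (2 : ℝ) ^ k / (35 * (1.871 * k)))) ≤ 0.3 := by
  have hk' : (16 : ℝ) ≤ k := by exact_mod_cast hk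
  have hN : (256 : ℝ) * k ^ 2 ≤ 2 ^ k := by exact_mod_cast sq_le_two_pow hk
  have l1 := Real.log_two_gt_d9
  have l2 := Real.log_two_lt_d9
  have hB := sqrt_six_mul_le (k := k) (by positivity)
  have e2 : ((2 : ℝ) ^ k) ^ 2 = Real.exp (2 * Real.log 2 * k) := by
    rw [← Real.exp_log (x := ((2 : ℝ) ^ k) ^ 2) (by positivity), Real.log_pow, Real.log_pow]
    push_cast; ring_nf
  have h1 : 2.709 * k ≤ Real.log 2 * (2 : ℝ) ^ k / (35 * (1.871 * k)) := by
    rw [le_div_iff₀ (by positivity)]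
    nlinarith
  have hk3 : ((k : ℝ) / 16) ^ 3 ≤ Real.exp (3 * (k / 16 - 1)) := by
    have : (k : ℝ) / 16 ≤ Real.exp (k / 16 - 1) := by
      have := Real.add_one_le_exp ((k : ℝ) / 16 - 1); linarith
    calc ((k : ℝ) / 16) ^ 3 ≤ Real.exp (k / 16 - 1) ^ 3 := by gcongr
      _ = _ := by rw [← Real.exp_nat_mul]; norm_num
  have hp : 8 * √(6 * k) * (4580 * (1.871 * k) ^ 2) ≤ 321800000 * Real.exp (3 * (k / 16 - 1)) := by
    calc 8 * √(6 * k) * (4580 * (1.871 * k) ^ 2)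
        ≤ 8 * (0.3062 * ((k : ℝ) + 16)) * (4580 * (1.871 * k) ^ 2) := by gcongr
      _ ≤ 8 * (0.3062 * ((k : ℝ) + k)) * (4580 * (1.871 * k) ^ 2) := by gcongr
      _ ≤ 321800000 * ((k : ℝ) / 16) ^ 3 := by
          have : (0 : ℝ) ≤ (k : ℝ) ^ 3 := by positivity
          nlinarith
      _ ≤ _ := by gcongr
  calc _ = 8 * √(6 * k) * (4580 * (1.871 * k) ^ 2) * (Real.exp (2 * Real.log 2 * k) *
        Real.exp (-(Real.log 2 * (2 : ℝ) ^ k / (35 * (1.871 * k))))) := by rw [e2]; ring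
    _ ≤ 321800000 * Real.exp (3 * (k / 16 - 1)) * (Real.exp (2 * Real.log 2 * k) *
        Real.exp (-(2.709 * k))) := by gcongr
    _ = 321800000 * Real.exp (3 * (k / 16 - 1) + 2 * Real.log 2 * k - 2.709 * k) := by
        rw [mul_assoc, ← Real.exp_add, ← Real.exp_add]; ring_nf
    _ ≤ 321800000 * Real.exp (-21) := by
        gcongr
        nlinarith
    _ ≤ 0.3 := by
        rw [Real.exp_neg, show (21 : ℝ) = (21 : ℕ) * 1 by norm_num, Real.exp_nat_mul]
        have := Real.exp_one_gt_d9
        have h : (2.718 : ℝ) ^ 21 ≤ Real.exp 1 ^ 21 := by gcongr; linarith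
        rw [← div_eq_mul_inv, div_le_iff₀ (by positivity)]
        refine le_trans ?_ (mul_le_mul_of_nonneg_left h (by norm_num))
        norm_num

/-- The Gaussian tails have size `e ^ (-3k)`, while the main term is about `8 ^ (-k)`. -/
lemma tail_term_le {k : ℕ} (hk : 16 ≤ k) :
    8 * √(6 * k) * (2 ^ k) ^ 2 * (Real.exp (-(3 * k)) * (200 * 2 ^ k)) ≤ 0.05 := by
  have hk' : (16 : ℝ) ≤ k := by exact_mod_cast hk
  have hN : (256 : ℝ) * k ^ 2 ≤ 2 ^ k := by exact_mod_cast sq_le_two_pow hk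
  have hB := sqrt_six_mul_le (k := k) (by positivity)
  have hB' : √(6 * k) ≤ 2 ^ k / 4096 := by
    rw [le_div_iff₀ (by norm_num)]; nlinarith
  have he : Real.exp (-(3 * k)) ≤ (1 / 20) ^ k := by
    rw [show (-(3 * k) : ℝ) = k * (-3) by ring, Real.exp_nat_mul]
    gcongr
    rw [Real.exp_neg, ← one_div]
    apply one_div_le_one_div_of_le (by norm_num)
    rw [show (3 : ℝ) = (3 : ℕ) * 1 by norm_num, Real.exp_nat_mul]
    have := Real.exp_one_gt_d9
    calc (20 : ℝ) ≤ 2.718 ^ 3 := by norm_num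
      _ ≤ _ := by gcongr; linarith
  calc _ ≤ 8 * ((2 : ℝ) ^ k / 4096) * (2 ^ k) ^ 2 * ((1 / 20) ^ k * (200 * 2 ^ k)) := by gcongr
    _ = 1600 / 4096 * ((2 : ℝ) ^ k * 2 ^ k * 2 ^ k * 2 ^ k * (1 / 20) ^ k) := by ring
    _ = 1600 / 4096 * (4 / 5 : ℝ) ^ k := by
        rw [← mul_pow, ← mul_pow, ← mul_pow, ← mul_pow]; norm_num
    _ ≤ 1600 / 4096 * (4 / 5 : ℝ) ^ 16 := by
        gcongr ?_ * ?_
        exact pow_le_pow_of_le_one (by norm_num) (by norm_num) hk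
    _ ≤ _ := by norm_num

/-- Proper prime powers near `2 ^ (2 ^ k)` are negligible. -/
lemma prime_power_term_le {k : ℕ} (hk : 16 ≤ k) :
    8 * √(6 * k) * (2 ^ k) ^ 2 * (4 * 2 ^ k / √(2 ^ (2 ^ k : ℕ))) ≤ 0.05 := by
  have hk' : (16 : ℝ) ≤ k := by exact_mod_cast hk
  have hNn := sq_le_two_pow hk
  have hN : (256 : ℝ) * k ^ 2 ≤ 2 ^ k := by exact_mod_cast hNn
  have hB := sqrt_six_mul_le (k := k) (by positivity)
  have hB' : √(6 * k) ≤ 2 ^ k / 4096 := by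
    rw [le_div_iff₀ (by norm_num)]; nlinarith
  have hs : ((2 : ℝ) ^ k) ^ 4 ≤ √(2 ^ (2 ^ k : ℕ)) := by
    apply Real.le_sqrt_of_sq_le
    rw [← pow_mul, ← pow_mul]
    exact pow_le_pow_right₀ (by norm_num) (by nlinarith)
  calc _ ≤ 8 * ((2 : ℝ) ^ k / 4096) * (2 ^ k) ^ 2 * (4 * 2 ^ k / (2 ^ k) ^ 4) := by gcongr
    _ = 32 / 4096 := by field_simp; norm_num
    _ ≤ _ := by norm_num

lemma one_le_gauss_mass {τ : ℝ} (hτ : 0 < τ) (hτ' : τ ≤ 1) : 1 ≤ √(Real.pi / (τ ^ 2 / 2)) := by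
  apply Real.le_sqrt_of_sq_le
  rw [le_div_iff₀ (by positivity)]
  have := Real.pi_gt_three
  nlinarith

lemma exp_one_add_le : Real.exp 1.01 ≤ 2.8 := by
  rw [show (1.01 : ℝ) = 1 + 0.01 by norm_num, Real.exp_add]
  have h1 := Real.exp_one_lt_d9
  have h2 := Real.exp_bound' (x := 0.01) (by norm_num) (by norm_num) (n := 2) (by norm_num)
  norm_num [Finset.sum_range_succ, Nat.factorial] at h2
  nlinarith [Real.exp_pos 0.01]

set_option maxHeartbeats 1000000 in
/-- Parameters, with `N = 2 ^ k`, `L = log x = N log 2` and `B = √(6k)`: the interval has logarithmic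
length `δ = 1 / (4 N ^ 2)`, the Gaussian has width `τ = δ / (2B)`, so its value at the ends of the
interval is `exp (-B ^ 2 / 2) = exp (-3k)`; the height `T = B / τ` makes the tail of the contour equally
small. The line of integration moves from `1 + ε` with `ε = 1 / L` to `1 - η` with `η = 1 / (35 ℓ)`,
where `ℓ` is the logarithm of `3T + 3`. The main term is at least `τ = 1 / (8 B N ^ 2)`. -/
theorem exists_prime_of_sixteen_le {k : ℕ} (hk : 16 ≤ k) :
    ∃ p : ℕ, p.Prime ∧ (2 : ℝ) ^ (2 ^ k : ℕ) < (p : ℝ) ∧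
      (p : ℝ) < (2 : ℝ) ^ (2 ^ k : ℕ) * Real.exp (1 / 4 ^ (k + 1)) := by
  by_contra hcon
  have hk' : (16 : ℝ) ≤ k := by exact_mod_cast hk
  have hN256 : (256 : ℝ) * k ^ 2 ≤ 2 ^ k := by exact_mod_cast sq_le_two_pow hk
  have l1 := Real.log_two_gt_d9
  have l2 := Real.log_two_lt_d9
  have tA := shifted_term_le hk
  have tB := tail_term_le hk
  have tC := prime_power_term_le hk
  have hBle := sqrt_six_mul_le (k := k) (by positivity)
  have hBsq : √(6 * (k : ℝ)) ^ 2 = 6 * k := Real.sq_sqrt (by positivity)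
  have hB9 : 9 ≤ √(6 * (k : ℝ)) := Real.le_sqrt_of_sq_le (by linarith)
  set B : ℝ := √(6 * (k : ℝ)) with hB
  clear_value B
  have hN65 : (65536 : ℝ) ≤ 2 ^ k := by nlinarith
  have hkN : (4096 : ℝ) * k ≤ 2 ^ k := by nlinarith
  set N : ℝ := (2 : ℝ) ^ k with hN
  clear_value N
  set x : ℝ := (2 : ℝ) ^ (2 ^ k : ℕ) with hx
  have hx1 : 1 ≤ x := one_le_pow₀ (by norm_num)
  have hL : Real.log x = N * Real.log 2 := by
    rw [hx, Real.log_pow]; push_cast; rw [hN]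
  set L : ℝ := Real.log x with hLdef
  set δ : ℝ := 1 / 4 ^ (k + 1) with hδ
  clear_value x L δ
  have h4N : (4 : ℝ) ^ (k + 1) = 4 * N ^ 2 := by
    rw [hN, pow_succ, ← pow_mul, mul_comm k 2, pow_mul]; norm_num; ring
  have hδN : δ = 1 / (4 * N ^ 2) := by rw [hδ, h4N]
  have hN0 : 0 < N := by linarith
  have hN2 : (65536 : ℝ) ≤ N ^ 2 := hN65.trans (le_self_pow₀ (by linarith) two_ne_zero)
  have hδ0 : 0 < δ := by rw [hδN]; positivity
  have hδ1 : δ ≤ 0.001 := by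
    rw [hδN, div_le_iff₀ (by positivity)]; linarith
  set τ : ℝ := 1 / (8 * B * N ^ 2) with hτ
  clear_value τ
  have hR0 : 0 < 8 * B * N ^ 2 := by positivity
  have hτ0 : 0 < τ := by rw [hτ]; positivity
  have hτ1 : τ ≤ 0.001 := by
    rw [hτ, div_le_iff₀ (by positivity)]
    have : 9 * 65536 ≤ B * N ^ 2 := mul_le_mul hB9 hN2 (by norm_num) (by linarith)
    linarith
  have hLN' : 0.69 * N ≤ L := by
    rw [hL, mul_comm 0.69]; exact mul_le_mul_of_nonneg_left (by linarith) hN0.le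
  have hLlow : 45000 ≤ L := by linarith
  have hLN : L + 1 ≤ N := by
    have : N * Real.log 2 ≤ N * 0.7 := mul_le_mul_of_nonneg_left (by linarith) hN0.le
    linarith
  set Y : ℕ := 144 * k * 4 ^ k + 3 with hY
  clear_value Y
  have hℓ1 : 29.8 ≤ Real.log (Y : ℝ) := by rw [hY]; exact log_height_ge hk
  have hℓ2 : Real.log (Y : ℝ) ≤ 1.871 * k := by rw [hY]; exact log_height_le hk
  have hYT : (Y : ℝ) = 3 * (48 * k * N ^ 2) + 3 := by
    rw [hY, hN]; push_cast
    rw [← pow_mul, mul_comm k 2, pow_mul]; norm_num; ring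
  set ℓ : ℝ := Real.log (Y : ℝ) with hℓ
  have hℓ0 : 0 < ℓ := by linarith
  set T : ℝ := 48 * k * N ^ 2 with hT
  clear_value T
  have hT0 : 0 < T := by rw [hT]; positivity
  set η : ℝ := 1 / (35 * ℓ) with hη
  clear_value η
  have hη0 : 0 < η := by rw [hη]; positivity
  have hη1 : η ≤ 0.1 := by
    rw [hη, div_le_iff₀ (by positivity)]; linarith
  set ε : ℝ := 1 / L with hε
  clear_value ε
  have hL0 : 0 < L := by linarith
  have hε0 : 0 < ε := by rw [hε]; positivity
  have hε1 : ε ≤ 0.001 := by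
    rw [hε, div_le_iff₀ hL0]; linarith
  have hεL : ε * L = 1 := by rw [hε]; field_simp
  set M : ℝ := 4580 * ℓ ^ 2 with hM
  clear_value M
  have hM0 : 0 < M := by rw [hM]; positivity
  have hMk : M ≤ 4580 * (1.871 * k) ^ 2 := by rw [hM]; gcongr
  have hε23 : ε ≤ 1 / (23 * ℓ) := by
    rw [hε]
    apply one_div_le_one_div_of_le (by positivity)
    linarith
  have him : ∀ w : ℂ, |w.im| ≤ T → 3 * |(1 + w).im| + 3 ≤ (Y : ℝ) := by
    intro w hw
    rw [hYT]; simp only [add_im, one_im, zero_add]; linarith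
  have h35 : 1 / (35 * ℓ) ≤ 1 / (23 * ℓ) := by
    apply one_div_le_one_div_of_le (by positivity); linarith
  obtain ⟨hsum, hge⟩ := vonMangoldt_gauss_sum_ge (τ := τ) (u := L + δ / 2) (ε := ε) (η := η)
    (T := T) (M := M) hτ0 (by positivity) hε0 (by linarith) hη0 hT0
    (fun w h1 h2 h3 => zeta1_ne_zero_region hℓ1
      (by simp only [add_re, one_re]; linarith) (by linarith [him w h3]))
    (fun w h1 h2 h3 => hM ▸ norm_logDeriv_zeta1_le hℓ1
      (by simp only [add_re, one_re]; linarith)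
      (by simp only [add_re, one_re]; linarith) (him w h3))
  have hle := vonMangoldt_gauss_sum_le (x := x) (δ := δ) (τ := τ) (ε := ε) hx1 hδ0 hτ0 hε0
    (by linarith)
    (by
      have hτ2 : τ ^ 2 = 1 / (384 * k * N ^ 4) := by
        rw [hτ, div_pow, mul_pow, mul_pow, hBsq]; ring
      have : δ / 2 / τ ^ 2 = 48 * k * N ^ 2 := by
        rw [hδN, hτ2]; field_simp; norm_num
      rw [this]
      have h1 : 1 ≤ 48 * (k : ℝ) * N ^ 2 :=
        one_le_mul_of_one_le_of_one_le (by linarith) (by linarith)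
      linarith)
    (fun p hp h1 h2 => hcon ⟨p, hp, h1, h2⟩) (by rw [← hLdef]; exact hsum)
  have hI := integral_gauss_ge hτ0 (u := L + δ / 2) (by positivity)
  rw [← hLdef] at hle
  set S : ℝ := ∑' n : ℕ, ArithmeticFunction.vonMangoldt n / n * gauss τ (L + δ / 2 - Real.log n)
  set I : ℝ := ∫ v in Set.Ioi 0, gauss τ (L + δ / 2 - v)
  set J : ℝ := √(Real.pi / (τ ^ 2 / 2)) with hJ
  clear_value S I J
  have hJ1 : 1 ≤ J := hJ ▸ one_le_gauss_mass hτ0 (by linarith)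
  have hJ0 : 0 < J := by linarith
  -- both Gaussian tails equal `exp (-B ^ 2 / 2) = exp (-3k)`
  have e1 : (δ / 2) ^ 2 / (2 * τ ^ 2) = 3 * k := by
    have : (δ / 2) ^ 2 = τ ^ 2 * B ^ 2 := by
      rw [hδN, hτ]; field_simp; norm_num
    rw [this, hBsq]; field_simp; norm_num
  have e2 : -(τ ^ 2 / 2) * T ^ 2 = -(3 * k) := by
    have : τ * T = B := by
      rw [hτ, hT, div_mul_eq_mul_div, div_eq_iff hR0.ne', show (48 : ℝ) * k = 8 * (6 * k) by ring,
        ← hBsq]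
      ring
    have : τ ^ 2 * T ^ 2 = 6 * k := by rw [← mul_pow, this, hBsq]
    linarith
  rw [e1] at hle
  rw [e2] at hge
  set q : ℝ := Real.exp (-(3 * k)) with hq
  have hq0 : 0 < q := Real.exp_pos _
  have hexp := exp_one_add_le
  have hE1 : Real.exp (τ ^ 2 * (ε + η) ^ 2 / 2 + ε * (L + δ / 2)) ≤ 2.8 := by
    refine le_trans (Real.exp_le_exp.mpr ?_) hexp
    have a1 : τ ^ 2 * (ε + η) ^ 2 ≤ 0.001 ^ 2 * 1 ^ 2 := by gcongr; linarith
    have a2 : ε * δ ≤ 0.001 * 0.001 := by gcongr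
    linarith
  have hE2 : Real.exp (ε * (L + δ)) ≤ 2.8 := by
    refine le_trans (Real.exp_le_exp.mpr ?_) hexp
    have a2 : ε * δ ≤ 0.001 * 0.001 := by gcongr
    linarith
  have hE3 : Real.exp (τ ^ 2 * η ^ 2 / 2 - η * (L + δ / 2)) ≤
      2 * Real.exp (-(Real.log 2 * N / (35 * (1.871 * k)))) := by
    have a1 : τ ^ 2 * η ^ 2 ≤ 0.001 ^ 2 * 1 ^ 2 := by gcongr; linarith
    have a2 : Real.log 2 * N / (35 * (1.871 * k)) ≤ η * L := by
      rw [hη, hL, one_div_mul_eq_div, mul_comm N]; gcongr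
    have a3 : 0 ≤ η * δ := by positivity
    calc _ ≤ Real.exp (0.5 + -(Real.log 2 * N / (35 * (1.871 * k)))) := by
          apply Real.exp_le_exp.mpr; linarith
      _ = Real.exp 0.5 * _ := Real.exp_add _ _
      _ ≤ _ := by
          gcongr
          have h2 := Real.exp_bound' (x := 0.5) (by norm_num) (by norm_num) (n := 3) (by norm_num)
          norm_num [Finset.sum_range_succ, Nat.factorial] at h2 ⊢
          linarith
  set E₁ : ℝ := Real.exp (τ ^ 2 * (ε + η) ^ 2 / 2 + ε * (L + δ / 2))
  set E₂ : ℝ := Real.exp (ε * (L + δ))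
  set E₃ : ℝ := Real.exp (τ ^ 2 * η ^ 2 / 2 - η * (L + δ / 2))
  set D : ℝ := Real.exp (-(Real.log 2 * N / (35 * (1.871 * k))))
  have hE1' : 0 < E₁ := Real.exp_pos _
  have hE2' : 0 < E₂ := Real.exp_pos _
  have hE3' : 0 < E₃ := Real.exp_pos _
  have hD0 : 0 < D := Real.exp_pos _
  have hsq : √(x * Real.exp δ) ≤ 2 * √x := by
    rw [show 2 * √x = √(x * 4) by
      rw [Real.sqrt_mul (by linarith), show (4 : ℝ) = 2 ^ 2 by norm_num,
        Real.sqrt_sq (by norm_num), mul_comm]]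
    apply Real.sqrt_le_sqrt
    gcongr
    have : Real.exp δ ≤ Real.exp 1.01 := Real.exp_le_exp.mpr (by linarith)
    linarith
  have hPP : 2 * √(x * Real.exp δ) * (L + δ) / x ≤ 4 * N / √x := by
    have hx0 : 0 < √x := Real.sqrt_pos.mpr (by linarith)
    calc _ ≤ 2 * (2 * √x) * N / x := by gcongr; linarith
      _ = 4 * N * (√x / x) := by ring
      _ = _ := by rw [Real.sqrt_div_self']; ring
  clear_value E₁ E₂ E₃ D q
  have hinv : 1 / ε = L := by rw [hε]; field_simp
  have hinv2 : 2 / ε = 2 * L := by rw [← hinv]; ring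
  rw [hinv] at hle
  rw [hinv2] at hge
  have hS : S ≤ q * (2.8 * N) + 4 * N / √x := by
    have : q * E₂ * (L + 8.4 * ε) ≤ q * (2.8 * N) := by
      rw [mul_assoc]; gcongr; linarith
    linarith
  have hmain : I ≤ S + 2 * (2 * L + 8.4 * ε) * (E₁ * q) + M * E₃ + 2 * (ε + η) * M * (E₁ * q) := by
    have h0 : 0 ≤ 2 * (ε + η) * M * (E₁ * q) := by positivity
    have h1 : 2 * (ε + η) * M * (E₁ * q) ≤ J * (2 * (ε + η) * M * (E₁ * q)) :=
      le_mul_of_one_le_left h0 hJ1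
    refine le_of_mul_le_mul_left ?_ hJ0
    linarith
  have hM63 : M ≤ 63 * N := by
    refine hMk.trans ?_
    linarith
  have b1 : 2 * (2 * L + 8.4 * ε) * (E₁ * q) ≤ q * (11.2 * N) := by
    calc _ ≤ 2 * (2 * N) * (2.8 * q) := by gcongr; linarith
      _ = _ := by ring
  have b2 : 2 * (ε + η) * M * (E₁ * q) ≤ q * (176.4 * N) := by
    calc _ ≤ 2 * (0.5) * (63 * N) * (2.8 * q) := by gcongr; linarith
      _ = _ := by ring
  have b3 : M * E₃ ≤ 4580 * (1.871 * k) ^ 2 * (2 * D) :=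
    mul_le_mul hMk hE3 hE3'.le (by positivity)
  have hfin : τ ≤ q * (200 * N) + 4 * N / √x + 2 * (4580 * (1.871 * k) ^ 2 * D) := by
    have : 0 < q * N := by positivity
    linarith
  have hRτ : 8 * B * N ^ 2 * τ = 1 := by rw [hτ]; field_simp
  have := mul_le_mul_of_nonneg_left hfin hR0.le
  rw [hRτ] at this
  linarith

end

/-! ### Proth primes -/

/-- Application `f n`, with `n` in constructor form, so that kernel reduction evaluates `n` to a
literal before `f` is unfolded. -/
def strict {α : Type} (f : ℕ → α) (n : ℕ) : α :=
  Nat.rec (f 0) (fun m _ => f (Nat.succ m)) n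

lemma strict_eq {α : Type} (f : ℕ → α) (n : ℕ) : strict f n = f n := by
  cases n <;> rfl

/-- `x ^ (2 ^ (2 ^ j))` modulo `p`, by `2 ^ j` successive squarings. -/
def sqIter (p j : ℕ) : ℕ → ℕ :=
  Nat.rec (fun x => Nat.mod (Nat.mul x x) p) (fun _ ih x => strict ih (ih x)) j

/-- `a ^ (2 ^ (2 ^ r - 1))` modulo `p`, using `2 ^ r - 1 = 1 + 2 + ⋯ + 2 ^ (r - 1)`. -/
def sqChain (p r a : ℕ) : ℕ :=
  Nat.rec a (fun t y => strict (sqIter p t) y) r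

/-- The candidate `2 ^ (2 ^ (r + 1)) + j * 2 ^ (2 ^ r + 1) + 1`. -/
def prothNum (r j : ℕ) : ℕ := 2 ^ 2 ^ (r + 1) + j * 2 ^ (2 ^ r + 1) + 1

/-- Whether `a ^ ((p - 1) / 2) = -1` modulo `p = prothNum r j`. -/
def prothTest (r j a : ℕ) : Bool :=
  strict (fun p => Nat.beq (Nat.succ (strict (sqIter p r)
    (Nat.mod (Nat.mul (sqChain p r a) (a ^ j)) p))) p) (prothNum r j)

lemma cast_sqIter (p j x : ℕ) : ((sqIter p j x : ℕ) : ZMod p) = (x : ZMod p) ^ 2 ^ 2 ^ j := by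
  induction j generalizing x with
  | zero =>
    change ((x * x % p : ℕ) : ZMod p) = _
    rw [ZMod.natCast_mod]; push_cast; ring
  | succ j ih =>
    change ((strict (sqIter p j) (sqIter p j x) : ℕ) : ZMod p) = _
    rw [strict_eq, ih, ih, ← pow_mul, ← pow_add, ← two_mul, pow_succ' 2 j]

lemma cast_sqChain (p r a : ℕ) : ((sqChain p r a : ℕ) : ZMod p) = (a : ZMod p) ^ 2 ^ (2 ^ r - 1) := by
  induction r with
  | zero => change (a : ZMod p) = _; simp
  | succ r ih =>
    change ((strict (sqIter p r) (sqChain p r a) : ℕ) : ZMod p) = _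
    have : 1 ≤ 2 ^ r := Nat.one_le_two_pow
    rw [strict_eq, cast_sqIter, ih, ← pow_mul, ← pow_add]
    congr 2
    rw [pow_succ]; omega

/-- Every prime factor `q` of `p = h * 2 ^ (m + 1) + 1` is `1` modulo `2 ^ (m + 1)`, because `a ^ h` has
order `2 ^ (m + 1)` modulo `q`. -/
lemma two_pow_dvd_of_proth {p h m a q : ℕ} (hp : p = h * 2 ^ (m + 1) + 1)
    (ha : ((a : ZMod p) ^ h) ^ 2 ^ m = -1) (hq : q.Prime) (hdvd : q ∣ p) :
    2 ^ (m + 1) ∣ q - 1 := by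
  have : Fact q.Prime := ⟨hq⟩
  have hq2 : q ≠ 2 := by
    intro h2
    rw [h2, hp] at hdvd
    have : 2 ∣ h * 2 ^ (m + 1) := Dvd.dvd.mul_left (dvd_pow_self 2 (by omega)) h
    omega
  have : Fact (2 < q) := ⟨lt_of_le_of_ne hq.two_le (Ne.symm hq2)⟩
  have hb : ((a : ZMod q) ^ h) ^ 2 ^ m = -1 := by
    have := congrArg (ZMod.castHom hdvd (ZMod q)) ha
    rwa [map_pow, map_pow, map_natCast, map_neg, map_one] at this
  have hord : orderOf ((a : ZMod q) ^ h) = 2 ^ (m + 1) := by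
    apply orderOf_eq_prime_pow
    · rw [hb]; exact ZMod.neg_one_ne_one
    · rw [pow_succ, pow_mul, hb]; norm_num
  have hb0 : (a : ZMod q) ^ h ≠ 0 := by
    intro h0
    rw [h0, zero_pow (by positivity)] at hb
    exact one_ne_zero (neg_eq_zero.mp hb.symm)
  rw [← hord]
  exact orderOf_dvd_of_pow_eq_one (ZMod.pow_card_sub_one_eq_one hb0)

/-- Proth's criterion: by `two_pow_dvd_of_proth` the square of every prime factor exceeds `p`. -/
lemma prime_of_proth {p h m a : ℕ} (hp : p = h * 2 ^ (m + 1) + 1) (hh : 1 ≤ h)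
    (hlt : p < (2 ^ (m + 1) + 1) ^ 2) (ha : ((a : ZMod p) ^ h) ^ 2 ^ m = -1) : p.Prime := by
  by_contra hnp
  have hp2 : 2 ≤ p := by
    have : 1 ≤ h * 2 ^ (m + 1) := Nat.mul_pos hh (by positivity)
    omega
  have hq : p.minFac.Prime := Nat.minFac_prime (by omega)
  have hsq : p.minFac ^ 2 ≤ p := Nat.minFac_sq_le_self (by omega) hnp
  have hd := two_pow_dvd_of_proth hp ha hq (Nat.minFac_dvd p)
  have hle : 2 ^ (m + 1) ≤ p.minFac - 1 := Nat.le_of_dvd (by have := hq.two_le; omega) hd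
  have : 2 ^ (m + 1) + 1 ≤ p.minFac := by have := hq.two_le; omega
  have := Nat.pow_le_pow_left this 2
  omega

lemma pow_eq_neg_one_of_mod {p a h m : ℕ} (hc : (a ^ h % p) ^ 2 ^ m % p + 1 = p) :
    ((a : ZMod p) ^ h) ^ 2 ^ m = -1 := by
  have := congrArg (Nat.cast : ℕ → ZMod p) hc
  rw [Nat.cast_add, ZMod.natCast_mod, Nat.cast_pow, ZMod.natCast_mod, ZMod.natCast_self,
    Nat.cast_pow, Nat.cast_one] at this
  exact eq_neg_of_add_eq_zero_left this

/-- Here `p = 524291 * 2 ^ 13 + 1`, so a prime factor below `√p` would be one of the seven numbers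
`8192 t + 1` with `1 ≤ t ≤ 7`. -/
lemma prime_4294991873 : Nat.Prime 4294991873 := by
  by_contra hnp
  have hq : (Nat.minFac 4294991873).Prime := Nat.minFac_prime (by norm_num)
  have hsq : (Nat.minFac 4294991873) ^ 2 ≤ 4294991873 := Nat.minFac_sq_le_self (by norm_num) hnp
  have hdvd := Nat.minFac_dvd 4294991873
  generalize Nat.minFac 4294991873 = q at hq hsq hdvd
  have ha := pow_eq_neg_one_of_mod (p := 4294991873) (a := 3) (h := 524291) (m := 12)
    (by decide +kernel)
  obtain ⟨t, ht⟩ := two_pow_dvd_of_proth (by norm_num) ha hq hdvd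
  have hq1 := hq.two_le
  have hqt : q = 8192 * t + 1 := by omega
  have ht1 : 1 ≤ t := by omega
  have ht8 : t < 8 := by
    by_contra h8
    have : 65537 ≤ q := by omega
    have := Nat.mul_le_mul this this
    rw [sq] at hsq
    exact absurd (this.trans hsq) (by norm_num)
  subst hqt
  interval_cases t <;> norm_num at hdvd

lemma exists_prime_of_prothTest {r j a : ℕ} (ht : prothTest r j a = true)
    (hj : (j * 2 ^ (2 ^ r + 1) + 1) * 4 ^ (r + 2) ≤ 2 ^ 2 ^ (r + 1)) :
    ∃ p : ℕ, p.Prime ∧ (2 : ℝ) ^ (2 ^ (r + 1) : ℕ) < (p : ℝ) ∧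
      (p : ℝ) < (2 : ℝ) ^ (2 ^ (r + 1) : ℕ) * Real.exp (1 / 4 ^ (r + 1 + 1)) := by
  have h1r : 1 ≤ 2 ^ r := Nat.one_le_two_pow
  have hsplit : 2 ^ 2 ^ (r + 1) = 2 ^ (2 ^ r - 1) * 2 ^ (2 ^ r + 1) := by
    rw [← pow_add]; congr 1; rw [pow_succ]; omega
  refine ⟨prothNum r j, ?_, ?_, ?_⟩
  · apply prime_of_proth (h := 2 ^ (2 ^ r - 1) + j) (m := 2 ^ r) (a := a)
    · rw [prothNum, hsplit]; ring
    · have : 1 ≤ 2 ^ (2 ^ r - 1) := Nat.one_le_two_pow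
      omega
    · have h4 : 1 ≤ 4 ^ (r + 2) := Nat.one_le_pow _ _ (by norm_num)
      have h5 : j * 2 ^ (2 ^ r + 1) + 1 ≤ 2 ^ 2 ^ (r + 1) :=
        (Nat.le_mul_of_pos_right _ h4).trans hj
      have h6 : (2 ^ (2 ^ r + 1)) ^ 2 = 4 * 2 ^ 2 ^ (r + 1) := by
        rw [← pow_mul, show (2 ^ r + 1) * 2 = 2 ^ (r + 1) + 2 by ring, pow_add]; ring
      rw [prothNum]
      nlinarith [h6, h5, Nat.one_le_two_pow (n := 2 ^ r + 1)]
    · rw [prothTest, strict_eq, strict_eq, Nat.beq_eq] at ht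
      have hc := congrArg (Nat.cast : ℕ → ZMod (prothNum r j)) ht
      rw [Nat.succ_eq_add_one, Nat.cast_add, cast_sqIter, ZMod.natCast_self] at hc
      have e : ((Nat.mod (Nat.mul (sqChain (prothNum r j) r a) (a ^ j)) (prothNum r j) : ℕ) :
          ZMod (prothNum r j)) = (a : ZMod (prothNum r j)) ^ (2 ^ (2 ^ r - 1) + j) := by
        change (((sqChain (prothNum r j) r a * a ^ j) % prothNum r j : ℕ) :
          ZMod (prothNum r j)) = _
        rw [ZMod.natCast_mod, Nat.cast_mul, cast_sqChain, Nat.cast_pow, pow_add]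
      rw [e] at hc
      rw [eq_neg_iff_add_eq_zero]
      simpa using hc
  · rw [prothNum]; push_cast
    have : (0 : ℝ) ≤ j * 2 ^ (2 ^ r + 1) := by positivity
    linarith
  · have hj' : ((j : ℝ) * 2 ^ (2 ^ r + 1) + 1) * 4 ^ (r + 2) ≤ 2 ^ 2 ^ (r + 1) := by
      exact_mod_cast hj
    rw [← le_div_iff₀ (by positivity)] at hj'
    have he : 1 / (4 : ℝ) ^ (r + 1 + 1) + 1 < Real.exp (1 / 4 ^ (r + 1 + 1)) :=
      Real.add_one_lt_exp (by positivity)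
    have hx : (0 : ℝ) < 2 ^ 2 ^ (r + 1) := by positivity
    have := mul_lt_mul_of_pos_left he hx
    rw [mul_add, mul_one, mul_one_div] at this
    rw [prothNum]; push_cast
    linarith

lemma exists_prime_five : ∃ p : ℕ, p.Prime ∧ (2 : ℝ) ^ (2 ^ 5 : ℕ) < (p : ℝ) ∧
    (p : ℝ) < (2 : ℝ) ^ (2 ^ 5 : ℕ) * Real.exp (1 / 4 ^ (5 + 1)) := by
  refine ⟨4294991873, prime_4294991873, by norm_num, ?_⟩
  have he : 1 / (4 : ℝ) ^ (5 + 1) + 1 ≤ Real.exp (1 / 4 ^ (5 + 1)) := Real.add_one_le_exp _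
  refine lt_of_lt_of_le ?_ (mul_le_mul_of_nonneg_left he (by positivity))
  norm_num

lemma exists_prime_of_lt_sixteen {k : ℕ} (hk : 3 ≤ k) (hk' : k < 16) :
    ∃ p : ℕ, p.Prime ∧ (2 : ℝ) ^ (2 ^ k : ℕ) < (p : ℝ) ∧
      (p : ℝ) < (2 : ℝ) ^ (2 ^ k : ℕ) * Real.exp (1 / 4 ^ (k + 1)) := by
  interval_cases k
  · exact exists_prime_of_prothTest (r := 2) (j := 0) (a := 3) (by decide +kernel)
      (by decide +kernel)
  · exact exists_prime_of_prothTest (r := 3) (j := 0) (a := 3) (by decide +kernel)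
      (by decide +kernel)
  · exact exists_prime_five
  · exact exists_prime_of_prothTest (r := 5) (j := 3) (a := 3) (by decide +kernel)
      (by decide +kernel)
  · exact exists_prime_of_prothTest (r := 6) (j := 75) (a := 3) (by decide +kernel)
      (by decide +kernel)
  · exact exists_prime_of_prothTest (r := 7) (j := 52) (a := 7) (by decide +kernel)
      (by decide +kernel)
  · exact exists_prime_of_prothTest (r := 8) (j := 138) (a := 3) (by decide +kernel)
      (by decide +kernel)
  · exact exists_prime_of_prothTest (r := 9) (j := 153) (a := 3) (by decide +kernel)
      (by decide +kernel)
  · exact exists_prime_of_prothTest (r := 10) (j := 1011) (a := 3) (by decide +kernel)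
      (by decide +kernel)
  · exact exists_prime_of_prothTest (r := 11) (j := 580) (a := 5) (by decide +kernel)
      (by decide +kernel)
  · exact exists_prime_of_prothTest (r := 12) (j := 1311) (a := 3) (by decide +kernel)
      (by decide +kernel)
  · exact exists_prime_of_prothTest (r := 13) (j := 4153) (a := 5) (by decide +kernel)
      (by decide +kernel)
  · exact exists_prime_of_prothTest (r := 14) (j := 13132) (a := 7) (by decide +kernel)
      (by decide +kernel)

/-- For every integer `i ≥ 4`, there is a prime `p` with
`2^(2^(i-1)) < p < 2^(2^(i-1)) · e^(1/4^i)`. -/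
theorem prime_near_two_pow_two_pow (i : ℕ) (hi : 4 ≤ i) :
    ∃ p : ℕ, p.Prime ∧ (2 : ℝ) ^ (2 ^ (i - 1) : ℕ) < (p : ℝ) ∧
      (p : ℝ) < (2 : ℝ) ^ (2 ^ (i - 1) : ℕ) * Real.exp (1 / 4 ^ i) := by
  obtain ⟨k, rfl⟩ : ∃ k, i = k + 1 := ⟨i - 1, by omega⟩
  rw [Nat.add_sub_cancel]
  rcases lt_or_ge k 16 with hk | hk
  · exact exists_prime_of_lt_sixteen (by omega) hk
  · exact exists_prime_of_sixteen_le hk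
end
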